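/- For every integer α ≥ 1 there exists an integer x such that, in the d_5 tower, L_{2α+2} ≡ x·L_{2α} (mod 7^{α+1}), where congruence of Laurent series means all corresponding coefficients are congruent. -/

import Mathlib

noncomputable section

/-- `J b = ∏_{k=1}^∞ (1 - q^{b·k})` as a formal power series with integer coefficients. -/
def J (b : ℕ) : PowerSeries ℤ :=
  PowerSeries.mk fun n =>
    PowerSeries.coeff n
      (∏ k ∈ Finset.range (n + 1), (1 - (PowerSeries.X : PowerSeries ℤ) ^ (b * (k + 1))))

section lattice
variable {R : Type*} [CommRing R] (T S : Rˣ) (N : ℕ)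

/-- monomials -/
def mn (α β : ℤ) : R := ((T ^ α * S ^ β : Rˣ) : R)

def Lam (k l1 l2 : ℤ) : AddSubgroup R := AddSubgroup.closure
  ({z | ∃ α β : ℤ, l1 ≤ α + 2 * β ∧ l2 ≤ 2 * α + β ∧ z = 7 ^ (α + β - k).toNat * mn T S α β} ∪
    {z | ∃ r : R, z = 7 ^ N * r})

theorem mn_mul (a b c d : ℤ) : mn T S a b * mn T S c d = mn T S (a + c) (b + d) := by
  unfold mn
  rw [← Units.val_mul, zpow_add, zpow_add]
  congr 1
  exact mul_mul_mul_comm _ _ _ _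

theorem mn_zero : mn T S 0 0 = 1 := by simp [mn]

theorem Lam_I (k l1 l2 : ℤ) (r : R) : 7 ^ N * r ∈ Lam T S N k l1 l2 :=
  AddSubgroup.subset_closure (Or.inr ⟨r, rfl⟩)

theorem Lam_gen (k l1 l2 : ℤ) (m : ℕ) (α β : ℤ) (h1 : l1 ≤ α + 2 * β) (h2 : l2 ≤ 2 * α + β)
    (h : α + β - k ≤ m) : 7 ^ m * mn T S α β ∈ Lam T S N k l1 l2 := by
  obtain ⟨d, hd⟩ : ∃ d : ℕ, m = d + (α + β - k).toNat := ⟨m - (α + β - k).toNat, by omega⟩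
  have := AddSubgroup.zsmul_mem _ (AddSubgroup.subset_closure (Or.inl ⟨α, β, h1, h2, rfl⟩) :
    _ ∈ Lam T S N k l1 l2) (7 ^ d)
  rw [hd, pow_add, mul_assoc]
  simpa [Lam] using this

/-- induction: a homomorphism-like closure property -/
theorem Lam_map (K : R →+ R) (k l1 l2 : ℤ) (G : AddSubgroup R)
    (hI : ∀ r, K (7 ^ N * r) ∈ G)
    (h : ∀ (m : ℕ) (α β : ℤ), l1 ≤ α + 2 * β → l2 ≤ 2 * α + β → α + β - k ≤ m →
      (0 < m → m = α + β - k) →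
      K (7 ^ m * mn T S α β) ∈ G) (x : R) (hx : x ∈ Lam T S N k l1 l2) : K x ∈ G := by
  have : Lam T S N k l1 l2 ≤ G.comap K := by
    unfold Lam
    rw [AddSubgroup.closure_le]
    rintro z (⟨α, β, h1, h2, rfl⟩ | ⟨r, rfl⟩)
    · exact h _ α β h1 h2 (by omega) (by omega)
    · exact hI r
  exact this hx

theorem Lam_term (k l1 l2 k' l1' l2' : ℤ) (α β : ℤ) (m : ℕ) (c : ℤ) (hc : (7 : ℤ) ^ m ∣ c)
    (x : R) (hx : x ∈ Lam T S N k l1 l2) (hk : k + α + β ≤ k' + m) (h1 : l1' ≤ l1 + α + 2 * β)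
    (h2 : l2' ≤ l2 + 2 * α + β) : (c : R) * mn T S α β * x ∈ Lam T S N k' l1' l2' := by
  obtain ⟨e, rfl⟩ := hc
  refine Lam_map T S N (AddMonoidHom.mulLeft (((7 ^ m * e : ℤ) : R) * mn T S α β)) k l1 l2 _ ?_ ?_ x hx
  · intro r
    simp only [AddMonoidHom.coe_mulLeft]
    rw [mul_left_comm]
    exact Lam_I _ _ _ _ _ _ _
  · intro n a b ha hb hn _
    simp only [AddMonoidHom.coe_mulLeft]
    have := AddSubgroup.zsmul_mem _ (Lam_gen T S N k' l1' l2' (m + n) (α + a) (β + b) (by omega)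
      (by omega) (by push_cast; omega)) e
    rw [zsmul_eq_mul, ← mn_mul, pow_add] at this
    convert this using 1
    push_cast
    ring

theorem Lam_mono {k l1 l2 k' l1' l2' : ℤ} {x : R} (hx : x ∈ Lam T S N k l1 l2) (hk : k ≤ k')
    (h1 : l1' ≤ l1) (h2 : l2' ≤ l2) : x ∈ Lam T S N k' l1' l2' := by
  have := Lam_term T S N k l1 l2 k' l1' l2' 0 0 0 1 (by simp) x hx (by simpa) (by simpa) (by simpa)
  simpa [mn_zero] using this

theorem Lam_mn (k l1 l2 : ℤ) (α β : ℤ) (m : ℕ) (c : ℤ) (hc : (7 : ℤ) ^ m ∣ c)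
    (h1 : l1 ≤ α + 2 * β) (h2 : l2 ≤ 2 * α + β)
    (h : α + β - k ≤ m) : (c : R) * mn T S α β ∈ Lam T S N k l1 l2 := by
  have h0 : (1 : R) ∈ Lam T S N 0 0 0 := by
    have := Lam_gen T S N 0 0 0 0 0 0 (by simp) (by simp) (by simp)
    simpa [mn_zero] using this
  have := Lam_term T S N 0 0 0 k l1 l2 α β m c hc 1 h0 (by omega) (by omega) (by omega)
  simpa using this

theorem int_window (P : ℤ → Prop) (h0 : ∀ i, -6 ≤ i → i ≤ 0 → P i)
    (up : ∀ i, (∀ k, i - 7 ≤ k → k < i → P k) → P i)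
    (dn : ∀ i, (∀ k, i < k → k ≤ i + 7 → P k) → P i) (i : ℤ) : P i := by
  have H : ∀ n : ℕ, ∀ i : ℤ, -6 - n ≤ i → i ≤ n → P i := by
    intro n
    induction n with
    | zero => intro i h1 h2; exact h0 i (by simpa using h1) (by simpa using h2)
    | succ n ih =>
      intro i h1 h2
      push_cast at h1 h2
      by_cases ha : i ≤ n
      · by_cases hb : -6 - n ≤ i
        · exact ih i hb ha
        · exact dn i fun k hk hk' => ih k (by omega) (by omega)
      · exact up i fun k hk hk' => ih k (by omega) (by omega)
  exact H i.natAbs i (by omega) (by omega)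

def Pu (u : ℤ → ℤ → R) (i j : ℤ) : Prop :=
  u i j ∈ Lam T S N (2 * (i + j) / 7 + 1) (-(-(2 * (i + 2 * j)) / 7)) (-(-(2 * (2 * i + j)) / 7))

/-- the recurrence right-hand side -/
def Rec (t : R) (v : ℤ → R) (i : ℤ) : Prop :=
  v i = t ^ 2 * (v (i - 7) + 7 * v (i - 6) + 21 * v (i - 5) + 49 * v (i - 4) + 147 * v (i - 3)
    + 343 * v (i - 2) + 343 * v (i - 1)) + t * (7 * v (i - 3) + 35 * v (i - 2) + 49 * v (i - 1))


section one
variable (p q : ℤ) (hpq : (p = 1 ∧ q = 0) ∨ (p = 0 ∧ q = 1)) (c0 c1 c2 : ℤ)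

/-- the bound, one-variable form -/
def Qu (p q c0 c1 c2 d i : ℤ) : AddSubgroup R :=
  Lam T S N (2 * (i + c0) / 7 + 1 + d) (-(-(2 * ((p + 2 * q) * i + c1)) / 7))
    (-(-(2 * ((2 * p + q) * i + c2)) / 7))

theorem Qu_term (hpq : (p = 1 ∧ q = 0) ∨ (p = 0 ∧ q = 1)) (v : ℤ → R) (i d s α c : ℤ) (m : ℕ)
    (hm : (7 : ℤ) ^ m ∣ c) (h : v (i - s) ∈ Qu T S N p q c0 c1 c2 0 (i - s))
    (h1 : 7 * α ≤ 2 * s + 7 * m + 7 * d) (h2 : 2 * s ≤ 7 * α) :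
    (c : R) * mn T S (α * p) (α * q) * v (i - s) ∈ Qu T S N p q c0 c1 c2 d i := by
  refine Lam_term T S N _ _ _ _ _ _ _ _ m c hm _ h ?_ ?_ ?_ <;>
  rcases hpq with ⟨rfl, rfl⟩ | ⟨rfl, rfl⟩ <;> norm_num <;> omega

theorem mn_two : mn T S p q ^ 2 = mn T S (2 * p) (2 * q) := by
  rw [sq, mn_mul, two_mul, two_mul]

theorem Qu_up (hpq : (p = 1 ∧ q = 0) ∨ (p = 0 ∧ q = 1)) (v : ℤ → R) (i : ℤ)
    (hr : Rec (mn T S p q) v i)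
    (H : ∀ k, i - 7 ≤ k → k < i → v k ∈ Qu T S N p q c0 c1 c2 0 k) :
    v i ∈ Qu T S N p q c0 c1 c2 0 i := by
  have key : ∀ (s α c : ℤ) (m : ℕ), (7 : ℤ) ^ m ∣ c → 1 ≤ s → s ≤ 7 → 7 * α ≤ 2 * s + 7 * m →
      2 * s ≤ 7 * α →
      (c : R) * mn T S (α * p) (α * q) * v (i - s) ∈ Qu T S N p q c0 c1 c2 0 i := by
    intro s α c m hc hs hs' h1 h2
    exact Qu_term T S N p q c0 c1 c2 hpq v i 0 s α c m hc (H _ (by omega) (by omega)) (by omega) h2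
  have e : v i = (1 : ℤ) * mn T S (2 * p) (2 * q) * v (i - 7) + (7 : ℤ) * mn T S (2 * p) (2 * q) * v (i - 6)
      + (21 : ℤ) * mn T S (2 * p) (2 * q) * v (i - 5)
      + (49 : ℤ) * mn T S (2 * p) (2 * q) * v (i - 4) + (147 : ℤ) * mn T S (2 * p) (2 * q) * v (i - 3)
      + (343 : ℤ) * mn T S (2 * p) (2 * q) * v (i - 2) + (343 : ℤ) * mn T S (2 * p) (2 * q) * v (i - 1)
      + (7 : ℤ) * mn T S (1 * p) (1 * q) * v (i - 3) + (35 : ℤ) * mn T S (1 * p) (1 * q) * v (i - 2)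
      + (49 : ℤ) * mn T S (1 * p) (1 * q) * v (i - 1) := by
    rw [hr, ← mn_two, one_mul, one_mul]; push_cast; ring
  rw [e]
  repeat' apply add_mem
  · exact key 7 2 1 0 (by norm_num) (by norm_num) (by norm_num) (by norm_num) (by norm_num)
  · exact key 6 2 7 1 (by norm_num) (by norm_num) (by norm_num) (by norm_num) (by norm_num)
  · exact key 5 2 21 1 (by norm_num) (by norm_num) (by norm_num) (by norm_num) (by norm_num)
  · exact key 4 2 49 2 (by norm_num) (by norm_num) (by norm_num) (by norm_num) (by norm_num)
  · exact key 3 2 147 2 (by norm_num) (by norm_num) (by norm_num) (by norm_num) (by norm_num)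
  · exact key 2 2 343 3 (by norm_num) (by norm_num) (by norm_num) (by norm_num) (by norm_num)
  · exact key 1 2 343 3 (by norm_num) (by norm_num) (by norm_num) (by norm_num) (by norm_num)
  · exact key 3 1 7 1 (by norm_num) (by norm_num) (by norm_num) (by norm_num) (by norm_num)
  · exact key 2 1 35 1 (by norm_num) (by norm_num) (by norm_num) (by norm_num) (by norm_num)
  · exact key 1 1 49 2 (by norm_num) (by norm_num) (by norm_num) (by norm_num) (by norm_num)

theorem Qu_dn (hpq : (p = 1 ∧ q = 0) ∨ (p = 0 ∧ q = 1)) (v : ℤ → R) (i : ℤ)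
    (hr : Rec (mn T S p q) v (i + 7))
    (H : ∀ k, i < k → k ≤ i + 7 → v k ∈ Qu T S N p q c0 c1 c2 0 k) :
    v i ∈ Qu T S N p q c0 c1 c2 0 i := by
  have key : ∀ (s α c : ℤ) (m : ℕ), (7 : ℤ) ^ m ∣ c → s ≤ -1 → -7 ≤ s → 7 * α ≤ 2 * s + 7 * m →
      2 * s ≤ 7 * α →
      (c : R) * mn T S (α * p) (α * q) * v (i - s) ∈ Qu T S N p q c0 c1 c2 0 i := by
    intro s α c m hc hs hs' h1 h2
    exact Qu_term T S N p q c0 c1 c2 hpq v i 0 s α c m hc (H _ (by omega) (by omega)) (by omega) h2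
  have i2 : mn T S (-2 * p) (-2 * q) * mn T S p q ^ 2 = 1 := by
    rw [mn_two, mn_mul, ← mn_zero T S]; congr 1 <;> ring
  have i1 : mn T S (-1 * p) (-1 * q) = mn T S (-2 * p) (-2 * q) * mn T S p q := by
    rw [mn_mul]; congr 1 <;> ring
  have i0 : mn T S (0 * p) (0 * q) = 1 := by rw [zero_mul, zero_mul, mn_zero]
  have e : v i = (1 : ℤ) * mn T S (-2 * p) (-2 * q) * v (i - -7)
      + (-7 : ℤ) * mn T S (0 * p) (0 * q) * v (i - -1)
      + (-21 : ℤ) * mn T S (0 * p) (0 * q) * v (i - -2)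
      + (-49 : ℤ) * mn T S (0 * p) (0 * q) * v (i - -3) + (-147 : ℤ) * mn T S (0 * p) (0 * q) * v (i - -4)
      + (-343 : ℤ) * mn T S (0 * p) (0 * q) * v (i - -5) + (-343 : ℤ) * mn T S (0 * p) (0 * q) * v (i - -6)
      + (-7 : ℤ) * mn T S (-1 * p) (-1 * q) * v (i - -4) + (-35 : ℤ) * mn T S (-1 * p) (-1 * q) * v (i - -5)
      + (-49 : ℤ) * mn T S (-1 * p) (-1 * q) * v (i - -6) := by
    unfold Rec at hr
    simp only [show i + 7 - 7 = i by ring, show i + 7 - 6 = i + 1 by ring, show i + 7 - 5 = i + 2 by ring,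
      show i + 7 - 4 = i + 3 by ring, show i + 7 - 3 = i + 4 by ring, show i + 7 - 2 = i + 5 by ring,
      show i + 7 - 1 = i + 6 by ring] at hr
    simp only [sub_neg_eq_add, i1, i0]
    push_cast
    linear_combination (-mn T S (-2 * p) (-2 * q)) * hr - (v i + 7 * v (i + 1) + 21 * v (i + 2)
      + 49 * v (i + 3) + 147 * v (i + 4) + 343 * v (i + 5) + 343 * v (i + 6)) * i2
  rw [e]
  repeat' apply add_mem
  · exact key (-7) (-2) 1 0 (by norm_num) (by norm_num) (by norm_num) (by norm_num) (by norm_num)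
  · exact key (-1) 0 (-7) 1 (by norm_num) (by norm_num) (by norm_num) (by norm_num) (by norm_num)
  · exact key (-2) 0 (-21) 1 (by norm_num) (by norm_num) (by norm_num) (by norm_num) (by norm_num)
  · exact key (-3) 0 (-49) 2 (by norm_num) (by norm_num) (by norm_num) (by norm_num) (by norm_num)
  · exact key (-4) 0 (-147) 2 (by norm_num) (by norm_num) (by norm_num) (by norm_num) (by norm_num)
  · exact key (-5) 0 (-343) 3 (by norm_num) (by norm_num) (by norm_num) (by norm_num) (by norm_num)
  · exact key (-6) 0 (-343) 3 (by norm_num) (by norm_num) (by norm_num) (by norm_num) (by norm_num)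
  · exact key (-4) (-1) (-7) 1 (by norm_num) (by norm_num) (by norm_num) (by norm_num) (by norm_num)
  · exact key (-5) (-1) (-35) 1 (by norm_num) (by norm_num) (by norm_num) (by norm_num) (by norm_num)
  · exact key (-6) (-1) (-49) 2 (by norm_num) (by norm_num) (by norm_num) (by norm_num) (by norm_num)

/-- first-order remainder -/
theorem Qu_rem1 (hpq : (p = 1 ∧ q = 0) ∨ (p = 0 ∧ q = 1)) (v : ℤ → R) (i : ℤ)
    (hr : Rec (mn T S p q) v i) (H : ∀ k, v k ∈ Qu T S N p q c0 c1 c2 0 k) :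
    ∃ z ∈ Qu T S N p q c0 c1 c2 1 i, v i = mn T S (2 * p) (2 * q) * v (i - 7) + 7 * z := by
  have key : ∀ (s α c : ℤ) (m : ℕ), (7 : ℤ) ^ m ∣ c → 1 ≤ s → s ≤ 7 → 7 * α ≤ 2 * s + 7 * m + 7 →
      2 * s ≤ 7 * α →
      (c : R) * mn T S (α * p) (α * q) * v (i - s) ∈ Qu T S N p q c0 c1 c2 1 i := by
    intro s α c m hc hs hs' h1 h2
    exact Qu_term T S N p q c0 c1 c2 hpq v i 1 s α c m hc (H _) (by omega) h2
  refine ⟨(1 : ℤ) * mn T S (2 * p) (2 * q) * v (i - 6)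
      + (3 : ℤ) * mn T S (2 * p) (2 * q) * v (i - 5)
      + (7 : ℤ) * mn T S (2 * p) (2 * q) * v (i - 4) + (21 : ℤ) * mn T S (2 * p) (2 * q) * v (i - 3)
      + (49 : ℤ) * mn T S (2 * p) (2 * q) * v (i - 2) + (49 : ℤ) * mn T S (2 * p) (2 * q) * v (i - 1)
      + (1 : ℤ) * mn T S (1 * p) (1 * q) * v (i - 3) + (5 : ℤ) * mn T S (1 * p) (1 * q) * v (i - 2)
      + (7 : ℤ) * mn T S (1 * p) (1 * q) * v (i - 1), ?_, ?_⟩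
  · repeat' apply add_mem
    · exact key 6 2 1 0 (by norm_num) (by norm_num) (by norm_num) (by norm_num) (by norm_num)
    · exact key 5 2 3 0 (by norm_num) (by norm_num) (by norm_num) (by norm_num) (by norm_num)
    · exact key 4 2 7 1 (by norm_num) (by norm_num) (by norm_num) (by norm_num) (by norm_num)
    · exact key 3 2 21 1 (by norm_num) (by norm_num) (by norm_num) (by norm_num) (by norm_num)
    · exact key 2 2 49 2 (by norm_num) (by norm_num) (by norm_num) (by norm_num) (by norm_num)
    · exact key 1 2 49 2 (by norm_num) (by norm_num) (by norm_num) (by norm_num) (by norm_num)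
    · exact key 3 1 1 0 (by norm_num) (by norm_num) (by norm_num) (by norm_num) (by norm_num)
    · exact key 2 1 5 0 (by norm_num) (by norm_num) (by norm_num) (by norm_num) (by norm_num)
    · exact key 1 1 7 1 (by norm_num) (by norm_num) (by norm_num) (by norm_num) (by norm_num)
  · rw [hr, ← mn_two, one_mul, one_mul]; push_cast; ring

/-- second-order remainder -/
theorem Qu_rem2 (hpq : (p = 1 ∧ q = 0) ∨ (p = 0 ∧ q = 1)) (v : ℤ → R) (i : ℤ)
    (hr : Rec (mn T S p q) v i) (H : ∀ k, v k ∈ Qu T S N p q c0 c1 c2 0 k) :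
    ∃ z ∈ Qu T S N p q c0 c1 c2 2 i, v i = mn T S (2 * p) (2 * q) * (v (i - 7) + 7 * v (i - 6)
      + 21 * v (i - 5)) + mn T S p q * (7 * v (i - 3) + 35 * v (i - 2)) + 49 * z := by
  have key : ∀ (s α c : ℤ) (m : ℕ), (7 : ℤ) ^ m ∣ c → 1 ≤ s → s ≤ 7 → 7 * α ≤ 2 * s + 7 * m + 14 →
      2 * s ≤ 7 * α →
      (c : R) * mn T S (α * p) (α * q) * v (i - s) ∈ Qu T S N p q c0 c1 c2 2 i := by
    intro s α c m hc hs hs' h1 h2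
    exact Qu_term T S N p q c0 c1 c2 hpq v i 2 s α c m hc (H _) (by omega) h2
  refine ⟨(1 : ℤ) * mn T S (2 * p) (2 * q) * v (i - 4) + (3 : ℤ) * mn T S (2 * p) (2 * q) * v (i - 3)
      + (7 : ℤ) * mn T S (2 * p) (2 * q) * v (i - 2) + (7 : ℤ) * mn T S (2 * p) (2 * q) * v (i - 1)
      + (1 : ℤ) * mn T S (1 * p) (1 * q) * v (i - 1), ?_, ?_⟩
  · repeat' apply add_mem
    · exact key 4 2 1 0 (by norm_num) (by norm_num) (by norm_num) (by norm_num) (by norm_num)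
    · exact key 3 2 3 0 (by norm_num) (by norm_num) (by norm_num) (by norm_num) (by norm_num)
    · exact key 2 2 7 1 (by norm_num) (by norm_num) (by norm_num) (by norm_num) (by norm_num)
    · exact key 1 2 7 1 (by norm_num) (by norm_num) (by norm_num) (by norm_num) (by norm_num)
    · exact key 1 1 1 0 (by norm_num) (by norm_num) (by norm_num) (by norm_num) (by norm_num)
  · rw [hr, ← mn_two, one_mul, one_mul]; push_cast; ring

end one

theorem Pu_iff1 (u : ℤ → ℤ → R) (i j : ℤ) :
    Pu T S N u i j ↔ u i j ∈ Qu T S N 1 0 j (2 * j) j 0 i := by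
  unfold Pu Qu
  simp

theorem Pu_iff2 (u : ℤ → ℤ → R) (i j : ℤ) :
    Pu T S N u i j ↔ u i j ∈ Qu T S N 0 1 i i (2 * i) 0 j := by
  unfold Pu Qu
  simp [add_comm]

theorem Pu_all (u : ℤ → ℤ → R) (h1 : ∀ i j, Rec (mn T S 1 0) (fun i => u i j) i)
    (h2 : ∀ i j, Rec (mn T S 0 1) (fun j => u i j) j)
    (h0 : ∀ i j, -6 ≤ i → i ≤ 0 → -6 ≤ j → j ≤ 0 → Pu T S N u i j) (i j : ℤ) : Pu T S N u i j := by
  revert i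
  refine int_window (fun j => ∀ i, Pu T S N u i j) ?_ ?_ ?_ j
  · intro j hj hj' i
    refine int_window (fun i => Pu T S N u i j) (fun i a b => h0 i j a b hj hj') ?_ ?_ i
    · intro i H
      simp only [Pu_iff1] at *
      exact Qu_up T S N 1 0 j (2 * j) j (by simp) (fun i => u i j) i (h1 i j) H
    · intro i H
      simp only [Pu_iff1] at *
      exact Qu_dn T S N 1 0 j (2 * j) j (by simp) (fun i => u i j) i (h1 _ j) H
  · intro j H i
    simp only [Pu_iff2] at *
    exact Qu_up T S N 0 1 i i (2 * i) (by simp) (fun j => u i j) j (h2 i j) fun k a b => H k a b i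
  · intro j H i
    simp only [Pu_iff2] at *
    exact Qu_dn T S N 0 1 i i (2 * i) (by simp) (fun j => u i j) j (h2 i _) fun k a b => H k a b i

/-- the action of the two `U`-type maps -/
theorem K1_Lam (u : ℤ → ℤ → R) (hu : ∀ i j, Pu T S N u i j) (K : R →+ R)
    (hI : ∀ r, ∃ r', K (7 ^ N * r) = 7 ^ N * r')
    (hK : ∀ a b : ℤ, K (mn T S a b) = mn T S (-a) (-b) * u (16 + 4 * a) (4 * b - 5))
    (k l1 l2 : ℤ) (x : R) (hx : x ∈ Lam T S N k l1 l2) :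
    K x ∈ Lam T S N ((k + 22) / 7 + 1) (-(-(l1 + 12) / 7)) (-(-(l2 + 54) / 7)) := by
  refine Lam_map T S N K k l1 l2 _ ?_ ?_ x hx
  · intro r
    obtain ⟨r', h⟩ := hI r
    rw [h]; exact Lam_I _ _ _ _ _ _ _
  · intro m a b h1 h2 h3 h4
    have e : K (7 ^ m * mn T S a b) = ((7 ^ m : ℤ) : R) * mn T S (-a) (-b) * u (16 + 4 * a) (4 * b - 5) := by
      rw [mul_assoc, ← hK, ← zsmul_eq_mul, ← map_zsmul, zsmul_eq_mul]; push_cast; rfl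
    rw [e]
    refine Lam_term T S N _ _ _ _ _ _ _ _ m _ dvd_rfl _ (hu _ _) ?_ ?_ ?_
    · rcases Nat.eq_zero_or_pos m with h | h
      · subst h; push_cast at *; omega
      · have := h4 h; omega
    · omega
    · omega

theorem K2_Lam (u : ℤ → ℤ → R) (hu : ∀ i j, Pu T S N u i j) (K : R →+ R)
    (hI : ∀ r, ∃ r', K (7 ^ N * r) = 7 ^ N * r')
    (hK : ∀ a b : ℤ, K (mn T S a b) = mn T S (-a) (-b) * u (4 * a) (4 * b))
    (k l1 l2 : ℤ) (x : R) (hx : x ∈ Lam T S N k l1 l2) :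
    K x ∈ Lam T S N (k / 7 + 1) (-(-l1 / 7)) (-(-l2 / 7)) := by
  refine Lam_map T S N K k l1 l2 _ ?_ ?_ x hx
  · intro r
    obtain ⟨r', h⟩ := hI r
    rw [h]; exact Lam_I _ _ _ _ _ _ _
  · intro m a b h1 h2 h3 h4
    have e : K (7 ^ m * mn T S a b) = ((7 ^ m : ℤ) : R) * mn T S (-a) (-b) * u (4 * a) (4 * b) := by
      rw [mul_assoc, ← hK, ← zsmul_eq_mul, ← map_zsmul, zsmul_eq_mul]; push_cast; rfl
    rw [e]
    refine Lam_term T S N _ _ _ _ _ _ _ _ m _ dvd_rfl _ (hu _ _) ?_ ?_ ?_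
    · rcases Nat.eq_zero_or_pos m with h | h
      · subst h; push_cast at *; omega
      · have := h4 h; omega
    · omega
    · omega

end lattice

section table
variable {R : Type*} [CommRing R] (T S : Rˣ) (N : ℕ)

def tab : ℕ → ℕ → List (ℤ × ℕ × ℕ × ℕ)
  | 0, 0 => [(1, 0, 0, 0)]
  | 0, 1 => [(-1, 0, 0, 0)]
  | 0, 2 => [(1, 0, 0, 0)]
  | 0, 3 => [(-7, 0, 0, 0)]
  | 0, 4 => [(-7, 0, 0, 0), (-4, 0, 1, 0)]
  | 0, 5 => [(49, 0, 0, 0), (10, 0, 1, 0)]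
  | 0, 6 => [(49, 0, 0, 0)]
  | 1, 0 => [(-1, 0, 0, 0)]
  | 1, 1 => [(1, 0, 0, 0)]
  | 1, 2 => [(-7, 0, 0, 0), (2, 0, 0, 1)]
  | 1, 3 => [(42, 0, 0, 0), (-7, 0, 0, 1), (1, 0, 1, 0)]
  | 1, 4 => [(-49, 0, 0, 0), (14, 0, 0, 1), (6, 0, 1, 0)]
  | 1, 5 => [(49, 0, 0, 0), (-49, 0, 0, 1), (-21, 0, 1, 0), (-1, 0, 1, 1)]
  | 1, 6 => [(-343, 0, 0, 0), (98, 0, 0, 1), (42, 0, 1, 0), (-8, 0, 1, 1)]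
  | 2, 0 => [(1, 0, 0, 0)]
  | 2, 1 => [(7, 0, 0, 0), (-2, 0, 0, 1)]
  | 2, 2 => [(-7, 0, 0, 0)]
  | 2, 3 => [(-49, 0, 0, 0), (7, 0, 0, 1), (-4, 0, 1, 0), (1, 1, 0, 0)]
  | 2, 4 => [(49, 0, 0, 0)]
  | 2, 5 => [(-343, 0, 0, 0), (98, 0, 0, 1), (-28, 0, 1, 0), (12, 0, 1, 1), (-14, 1, 0, 0)]
  | 2, 6 => [(2058, 0, 0, 0), (-343, 0, 0, 1), (147, 0, 1, 0), (-14, 0, 1, 1), (1, 0, 2, 0), (49, 1, 0, 0)]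
  | 3, 0 => [(-7, 0, 0, 0)]
  | 3, 1 => [(-7, 0, 0, 0), (7, 0, 0, 1), (1, 1, 0, 0)]
  | 3, 2 => [(-7, 0, 0, 1), (1, 0, 1, 0), (-4, 1, 0, 0)]
  | 3, 3 => [(49, 0, 0, 0)]
  | 3, 4 => [(343, 0, 0, 0), (-98, 0, 0, 1), (35, 0, 1, 0), (-3, 0, 1, 1), (7, 1, 0, 0)]
  | 3, 5 => [(-343, 0, 0, 0), (-35, 0, 1, 1), (-5, 1, 1, 0)]
  | 3, 6 => [(-2401, 0, 0, 0), (686, 0, 0, 1), (-294, 0, 1, 0), (112, 0, 1, 1), (-6, 0, 2, 0), (98, 1, 0, 0), (28, 1, 1, 0)]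
  | 4, 0 => [(-7, 0, 0, 0), (-4, 1, 0, 0)]
  | 4, 1 => [(49, 0, 0, 0), (-14, 0, 0, 1), (6, 1, 0, 0)]
  | 4, 2 => [(49, 0, 0, 0)]
  | 4, 3 => [(-343, 0, 0, 0), (98, 0, 0, 1), (7, 0, 1, 0), (14, 1, 0, 0), (3, 1, 0, 1)]
  | 4, 4 => [(-343, 0, 0, 0), (24, 1, 1, 0)]
  | 4, 5 => [(343, 0, 0, 1), (-98, 0, 1, 0), (77, 0, 1, 1), (1, 0, 2, 0), (-147, 1, 0, 0), (7, 1, 0, 1), (-49, 1, 1, 0)]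
  | 4, 6 => [(2401, 0, 0, 0), (-2401, 0, 0, 1), (-245, 0, 1, 0), (-210, 0, 1, 1), (-7, 0, 2, 0), (-343, 1, 0, 0), (-35, 1, 0, 1), (-14, 1, 1, 0), (-1, 1, 1, 1)]
  | 5, 0 => [(49, 0, 0, 0), (10, 1, 0, 0)]
  | 5, 1 => [(-294, 0, 0, 0), (49, 0, 0, 1), (-28, 1, 0, 0), (1, 1, 0, 1)]
  | 5, 2 => [(343, 0, 0, 0), (-98, 0, 0, 1), (-14, 0, 1, 0), (56, 1, 0, 0), (-12, 1, 0, 1)]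
  | 5, 3 => [(-343, 0, 0, 0), (-245, 1, 0, 0), (35, 1, 0, 1), (-5, 1, 1, 0)]
  | 5, 4 => [(2401, 0, 0, 0), (-343, 0, 0, 1), (-98, 0, 1, 0), (-7, 0, 1, 1), (441, 1, 0, 0), (-77, 1, 0, 1), (-49, 1, 1, 0), (1, 2, 0, 0)]
  | 5, 5 => [(2401, 0, 0, 0), (1715, 0, 1, 0), (-245, 0, 1, 1), (245, 1, 0, 1), (245, 1, 1, 0)]
  | 5, 6 => [(-16807, 0, 0, 0), (4802, 0, 0, 1), (-2744, 0, 1, 0), (882, 0, 1, 1), (84, 0, 2, 0), (686, 1, 0, 0), (-392, 1, 0, 1), (-392, 1, 1, 0), (56, 1, 1, 1), (-14, 2, 0, 0)]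
  | 6, 0 => [(49, 0, 0, 0)]
  | 6, 1 => [(343, 0, 0, 0), (-98, 0, 0, 1), (-14, 1, 0, 0), (8, 1, 0, 1)]
  | 6, 2 => [(-343, 0, 0, 0), (343, 0, 0, 1), (49, 0, 1, 0), (49, 1, 0, 0), (14, 1, 0, 1), (1, 2, 0, 0)]
  | 6, 3 => [(2401, 0, 0, 0), (-686, 0, 0, 1), (98, 0, 1, 0), (490, 1, 0, 0), (-112, 1, 0, 1), (28, 1, 1, 0), (-6, 2, 0, 0)]
  | 6, 4 => [(-14406, 0, 0, 0), (2401, 0, 0, 1), (-588, 0, 1, 0), (35, 0, 1, 1), (-1715, 1, 0, 0), (210, 1, 0, 1), (-21, 1, 1, 0), (1, 1, 1, 1), (-7, 2, 0, 0)]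
  | 6, 5 => [(16807, 0, 0, 0), (-4802, 0, 0, 1), (-2058, 0, 1, 0), (392, 0, 1, 1), (-14, 0, 2, 0), (3430, 1, 0, 0), (-882, 1, 0, 1), (-56, 1, 1, 1), (84, 2, 0, 0)]
  | 6, 6 => [(-16807, 0, 0, 0), (3430, 0, 1, 0), (-2548, 0, 1, 1), (-294, 0, 2, 0), (-14406, 1, 0, 0), (2548, 1, 0, 1), (-686, 1, 1, 0), (-6, 1, 2, 0), (-294, 2, 0, 0), (-6, 2, 1, 0)]
  | _, _ => []

def ev (x y g : R) (l : List (ℤ × ℕ × ℕ × ℕ)) : R :=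
  (l.map fun t => (t.1 : R) * x ^ t.2.1 * y ^ t.2.2.1 * g ^ t.2.2.2).sum

def okt (k l1 l2 : ℤ) (t : ℤ × ℕ × ℕ × ℕ) : Prop :=
  (7 : ℤ) ^ (-k - t.2.1 - t.2.2.1).toNat ∣ t.1 ∧ l1 ≤ -t.2.1 - 2 * t.2.2.1 - t.2.2.2 ∧
    l2 ≤ -2 * t.2.1 - t.2.2.1 - t.2.2.2 ∧ t.2.2.2 ≤ 1

instance (k l1 l2 : ℤ) (t : ℤ × ℕ × ℕ × ℕ) : Decidable (okt k l1 l2 t) := by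
  unfold okt; infer_instance

theorem tab_ok : ∀ i < 7, ∀ j < 7, ∀ t ∈ tab i j,
    okt (2 * (-(i : ℤ) + -(j : ℤ)) / 7 + 1) (-(-(2 * (-(i : ℤ) + 2 * -(j : ℤ))) / 7))
     (-(-(2 * (2 * -(i : ℤ) + -(j : ℤ))) / 7)) t := by
  decide +kernel

theorem mn_pow (a b : ℤ) (n : ℕ) : mn T S a b ^ n = mn T S (n * a) (n * b) := by
  induction n with
  | zero => simp [mn_zero]
  | succ n ih => rw [pow_succ, ih, mn_mul]; congr 1 <;> push_cast <;> ring

theorem mn_pow' (n : ℕ) (m : ℕ) : mn T S (-1) 0 ^ n * mn T S 0 (-1) ^ m = mn T S (-n) (-m) := by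
  rw [mn_pow, mn_pow, mn_mul]; congr 1 <;> ring

theorem g_mem (g : R) (hg : g = mn T S 1 (-1) - mn T S (-1) 1 - 7 * mn T S 0 1 * g) :
    g ∈ Lam T S N 0 (-1) (-1) := by
  have H : ∀ n : ℕ, ∃ z ∈ Lam T S N 0 (-1) (-1), ∃ r, g = z + 7 ^ n * r := by
    intro n
    induction n with
    | zero => exact ⟨0, zero_mem _, g, by simp⟩
    | succ n ih =>
      obtain ⟨z, hz, r, h⟩ := ih
      refine ⟨(1 : ℤ) * mn T S 1 (-1) + (-1 : ℤ) * mn T S (-1) 1 + (-7 : ℤ) * mn T S 0 1 * z, ?_, - mn T S 0 1 * r, ?_⟩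
      · refine add_mem (add_mem ?_ ?_) ?_
        · exact Lam_mn T S N _ _ _ _ _ 0 _ (by norm_num) (by norm_num) (by norm_num) (by norm_num)
        · exact Lam_mn T S N _ _ _ _ _ 0 _ (by norm_num) (by norm_num) (by norm_num) (by norm_num)
        · exact Lam_term T S N _ _ _ _ _ _ _ _ 1 _ (by norm_num) z hz (by norm_num) (by norm_num) (by norm_num)
      · push_cast
        linear_combination hg - 7 * mn T S 0 1 * h
  obtain ⟨z, hz, r, h⟩ := H N
  rw [h]
  exact add_mem hz (Lam_I _ _ _ _ _ _ _)

theorem ev_mem (g : R) (hg : g ∈ Lam T S N 0 (-1) (-1)) (k l1 l2 : ℤ) (l : List (ℤ × ℕ × ℕ × ℕ))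
    (h : ∀ t ∈ l, okt k l1 l2 t) : ev (mn T S (-1) 0) (mn T S 0 (-1)) g l ∈ Lam T S N k l1 l2 := by
  unfold ev
  refine AddSubgroup.list_sum_mem _ ?_
  intro z hz
  rw [List.mem_map] at hz
  obtain ⟨⟨c, a, b, e⟩, ht, rfl⟩ := hz
  obtain ⟨h1, h2, h3, h4⟩ := h _ ht
  dsimp only at *
  rw [mul_assoc (c : R), mn_pow']
  have : e = 0 ∨ e = 1 := by omega
  rcases this with rfl | rfl
  · rw [pow_zero, mul_one]
    exact Lam_mn T S N _ _ _ _ _ _ _ h1 (by push_cast at *; omega) (by push_cast at *; omega) (by push_cast at *; omega)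
  · rw [pow_one]
    exact Lam_term T S N _ _ _ _ _ _ _ _ _ _ h1 _ hg (by push_cast at *; omega) (by push_cast at *; omega) (by push_cast at *; omega)

theorem Pu_base (u : ℤ → ℤ → R) (g : R) (hg : g ∈ Lam T S N 0 (-1) (-1))
    (hu : ∀ i < 7, ∀ j < 7, u (-(i : ℕ)) (-(j : ℕ)) = ev (mn T S (-1) 0) (mn T S 0 (-1)) g (tab i j))
    (i j : ℤ) (hi : -6 ≤ i) (hi' : i ≤ 0) (hj : -6 ≤ j) (hj' : j ≤ 0) : Pu T S N u i j := by
  obtain ⟨a, rfl⟩ : ∃ a : ℕ, i = -a := ⟨i.natAbs, by omega⟩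
  obtain ⟨b, rfl⟩ : ∃ b : ℕ, j = -b := ⟨j.natAbs, by omega⟩
  unfold Pu
  rw [hu a (by omega) b (by omega)]
  exact ev_mem T S N g hg _ _ _ _ (tab_ok a (by omega) b (by omega))

end table

section final
variable {R : Type*} [CommRing R] (T S : Rˣ) (N : ℕ)

theorem Qu_rem1n (c0 c1 c2 : ℤ) (v : ℤ → R) (hr : ∀ i, Rec (mn T S 1 0) v i)
    (H : ∀ k, v k ∈ Qu T S N 1 0 c0 c1 c2 0 k) (n : ℕ) (i : ℤ) :
    ∃ z ∈ Qu T S N 1 0 c0 c1 c2 1 i, v i = mn T S (2 * n) 0 * v (i - 7 * n) + 7 * z := by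
  induction n generalizing i with
  | zero => exact ⟨0, zero_mem _, by simp [mn_zero]⟩
  | succ n ih =>
    obtain ⟨z, hz, h⟩ := Qu_rem1 T S N 1 0 c0 c1 c2 (by simp) v i (hr i) H
    obtain ⟨y, hy, h'⟩ := ih (i - 7)
    refine ⟨z + (1 : ℤ) * mn T S 2 0 * y, add_mem hz ?_, ?_⟩
    · refine Lam_term T S N _ _ _ _ _ _ _ _ 0 _ (by norm_num) y hy ?_ ?_ ?_ <;> norm_num <;> omega
    · rw [h, h', show (2 * ((n + 1 : ℕ) : ℤ)) = 2 * 1 + 2 * n by push_cast; ring,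
        show i - 7 * ((n + 1 : ℕ) : ℤ) = i - 7 - 7 * n by push_cast; ring]
      have := mn_mul T S (2 * 1) 0 (2 * n) 0
      rw [add_zero] at this
      rw [← this]
      norm_num
      ring

variable (u : ℤ → ℤ → R) (g : R)

structure Dat (K1 K2 : R →+ R) : Prop where
  hg : g = mn T S 1 (-1) - mn T S (-1) 1 - 7 * mn T S 0 1 * g
  h1 : ∀ i j, Rec (mn T S 1 0) (fun i => u i j) i
  h2 : ∀ i j, Rec (mn T S 0 1) (fun j => u i j) j
  hu : ∀ i < 7, ∀ j < 7, u (-(i : ℕ)) (-(j : ℕ)) = ev (mn T S (-1) 0) (mn T S 0 (-1)) g (tab i j)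
  hK1 : ∀ a b : ℤ, K1 (mn T S a b) = mn T S (-a) (-b) * u (16 + 4 * a) (4 * b - 5)
  hK2 : ∀ a b : ℤ, K2 (mn T S a b) = mn T S (-a) (-b) * u (4 * a) (4 * b)
  hI1 : ∀ (n : ℕ) r, ∃ r', K1 (7 ^ n * r) = 7 ^ n * r'
  hI2 : ∀ (n : ℕ) r, ∃ r', K2 (7 ^ n * r) = 7 ^ n * r'

variable {K1 K2 : R →+ R}
variable {T S u g}

theorem Dat.gm (D : Dat T S u g K1 K2) : g ∈ Lam T S N 0 (-1) (-1) := g_mem T S N g D.hg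

theorem Dat.pu (D : Dat T S u g K1 K2) (i j : ℤ) : Pu T S N u i j :=
  Pu_all T S N u D.h1 D.h2 (Pu_base T S N u g (D.gm N) D.hu) i j

theorem Dat.rem (D : Dat T S u g K1 K2) (n : ℕ) (i j : ℤ) :
    ∃ z ∈ Qu T S N 1 0 j (2 * j) j 1 i, u i j = mn T S (2 * n) 0 * u (i - 7 * n) j + 7 * z :=
  Qu_rem1n T S N j (2 * j) j (fun i => u i j) (fun i => D.h1 i j)
    (fun k => (Pu_iff1 T S N u k j).1 (D.pu N k j)) n i

theorem Dat.rem2 (D : Dat T S u g K1 K2) (i j : ℤ) :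
    ∃ z ∈ Qu T S N 1 0 j (2 * j) j 2 i, u i j = mn T S 2 0 * (u (i - 7) j + 7 * u (i - 6) j
      + 21 * u (i - 5) j) + mn T S 1 0 * (7 * u (i - 3) j + 35 * u (i - 2) j) + 49 * z :=
  Qu_rem2 T S N 1 0 j (2 * j) j (by simp) (fun i => u i j) i (D.h1 i j)
    (fun k => (Pu_iff1 T S N u k j).1 (D.pu N k j))

/-- evaluate `u` at table points -/
theorem Dat.V05 (D : Dat T S u g K1 K2) : u 0 (-5) = 49 + 10 * mn T S 0 (-1) := by
  have := D.hu 0 (by norm_num) 5 (by norm_num)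
  simp [ev, tab] at this
  rw [this]

theorem Dat.V15 (D : Dat T S u g K1 K2) : u (-1) (-5) = 49 - 49 * g - 21 * mn T S 0 (-1) - mn T S 0 (-1) * g := by
  have := D.hu 1 (by norm_num) 5 (by norm_num)
  simp [ev, tab] at this
  rw [this]; ring

theorem Dat.V35 (D : Dat T S u g K1 K2) : u (-3) (-5) = -343 - 35 * mn T S 0 (-1) * g - 5 * mn T S (-1) (-1) := by
  have := D.hu 3 (by norm_num) 5 (by norm_num)
  have e := mn_mul T S (-1) 0 0 (-1)
  norm_num at e
  simp [ev, tab] at this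
  rw [this, ← e]; ring

theorem Dat.V45 (D : Dat T S u g K1 K2) : u (-4) (-5) = 343 * g - 98 * mn T S 0 (-1) + 77 * mn T S 0 (-1) * g
    + mn T S 0 (-2) - 147 * mn T S (-1) 0 + 7 * mn T S (-1) 0 * g - 49 * mn T S (-1) (-1) := by
  have := D.hu 4 (by norm_num) 5 (by norm_num)
  have e := mn_mul T S (-1) 0 0 (-1)
  have e' := mn_mul T S 0 (-1) 0 (-1)
  norm_num at e e'
  simp [ev, tab] at this
  rw [this, ← e, ← e']; ring

theorem Dat.V55 (D : Dat T S u g K1 K2) : u (-5) (-5) = 49 * (49 + 35 * mn T S 0 (-1) - 5 * mn T S 0 (-1) * g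
    + 5 * mn T S (-1) 0 * g + 5 * mn T S (-1) (-1)) := by
  have := D.hu 5 (by norm_num) 5 (by norm_num)
  have e := mn_mul T S (-1) 0 0 (-1)
  norm_num at e
  simp [ev, tab] at this
  rw [this, ← e]; ring

theorem Dat.V50 (D : Dat T S u g K1 K2) : u (-5) 0 = 49 + 10 * mn T S (-1) 0 := by
  have := D.hu 5 (by norm_num) 0 (by norm_num)
  simp [ev, tab] at this
  rw [this]

theorem Dat.V41 (D : Dat T S u g K1 K2) : u (-4) (-1) = 49 - 14 * g + 6 * mn T S (-1) 0 := by
  have := D.hu 4 (by norm_num) 1 (by norm_num)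
  simp [ev, tab] at this
  rw [this]; ring

theorem lm (k l1 l2 : ℤ) (c α β : ℤ) (h1 : l1 ≤ α + 2 * β) (h2 : l2 ≤ 2 * α + β)
    (h : α + β ≤ k) : (c : R) * mn T S α β ∈ Lam T S N k l1 l2 :=
  Lam_mn T S N k l1 l2 α β 0 c (by simp) h1 h2 (by simpa using h)

theorem lt (k l1 l2 k' l1' l2' : ℤ) (c α β : ℤ) {x : R} (hx : x ∈ Lam T S N k l1 l2)
    (h : k + α + β ≤ k') (h1 : l1' ≤ l1 + α + 2 * β) (h2 : l2' ≤ l2 + 2 * α + β) :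
    (c : R) * mn T S α β * x ∈ Lam T S N k' l1' l2' :=
  Lam_term T S N k l1 l2 k' l1' l2' α β 0 c (by simp) x hx (by simpa using h) h1 h2

theorem Dat.K1T (D : Dat T S u g K1 K2) : ∃ w ∈ Lam T S N 5 2 8,
    K1 (mn T S 1 0) = mn T S 4 0 - mn T S 6 (-2) + 7 * w := by
  obtain ⟨z, hz, h⟩ := D.rem N 3 20 (-5)
  unfold Qu at hz
  norm_num at hz h
  refine ⟨(1 : ℤ) * mn T S (-1) 0 * z + ((7 : ℤ) * mn T S 5 0 + (-3 : ℤ) * mn T S 5 (-1)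
    + (-7 : ℤ) * mn T S 5 0 * g + (1 : ℤ) * mn T S 5 0 * g), ?_, ?_⟩
  · refine add_mem ?_ (add_mem (add_mem (add_mem ?_ ?_) ?_) ?_)
    · exact lt N _ _ _ _ _ _ _ _ _ hz (by norm_num) (by norm_num) (by norm_num)
    · exact lm N _ _ _ _ _ _ (by norm_num) (by norm_num) (by norm_num)
    · exact lm N _ _ _ _ _ _ (by norm_num) (by norm_num) (by norm_num)
    · exact lt N _ _ _ _ _ _ _ _ _ (D.gm N) (by norm_num) (by norm_num) (by norm_num)
    · exact lt N _ _ _ _ _ _ _ _ _ (D.gm N) (by norm_num) (by norm_num) (by norm_num)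
  · rw [D.hK1]
    norm_num
    rw [h, D.V15]
    have e1 := mn_mul T S (-1) 0 6 0
    have e2 := mn_mul T S 5 0 0 (-1)
    have e3 := mn_mul T S 5 (-1) 1 (-1)
    have e4 := mn_mul T S 5 (-1) (-1) 1
    have e5 := mn_mul T S 5 (-1) 0 1
    norm_num at e1 e2 e3 e4 e5
    linear_combination (49 - 49 * g - 21 * mn T S 0 (-1) - mn T S 0 (-1) * g) * e1
      + (-21 - g) * e2 - mn T S 5 (-1) * D.hg - e3 + e4 + 7 * g * e5

theorem Dat.K2T4 (D : Dat T S u g K1 K2) : ∃ w ∈ Lam T S N 2 1 2,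
    K2 (mn T S 4 0) = 3 * mn T S 1 0 + 7 * w := by
  obtain ⟨z, hz, h⟩ := D.rem N 3 16 0
  unfold Qu at hz
  norm_num at hz h
  refine ⟨(1 : ℤ) * mn T S (-4) 0 * z + ((7 : ℤ) * mn T S 2 0 + (1 : ℤ) * mn T S 1 0), ?_, ?_⟩
  · refine add_mem ?_ (add_mem ?_ ?_)
    · exact lt N _ _ _ _ _ _ _ _ _ hz (by norm_num) (by norm_num) (by norm_num)
    · exact lm N _ _ _ _ _ _ (by norm_num) (by norm_num) (by norm_num)
    · exact lm N _ _ _ _ _ _ (by norm_num) (by norm_num) (by norm_num)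
  · rw [D.hK2]
    norm_num
    rw [h, D.V50]
    have e1 := mn_mul T S (-4) 0 6 0
    have e2 := mn_mul T S 2 0 (-1) 0
    norm_num at e1 e2
    linear_combination (49 + 10 * mn T S (-1) 0) * e1 + 10 * e2

theorem Dat.K2T6 (D : Dat T S u g K1 K2) : ∃ w ∈ Lam T S N 2 1 2,
    K2 (mn T S 6 (-2)) = 6 * mn T S 1 0 + 7 * w := by
  obtain ⟨z, hz, h⟩ := D.rem N 4 24 (-1)
  obtain ⟨y, hy, h'⟩ := Qu_rem1 T S N 0 1 24 24 (2 * 24) (by simp) (fun j => u 24 j) (-1) (D.h2 24 (-1))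
    (fun k => (Pu_iff2 T S N u 24 k).1 (D.pu N 24 k))
  unfold Qu at hz hy
  norm_num at hz h hy h'
  refine ⟨(1 : ℤ) * mn T S (-6) 0 * z + (-1 : ℤ) * mn T S (-6) 0 * y + ((7 : ℤ) * mn T S 2 0 + (-2 : ℤ) * mn T S 2 0 * g), ?_, ?_⟩
  · refine add_mem (add_mem ?_ ?_) (add_mem ?_ ?_)
    · exact lt N _ _ _ _ _ _ _ _ _ hz (by norm_num) (by norm_num) (by norm_num)
    · exact lt N _ _ _ _ _ _ _ _ _ hy (by norm_num) (by norm_num) (by norm_num)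
    · exact lm N _ _ _ _ _ _ (by norm_num) (by norm_num) (by norm_num)
    · exact lt N _ _ _ _ _ _ _ _ _ (D.gm N) (by norm_num) (by norm_num) (by norm_num)
  · rw [D.hK2]
    norm_num
    rw [D.V41] at h
    have e0 := mn_mul T S (-6) 0 0 2
    have e1 := mn_mul T S (-6) 0 8 0
    have e2 := mn_mul T S 2 0 (-1) 0
    norm_num at e0 e1 e2
    linear_combination (-u 24 (-8)) * e0 - mn T S (-6) 0 * h' + mn T S (-6) 0 * h + (49 - 14 * g + 6 * mn T S (-1) 0) * e1 + 6 * e2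

theorem Dat.K11 (D : Dat T S u g K1 K2) : ∃ w ∈ Lam T S N 6 2 8,
    K1 1 = 21 * mn T S 4 0 + 49 * w := by
  obtain ⟨z0, hz0, h0⟩ := D.rem2 N 16 (-5)
  obtain ⟨z1, hz1, h1⟩ := D.rem2 N 9 (-5)
  obtain ⟨z2, hz2, h2⟩ := D.rem2 N 2 (-5)
  obtain ⟨y0, hy0, i0⟩ := D.rem N 2 10 (-5)
  obtain ⟨y1, hy1, i1⟩ := D.rem N 2 11 (-5)
  obtain ⟨y2, hy2, i2⟩ := D.rem N 2 13 (-5)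
  obtain ⟨y3, hy3, i3⟩ := D.rem N 2 14 (-5)
  obtain ⟨x0, hx0, j0⟩ := D.rem N 1 3 (-5)
  obtain ⟨x1, hx1, j1⟩ := D.rem N 1 4 (-5)
  obtain ⟨x2, hx2, j2⟩ := D.rem N 1 6 (-5)
  obtain ⟨x3, hx3, j3⟩ := D.rem N 1 7 (-5)
  unfold Qu at hz0 hz1 hz2 hy0 hy1 hy2 hy3 hx0 hx1 hx2 hx3
  norm_num at *
  have hk : K1 1 = u 16 (-5) := by
    have := D.hK1 0 0
    simpa [mn_zero] using this
  have hG := D.gm N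
  refine ⟨((1 : ℤ) * mn T S 0 0 * z0 + (1 : ℤ) * mn T S 2 0 * z1 + (1 : ℤ) * mn T S 4 0 * z2
    + (1 : ℤ) * mn T S 2 0 * y0 + (3 : ℤ) * mn T S 2 0 * y1 + (1 : ℤ) * mn T S 1 0 * y2 + (5 : ℤ) * mn T S 1 0 * y3
    + (1 : ℤ) * mn T S 4 0 * x0 + (3 : ℤ) * mn T S 4 0 * x1 + (1 : ℤ) * mn T S 3 0 * x2 + (5 : ℤ) * mn T S 3 0 * x3)
    + (((49 : ℤ) * mn T S 6 0 + (35 : ℤ) * mn T S 6 (-1) + (-5 : ℤ) * mn T S 6 (-1) * g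
      + (5 : ℤ) * mn T S 5 0 * g + (5 : ℤ) * mn T S 5 (-1))
    + ((147 : ℤ) * mn T S 6 0 * g + (-42 : ℤ) * mn T S 6 (-1) + (33 : ℤ) * mn T S 6 (-1) * g
       + (-63 : ℤ) * mn T S 5 0 + (3 : ℤ) * mn T S 5 0 * g + (-21 : ℤ) * mn T S 5 (-1))
    + ((-441 : ℤ) * mn T S 6 0 + (-45 : ℤ) * mn T S 6 (-1) * g)
    + ((21 : ℤ) * mn T S 5 0 + (-9 : ℤ) * mn T S 5 (-1) + (-18 : ℤ) * mn T S 5 0 * g)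
    + ((105 : ℤ) * mn T S 5 0 + (15 : ℤ) * mn T S 5 (-1))), ?_, ?_⟩
  · refine add_mem ?_ ?_
    · repeat' apply add_mem
      · exact lt N _ _ _ _ _ _ _ _ _ hz0 (by norm_num) (by norm_num) (by norm_num)
      · exact lt N _ _ _ _ _ _ _ _ _ hz1 (by norm_num) (by norm_num) (by norm_num)
      · exact lt N _ _ _ _ _ _ _ _ _ hz2 (by norm_num) (by norm_num) (by norm_num)
      · exact lt N _ _ _ _ _ _ _ _ _ hy0 (by norm_num) (by norm_num) (by norm_num)
      · exact lt N _ _ _ _ _ _ _ _ _ hy1 (by norm_num) (by norm_num) (by norm_num)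
      · exact lt N _ _ _ _ _ _ _ _ _ hy2 (by norm_num) (by norm_num) (by norm_num)
      · exact lt N _ _ _ _ _ _ _ _ _ hy3 (by norm_num) (by norm_num) (by norm_num)
      · exact lt N _ _ _ _ _ _ _ _ _ hx0 (by norm_num) (by norm_num) (by norm_num)
      · exact lt N _ _ _ _ _ _ _ _ _ hx1 (by norm_num) (by norm_num) (by norm_num)
      · exact lt N _ _ _ _ _ _ _ _ _ hx2 (by norm_num) (by norm_num) (by norm_num)
      · exact lt N _ _ _ _ _ _ _ _ _ hx3 (by norm_num) (by norm_num) (by norm_num)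
    · repeat' apply add_mem
      all_goals first
        | exact lm N _ _ _ _ _ _ (by norm_num) (by norm_num) (by norm_num)
        | exact lt N _ _ _ _ _ _ _ _ _ hG (by norm_num) (by norm_num) (by norm_num)
  · rw [hk, h0, h1, h2, i0, i1, i2, i3, j0, j1, j2, j3, D.V05, D.V15, D.V35, D.V45, D.V55]
    have p2 : mn T S 2 0 = mn T S 1 0 ^ 2 := by rw [mn_pow]; norm_num
    have p3 : mn T S 3 0 = mn T S 1 0 ^ 3 := by rw [mn_pow]; norm_num
    have p4 : mn T S 4 0 = mn T S 1 0 ^ 4 := by rw [mn_pow]; norm_num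
    have p5 : mn T S 5 0 = mn T S 1 0 ^ 5 := by rw [mn_pow]; norm_num
    have p6 : mn T S 6 0 = mn T S 1 0 ^ 6 := by rw [mn_pow]; norm_num
    have q6 : mn T S 6 (-1) = mn T S 1 0 ^ 6 * mn T S 0 (-1) := by rw [mn_pow, mn_mul]; norm_num
    have q5 : mn T S 5 (-1) = mn T S 1 0 ^ 5 * mn T S 0 (-1) := by rw [mn_pow, mn_mul]; norm_num
    have r1 : mn T S (-1) (-1) = mn T S (-1) 0 * mn T S 0 (-1) := by rw [mn_mul]; norm_num
    have r2 : mn T S 0 (-2) = mn T S 0 (-1) ^ 2 := by rw [mn_pow]; norm_num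
    have r3 : mn T S 1 (-1) = mn T S 1 0 * mn T S 0 (-1) := by rw [mn_mul]; norm_num
    have r4 : mn T S (-1) 1 = mn T S (-1) 0 * mn T S 0 1 := by rw [mn_mul]; norm_num
    have s1 : mn T S 1 0 * mn T S (-1) 0 = 1 := by rw [mn_mul, ← mn_zero T S]; norm_num
    have s2 : mn T S 0 1 * mn T S 0 (-1) = 1 := by rw [mn_mul, ← mn_zero T S]; norm_num
    have hg := D.hg
    rw [r3, r4] at hg
    rw [p2, p3, p4, p5, p6, q6, q5, r1, r2, mn_zero]
    clear h0 h1 h2 i0 i1 i2 i3 j0 j1 j2 j3 hz0 hz1 hz2 hy0 hy1 hy2 hy3 hx0 hx1 hx2 hx3 p2 p3 p4 p5 p6 q6 q5 r1 r2 r3 r4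
    generalize mn T S 1 0 = t at *
    generalize mn T S 0 1 = s at *
    generalize mn T S (-1) 0 = x at *
    generalize mn T S 0 (-1) = y at *
    push_cast
    linear_combination (-21 * t ^ 5 * y) * hg + (21 * t ^ 4 + 147 * t ^ 5 * g) * s2
      + (21 * t ^ 4 * y * s - 1099 * t ^ 5 * y + 392 * t ^ 5 * g - 3087 * t ^ 5) * s1

/-- `7^n M + 7^N R` -/
def DD (T S : Rˣ) (N n : ℕ) : AddSubgroup R :=
  (Lam T S N 2 1 2).map (AddMonoidHom.mulLeft ((7 : R) ^ n)) ⊔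
    (⊤ : AddSubgroup R).map (AddMonoidHom.mulLeft ((7 : R) ^ N))

theorem mem_DD {n : ℕ} {x : R} : x ∈ DD T S N n ↔
    ∃ m ∈ Lam T S N 2 1 2, ∃ r, x = 7 ^ n * m + 7 ^ N * r := by
  unfold DD
  rw [AddSubgroup.mem_sup]
  constructor
  · rintro ⟨_, ⟨m, hm, rfl⟩, _, ⟨r, -, rfl⟩, rfl⟩
    exact ⟨m, hm, r, rfl⟩
  · rintro ⟨m, hm, r, rfl⟩
    exact ⟨_, ⟨m, hm, rfl⟩, _, ⟨r, trivial, rfl⟩, rfl⟩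

theorem Lam_split (x : R) (hx : x ∈ Lam T S N 1 1 2) :
    ∃ t : ℤ, x - t * mn T S 1 0 ∈ DD T S N 1 := by
  have : x ∈ AddSubgroup.zmultiples (mn T S 1 0) ⊔ DD T S N 1 := by
    refine Lam_map T S N (AddMonoidHom.id R) 1 1 2 _ ?_ ?_ x hx
    · intro r
      exact AddSubgroup.mem_sup_right ((mem_DD N).2 ⟨0, zero_mem _, r, by simp⟩)
    · intro m a b h1 h2 h3 h4
      rcases Nat.eq_zero_or_pos m with h | h
      · subst h
        have ha : a = 1 := by push_cast at *; omega
        have hb : b = 0 := by push_cast at *; omega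
        subst ha hb
        refine AddSubgroup.mem_sup_left ?_
        simp
      · have := h4 h
        refine AddSubgroup.mem_sup_right ((mem_DD N).2 ⟨7 ^ (m - 1) * mn T S a b, ?_, 0, ?_⟩)
        · exact Lam_gen T S N _ _ _ _ _ _ h1 h2 (by omega)
        · obtain ⟨k, rfl⟩ : ∃ k, m = k + 1 := ⟨m - 1, by omega⟩
          simp [pow_succ]; ring
  rw [AddSubgroup.mem_sup] at this
  obtain ⟨y, hy, z, hz, rfl⟩ := this
  obtain ⟨t, rfl⟩ := AddSubgroup.mem_zmultiples_iff.1 hy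
  refine ⟨t, ?_⟩
  simpa using hz

theorem map7 (K : R →+ R) (n : ℕ) (x : R) : K (7 ^ n * x) = 7 ^ n * K x := by
  have := map_zsmul K (7 ^ n : ℤ) x
  simpa [zsmul_eq_mul] using this

theorem mapz (K : R →+ R) (n : ℤ) (x : R) : K (n * x) = n * K x := by
  have := map_zsmul K n x
  simpa [zsmul_eq_mul] using this

theorem DD_z {n : ℕ} {x : R} (hx : x ∈ DD T S N n) (c : ℤ) : (c : R) * x ∈ DD T S N n := by
  have := AddSubgroup.zsmul_mem _ hx c
  rwa [zsmul_eq_mul] at this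

theorem DD_7 {n : ℕ} {x : R} (hx : x ∈ DD T S N n) (m : ℕ) : 7 ^ m * x ∈ DD T S N (n + m) := by
  obtain ⟨y, hy, r, rfl⟩ := (mem_DD N).1 hx
  exact (mem_DD N).2 ⟨y, hy, 7 ^ m * r, by rw [pow_add]; ring⟩

theorem DD_anti {n m : ℕ} {x : R} (hx : x ∈ DD T S N (n + m)) : x ∈ DD T S N n := by
  obtain ⟨y, hy, r, rfl⟩ := (mem_DD N).1 hx
  refine (mem_DD N).2 ⟨7 ^ m * y, ?_, r, by rw [pow_add]; ring⟩
  have := AddSubgroup.zsmul_mem _ hy (7 ^ m)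
  simpa [zsmul_eq_mul] using this

theorem Dat.step (D : Dat T S u g K1 K2) (n : ℕ) (x : R) (hx : x ∈ DD T S N n) :
    ∃ t : ℤ, K2 (K1 x) - 7 ^ n * t * mn T S 1 0 ∈ DD T S N (n + 1) := by
  obtain ⟨m, hm, r, rfl⟩ := (mem_DD N).1 hx
  have h1 := K1_Lam T S N u (D.pu N) K1 (D.hI1 N) D.hK1 _ _ _ m hm
  have h2 := K2_Lam T S N u (D.pu N) K2 (D.hI2 N) D.hK2 _ _ _ _ h1
  norm_num at h2
  obtain ⟨t, ht⟩ := Lam_split N _ h2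
  refine ⟨t, ?_⟩
  rw [map_add, map_add, map7, map7, map7, map7]
  have e1 := DD_7 N ht n
  have e2 : 7 ^ N * K2 (K1 r) ∈ DD T S N (n + 1) := (mem_DD N).2 ⟨0, zero_mem _, K2 (K1 r), by simp⟩
  rw [add_comm 1 n] at e1
  convert add_mem e1 e2 using 1
  ring

theorem Dat.Mmap (D : Dat T S u g K1 K2) (w : R) (k : ℤ) (hk : k ≤ 6) (hw : w ∈ Lam T S N k 2 8) :
    K2 w ∈ Lam T S N 2 1 2 := by
  have h2 := K2_Lam T S N u (D.pu N) K2 (D.hI2 N) D.hK2 _ _ _ _ hw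
  exact Lam_mono T S N h2 (by omega) (by norm_num) (by norm_num)

theorem Dat.stepT (D : Dat T S u g K1 K2) : K2 (K1 (mn T S 1 0)) - 4 * mn T S 1 0 ∈ DD T S N 1 := by
  obtain ⟨w, hw, h⟩ := D.K1T N
  obtain ⟨y, hy, h1⟩ := D.K2T4 N
  obtain ⟨z, hz, h2⟩ := D.K2T6 N
  have hw' := D.Mmap N w 5 (by norm_num) hw
  have e : K2 (7 * w) = 7 * K2 w := by simpa using map7 K2 1 w
  rw [h, map_add, map_sub, h1, h2, e]
  refine (mem_DD N).2 ⟨y - z + K2 w + (-1 : ℤ) * mn T S 1 0, ?_, 0, ?_⟩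
  · refine add_mem (add_mem (sub_mem hy hz) hw') ?_
    exact lm N _ _ _ _ _ _ (by norm_num) (by norm_num) (by norm_num)
  · push_cast; ring

theorem Dat.L2 (D : Dat T S u g K1 K2) : K2 (K1 1) - 7 * 9 * mn T S 1 0 ∈ DD T S N 2 := by
  obtain ⟨w, hw, h⟩ := D.K11 N
  obtain ⟨y, hy, h1⟩ := D.K2T4 N
  have hw' := D.Mmap N w 6 (by norm_num) hw
  have e : K2 (49 * w) = 49 * K2 w := by simpa using mapz K2 49 w
  have e' : K2 (21 * mn T S 4 0) = 21 * K2 (mn T S 4 0) := by simpa using mapz K2 21 (mn T S 4 0)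
  rw [h, map_add, e, e', h1]
  refine (mem_DD N).2 ⟨(3 : ℤ) * y + K2 w, add_mem ?_ hw', 0, by push_cast; ring⟩
  have := AddSubgroup.zsmul_mem _ hy 3
  rwa [zsmul_eq_mul] at this

theorem Dat.main (D : Dat T S u g K1 K2) (l : ℕ → R) (h0 : l 0 = 1)
    (hl : ∀ n, l (n + 1) = K2 (K1 (l n))) (α : ℕ) (hα : 1 ≤ α) :
    ∃ x : ℤ, ∃ r, l (α + 1) - x * l α = 7 ^ (α + 1) * r := by
  obtain ⟨N, hN⟩ : ∃ N, N = α + 1 := ⟨_, rfl⟩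
  have hc : ∀ n, ∃ c : ℤ, ¬ (7 ∣ c) ∧ l (n + 1) - 7 * c * mn T S 1 0 ∈ DD T S N 2 := by
    intro n
    induction n with
    | zero => exact ⟨9, by norm_num, by rw [hl, h0]; simpa using D.L2 N⟩
    | succ n ih =>
      obtain ⟨c, hc, h⟩ := ih
      obtain ⟨t, ht⟩ := D.step N 2 _ h
      have h4 := DD_7 N (DD_z N (D.stepT N) c) 1
      refine ⟨4 * c + 7 * t, by omega, ?_⟩
      have e : K2 (K1 (l (n + 1) - 7 * c * mn T S 1 0)) = l (n + 1 + 1) - 7 * c * K2 (K1 (mn T S 1 0)) := by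
        rw [map_sub, map_sub, ← hl]
        have := mapz K1 (7 * c) (mn T S 1 0)
        push_cast at this
        rw [this]
        have := mapz K2 (7 * c) (K1 (mn T S 1 0))
        push_cast at this
        rw [this]
      rw [e] at ht
      have ht := DD_anti N (m := 1) ht
      norm_num at h4
      convert add_mem ht h4 using 1
      push_cast
      ring
  have key : ∀ n, ∃ x : ℤ, l (n + 2) - x * l (n + 1) ∈ DD T S N (n + 2) := by
    intro n
    induction n with
    | zero =>
      obtain ⟨c, hc1, h1⟩ := hc 0
      obtain ⟨c', hc2, h2⟩ := hc 1
      have cop : IsCoprime c (7 : ℤ) :=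
        (((Nat.prime_iff_prime_int.1 (by norm_num : Nat.Prime 7)).coprime_iff_not_dvd).2 hc1).symm
      obtain ⟨a, b, hab⟩ := cop
      refine ⟨c' * a, ?_⟩
      have h3 := DD_z N h1 (c' * a)
      have h4 : (49 : R) * ((b * c' : ℤ) * mn T S 1 0) ∈ DD T S N 2 :=
        (mem_DD N).2 ⟨(b * c' : ℤ) * mn T S 1 0, lm N _ _ _ _ _ _ (by norm_num) (by norm_num) (by norm_num), 0, by ring⟩
      have hab' : (a : R) * c + b * 7 = 1 := by exact_mod_cast congrArg (Int.cast : ℤ → R) hab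
      convert add_mem (sub_mem h2 h3) h4 using 1
      push_cast
      linear_combination (-7 * c' * mn T S 1 0) * hab'
    | succ n ih =>
      obtain ⟨x, hx⟩ := ih
      obtain ⟨t, ht⟩ := D.step N _ _ hx
      obtain ⟨c, hc1, h1⟩ := hc (n + 1)
      have cop : IsCoprime c (7 : ℤ) :=
        (((Nat.prime_iff_prime_int.1 (by norm_num : Nat.Prime 7)).coprime_iff_not_dvd).2 hc1).symm
      obtain ⟨a, b, hab⟩ := cop
      refine ⟨x + 7 ^ (n + 1) * t * a, ?_⟩
      have e : K2 (K1 (l (n + 2) - x * l (n + 1))) = l (n + 3) - x * l (n + 2) := by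
        rw [map_sub, map_sub, mapz, mapz, ← hl, ← hl]
      rw [e] at ht
      have h3 := DD_z N (DD_7 N h1 (n + 1)) (t * a)
      rw [show 2 + (n + 1) = n + 2 + 1 by ring] at h3
      have h4 : (7 : R) ^ (n + 2 + 1) * ((t * b : ℤ) * mn T S 1 0) ∈ DD T S N (n + 2 + 1) :=
        (mem_DD N).2 ⟨(t * b : ℤ) * mn T S 1 0, lm N _ _ _ _ _ _ (by norm_num) (by norm_num) (by norm_num), 0, by ring⟩
      have hab' : (a : R) * c + b * 7 = 1 := by exact_mod_cast congrArg (Int.cast : ℤ → R) hab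
      convert add_mem (sub_mem ht h3) h4 using 1
      push_cast
      rw [show n + 1 + 1 = n + 2 by ring, show n + 1 + 2 = n + 3 by ring]
      linear_combination (-7 ^ (n + 2) * t * mn T S 1 0) * hab'
  obtain ⟨n, rfl⟩ : ∃ n, α = n + 1 := ⟨α - 1, by omega⟩
  obtain ⟨x, hx⟩ := key n
  obtain ⟨m, -, r, h⟩ := (mem_DD N).1 hx
  exact ⟨x, m + r, by rw [show n + 1 + 1 = n + 2 by ring] at *; rw [h, hN]; ring⟩

end final

section alg
variable {R : Type*} [CommRing R]

set_option linter.unusedSimpArgs false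

def s1 (a b c : R) : R := a * c + b * a + c * b
def s2 (a b c : R) : R := c ^ 3 + a ^ 3 + b ^ 3
def s3 (a b c : R) : R := a * b ^ 2 + b * c ^ 2 + c * a ^ 2
def s4 (a b c : R) : R := a + b + c
def s5 (a b c : R) : R := c ^ 2 + a ^ 2 + b ^ 2
def s6 (a b c : R) : R := b ^ 4 + c ^ 4 + a ^ 4
def XX (a b c : R) : R := -8 - (a ^ 3 * c + b ^ 3 * a + c ^ 3 * b)
def gg (a b c d e f : R) : R := 4 - (d * b * c + e * a * c + f * a * b)

structure Klein (a b c d e f : R) : Prop where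
  h1 : a * b * c + 1 = 0
  h2 : d * e * f + 1 = 0
  t1 : c * f + a + d = 0
  t2 : a * d + b + e = 0
  t3 : b * e + c + f = 0

variable {a b c d e f : R}
namespace Klein

theorem symm (H : Klein a b c d e f) : Klein d e f a b c :=
  ⟨H.h2, H.h1, by linear_combination H.t1, by linear_combination H.t2, by linear_combination H.t3⟩

theorem cyc (H : Klein a b c d e f) : Klein b c a e f d :=
  ⟨by linear_combination H.h1, by linear_combination H.h2, H.t2, H.t3, H.t1⟩

theorem k1 (H : Klein a b c d e f) : a * c ^ 2 - a ^ 2 + b = 0 := by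
  linear_combination a * c * H.t3 - e * H.h1 - a * H.t1 + H.t2

theorem k2 (H : Klein a b c d e f) : b * a ^ 2 - b ^ 2 + c = 0 := H.cyc.k1
theorem k3 (H : Klein a b c d e f) : c * b ^ 2 - c ^ 2 + a = 0 := H.cyc.cyc.k1
theorem m1 (H : Klein a b c d e f) : d * f ^ 2 - d ^ 2 + e = 0 := H.symm.k1
theorem m2 (H : Klein a b c d e f) : e * d ^ 2 - e ^ 2 + f = 0 := H.symm.k2
theorem m3 (H : Klein a b c d e f) : f * e ^ 2 - f ^ 2 + d = 0 := H.symm.k3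

theorem s4s1 (H : Klein a b c d e f) : s4 a b c * s1 a b c =
    -3 + s3 a b c - s4 a b c + s5 a b c := by
  simp only [s1, s2, s3, s4, s5, s6, XX]
  linear_combination (1) * H.k2 + (3) * H.h1 + (1) * H.k1 + (1) * H.k3

theorem s4s2 (H : Klein a b c d e f) : s4 a b c * s2 a b c =
    -8 - XX a b c - s1 a b c + s3 a b c + s6 a b c := by
  simp only [s1, s2, s3, s4, s5, s6, XX]
  linear_combination (a) * H.k2 + (c) * H.k1 + (b) * H.k3

theorem s4s3 (H : Klein a b c d e f) : s4 a b c * s3 a b c =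
    -8 - XX a b c - s1 a b c + s2 a b c - s4 a b c := by
  simp only [s1, s2, s3, s4, s5, s6, XX]
  linear_combination (b) * H.k2 + (c + b + a) * H.h1 + (a) * H.k1 + (c) * H.k3

theorem s4s4 (H : Klein a b c d e f) : s4 a b c * s4 a b c =
    2 * s1 a b c + s5 a b c := by
  simp only [s1, s2, s3, s4, s5, s6, XX]
  linear_combination 0

theorem s4s5 (H : Klein a b c d e f) : s4 a b c * s5 a b c =
    s2 a b c + s3 a b c - s4 a b c + s5 a b c := by
  simp only [s1, s2, s3, s4, s5, s6, XX]
  linear_combination (1) * H.k2 + (1) * H.k1 + (1) * H.k3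

theorem s4s6 (H : Klein a b c d e f) : s4 a b c * s6 a b c =
    -10 * s1 a b c - XX a b c * s1 a b c + 2 * s2 a b c + s3 a b c - 9 * s4 a b c - XX a b c * s4 a b c
    + 2 * s5 a b c - s6 a b c := by
  simp only [s1, s2, s3, s4, s5, s6, XX]
  linear_combination (-c ^ 2 - c ^ 3 - b * c ^ 2 - b ^ 2 - b ^ 3 - a * b ^ 2 - a ^ 2 - a ^ 2 * c - a ^ 3) * H.h1
    + (1 + c + c ^ 2 + a - a ^ 2 - a ^ 3) * H.k1 + (1 + b - b ^ 2 - b ^ 3 + a + a ^ 2) * H.k2 +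
    (1 + c - c ^ 2 - c ^ 3 + b + b ^ 2) * H.k3

theorem T00 (H : Klein a b c d e f) : a * c * e + b * a * f + c * b * d =
    4 - (gg a b c d e f) := by
  simp only [XX, gg]
  linear_combination 0

theorem T01 (H : Klein a b c d e f) : a * c * d ^ 2 + b * a * e ^ 2 + c * b * f ^ 2 = -1 := by
  linear_combination (a * e) * H.t3 + (b * f + a * c * d) * H.t1 + (-d * f) * H.k1 + (-a * f - a * c) * H.t2 +
    (1) * H.h1

theorem T02 (H : Klein a b c d e f) : a * c * f ^ 4 + b * a * d ^ 4 + c * b * e ^ 4 =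
    3 * (gg a b c d e f) - 25 - (XX a b c) - (XX d e f) := by
  simp only [XX, gg]
  linear_combination (-f ^ 3 - d * f + 3 * c * d - c ^ 2 * e ^ 2 - c ^ 3 + b * d * e + b * d ^ 3 + b ^ 2 * d + a
    * f + a * e ^ 2 + 5 * a * c - a * b * d ^ 2 - a * b ^ 2) * H.t2 + (-e ^ 3 - c * e + a * f ^
    3 + a * d * f - a * c * f ^ 2 - 3 * a * c * d + a ^ 2 * f - a ^ 2 * c) * H.t1 + (-2 * d * e
    - d ^ 3 + c * e ^ 3 + c ^ 2 * e - 2 * b * d - a * e + a * b) * H.t3 + (f ^ 3 + 3 * d * f + d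
    * e ^ 2 + c * d + a * f) * H.k1 + (d ^ 3 + b * d) * H.k2 + (-6) * H.h1 + (3) * H.h2

theorem T10 (H : Klein a b c d e f) : c ^ 3 * e + a ^ 3 * f + b ^ 3 * d =
    (XX a b c) + 13 - 2 * (gg a b c d e f) := by
  simp only [XX, gg]
  linear_combination (-c * d - a * f) * H.k1 + (a ^ 2 * c) * H.t1 + (c ^ 3 - 2 * a * c + a * b ^ 2) * H.t2 + (-b
    * d) * H.k2 + (-a * b) * H.t3 + (3) * H.h1

theorem T11 (H : Klein a b c d e f) : c ^ 3 * d ^ 2 + a ^ 3 * e ^ 2 + b ^ 3 * f ^ 2 =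
    (XX a b c) + (XX d e f) + (gg a b c d e f) + 9 := by
  simp only [XX, gg]
  linear_combination (-a * e - a ^ 3) * H.m2 + (f ^ 3 - 2 * d * f + d * e ^ 2 + 2 * c * d + c ^ 3 + b ^ 2 * f ^ 2
    - b ^ 2 * d - a * e ^ 2 - a * c - a * b * e + a * b ^ 2 + a ^ 2 * d * e) * H.t2 + (-c * d -
    c ^ 3 - a * f - a * b ^ 2) * H.m1 + (-d * e - b * f ^ 2 + b * d + 2 * a * e + a * b) * H.t3
    + (d ^ 2 * f - c * d ^ 2 + c ^ 2 * d * f + b * f - a * c * d + a ^ 2 * c) * H.t1 + (-c * d -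
    a * f) * H.k1 + (-b * d) * H.k2 + (3) * H.h2

theorem T12 (H : Klein a b c d e f) : c ^ 3 * f ^ 4 + a ^ 3 * d ^ 4 + b ^ 3 * e ^ 4 =
    (XX d e f) - (XX a b c) + 5 * (gg a b c d e f) - 20 := by
  simp only [XX, gg]
  linear_combination (-3 * d * f + d * e ^ 2 + 6 * c * d - c ^ 3 + 2 * b * d * e + b ^ 2 * d + 3 * a * f - a * d
    ^ 2 * e + 8 * a * c - a * b * d ^ 2 - a * b ^ 2 + a ^ 2 * d ^ 3) * H.t2 + (e * f ^ 2 - 5 * d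
    * e + c ^ 2 * e - b * e ^ 2 * f - 3 * b * d - b * c * e ^ 2 + b ^ 2 * e ^ 3 - 2 * a * e + a
    * b) * H.t3 + (-e * f + d ^ 2 * f - c * e - c * d * f ^ 2 + c ^ 2 * f ^ 3 + 2 * b * e ^ 2 +
    2 * a * d * f - a * c * f ^ 2 - 6 * a * c * d + a ^ 2 * f - a ^ 2 * c) * H.t1 + (6 * d * f +
    c * d + a * f) * H.k1 + (b * d) * H.k2 + (-9) * H.h1 + (9) * H.h2

theorem T20 (H : Klein a b c d e f) : a * b ^ 2 * e + b * c ^ 2 * f + c * a ^ 2 * d =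
    (gg a b c d e f) - 1 := by
  simp only [XX, gg]
  linear_combination (a * c) * H.t2 + (a * b) * H.t3 + (b * c) * H.t1 + (-3) * H.h1

theorem T21 (H : Klein a b c d e f) : a * b ^ 2 * d ^ 2 + b * c ^ 2 * e ^ 2 + c * a ^ 2 * f ^ 2 =
    -(XX a b c) - 12 + 2 * (gg a b c d e f) := by
  simp only [XX, gg]
  linear_combination (-c * e - a * c * d + a ^ 2 * f - a ^ 2 * c) * H.t1 + (c * d - c ^ 3 + b ^ 2 * d + 3 * a * c
    - a * b ^ 2) * H.t2 + (c ^ 2 * e - b * d + a * b) * H.t3 + (d * f + c * d + a * f) * H.k1 +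
    (b * d) * H.k2 + (-4) * H.h1

theorem T22 (H : Klein a b c d e f) : a * b ^ 2 * f ^ 4 + b * c ^ 2 * d ^ 4 + c * a ^ 2 * e ^ 4 =
    -6 + 2 * (XX d e f) - 2 * (XX a b c) - 5 * (gg a b c d e f) - (gg a b c d e f) * (XX d e f) := by
  simp only [XX, gg]
  linear_combination (2 * f ^ 3 - e ^ 4 * f + 3 * d * f + 2 * d * e ^ 2 - d ^ 5 + 2 * c * d + 2 * a * f) * H.k1 +
    (-e ^ 3 + d * f ^ 3 - 2 * d ^ 2 * f + c * d ^ 2 - 2 * b * f + b * d ^ 4 + a * e ^ 2 * f ^ 2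
    + 2 * a * d * f - 2 * a * c * f ^ 2 + a * c * e ^ 4 - 3 * a * c * d + 2 * a ^ 2 * f - 2 * a
    ^ 2 * c) * H.t1 + (-e * f - 2 * a ^ 2 * f - a ^ 2 * e ^ 2) * H.m3 + (-d * f ^ 4 + 2 * d ^ 3
    + 2 * b * d) * H.k2 + (-3 * f ^ 3 + 2 * d * f - 2 * d * e ^ 2 + d ^ 3 * e + c * d - 2 * c ^
    2 * e ^ 2 + c ^ 2 * d ^ 4 - 2 * c ^ 3 + 2 * b * d * e + b * d ^ 2 * f ^ 2 + 2 * b ^ 2 * d +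
    a * f + 3 * a * e ^ 2 - a * d ^ 4 + 7 * a * c + a * b * f ^ 4 - 2 * a * b * d ^ 2 - 2 * a *
    b ^ 2) * H.t2 + (3 - c * d * e - b * d * f + b * c * f ^ 2 - a * e * f + a * c * d ^ 2 + a *
    b * e ^ 2) * H.h2 + (-d * f + 2 * c * d - b ^ 2 * f ^ 2 - 2 * b ^ 2 * d + 2 * a * f) * H.m1
    + (e ^ 3 * f - 2 * d * e - d ^ 3 + c * d ^ 2 * e ^ 2 + 2 * c ^ 2 * e + b * f ^ 2 - 2 * b * d
    - 4 * a * e + 2 * a * b) * H.t3 + (-d * e - 2 * c ^ 2 * e - c ^ 2 * d ^ 2 + 2 * a * e) *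
    H.m2 + (-9) * H.h1

theorem hgg (H : Klein a b c d e f) :
    (gg a b c d e f) * (gg a b c d e f - 7) = XX a b c + XX d e f := by
  simp only [XX, gg]
  linear_combination (b * f ^ 2 - b * d) * H.k2 + (1 + 2 * c * d * e + 2 * b * d * f + 2 * a * e * f) * H.h1 +
    (-d * f - c * d - a * f + a * e ^ 2) * H.k1 + (c * d ^ 2) * H.k3 + (-a * e - a ^ 3) * H.m2 +
    (f ^ 3 - 2 * d * f + d * e ^ 2 + c ^ 3 + b ^ 2 * f ^ 2 - b ^ 2 * d - a * f - a * e ^ 2 - 2 *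
    a * c - a * b * e + a * b ^ 2 + a ^ 2 * d * e) * H.t2 + (-c * d - c ^ 3 - a * f - a * b ^ 2)
    * H.m1 + (-d * e - b * f ^ 2 + b * d + a * e + a * b) * H.t3 + (d ^ 2 * f - c * d ^ 2 + c ^
    2 * d * f + a ^ 2 * c) * H.t1 + (3) * H.h2

theorem gXY (H : Klein a b c d e f) :
    (gg a b c d e f - 7) * XX d e f - gg a b c d e f * XX a b c = XX a b c * XX d e f := by
  simp only [XX, gg]
  linear_combination (-2 * e * f - e ^ 3 + d * f ^ 3 - 5 * d ^ 2 * f - c * e + 2 * c * d ^ 2 - 2 * c ^ 2 * d * f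
    + c ^ 3 * d - 4 * b * f + 2 * b * e ^ 2 + b * d ^ 4 - b * c - b * c ^ 2 * e * f ^ 2 - b * c
    ^ 2 * d ^ 3 + 2 * b ^ 2 * e + b ^ 2 * d ^ 2 + a * e ^ 2 * f ^ 2 + 3 * a * d * f - 3 * a * c
    * f ^ 2 + a * c * e ^ 4 - 4 * a * c * d + 2 * a ^ 2 * f - 3 * a ^ 2 * c - a ^ 3 * e * f ^ 2
    - a ^ 3 * d ^ 3 + a ^ 3 * c * e * f - a ^ 4 * e) * H.t1 + (-7 * f ^ 3 + 8 * d * f - 5 * d *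
    e ^ 2 + d ^ 3 * e + c * d - 2 * c ^ 2 * e ^ 2 + c ^ 2 * d ^ 4 - 5 * c ^ 3 + c ^ 4 * d * e +
    5 * b * d * e + b * d ^ 2 * f ^ 2 - b ^ 2 * f ^ 2 + 4 * b ^ 2 * d - b ^ 3 * e ^ 3 - b ^ 3 *
    d ^ 2 * f - b ^ 4 * f + 3 * a * f + 6 * a * e ^ 2 - a * d ^ 2 * e - a * d ^ 4 + 13 * a * c -
    a * c ^ 2 * d * e + a * b * f ^ 4 + 3 * a * b * e - 4 * a * b * d ^ 2 - 3 * a * b ^ 2 + a *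
    b ^ 3 * d * f - 2 * a ^ 2 * d * e + a ^ 2 * d ^ 3 - a ^ 2 * c * e ^ 3 - a ^ 2 * b * d + a ^
    3 * e + a ^ 3 * d ^ 2) * H.t2 + (e * f ^ 2 + e ^ 3 * f - 5 * d * e - d ^ 3 + c * d ^ 2 * e ^
    2 + 3 * c ^ 2 * e + c ^ 2 * d ^ 2 - c ^ 3 * d * e ^ 2 - c ^ 4 * d + 3 * b * f ^ 2 - b * e ^
    2 * f - 9 * b * d - b * c * e ^ 2 + b * c ^ 2 - b ^ 2 * e * f + b ^ 2 * e ^ 3 - b ^ 2 * c *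
    e + b ^ 3 * f + b ^ 3 * e ^ 2 - 12 * a * e - 2 * a * b - a * b ^ 2 * f ^ 3 + a ^ 2 * f ^ 2)
    * H.t3 + (-10 + c * e * f ^ 2 + c * d * e + c * d ^ 3 - c ^ 3 * e + b * f ^ 3 - b * c ^ 2 *
    f - b ^ 3 * d + a * e ^ 3 - a * b ^ 2 * e - a ^ 2 * c * d - a ^ 3 * f) * H.h1 + (3 * f ^ 3 -
    e ^ 4 * f + 6 * d * f + 3 * d * e ^ 2 - d ^ 5 + 5 * c * d - c ^ 2 * d ^ 2 * e + 3 * a * f -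
    a ^ 2 * e * f ^ 2 - a ^ 3 * e) * H.k1 + (2 - c * d * e + c ^ 3 * e - b * d * f + b * c * f ^
    2 + b * c ^ 2 * f + b ^ 3 * d - a * e * f + a * c * d ^ 2 + a * b * e ^ 2 - a * b ^ 3 + a ^
    3 * f - a ^ 3 * c) * H.h2 + (-d * f ^ 4 + 3 * d ^ 3 + 4 * b * d - b ^ 2 * d ^ 2 * f - b ^ 3
    * f) * H.k2 + (-e * f - 2 * a ^ 2 * f - a ^ 2 * e ^ 2) * H.m3 + (-c ^ 3 * d) * H.k3 + (-d *
    f + 5 * c * d + 2 * c ^ 3 - b ^ 2 * f ^ 2 - 2 * b ^ 2 * d + 6 * a * f + a * b ^ 2) * H.m1 +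
    (-d * e - 2 * c ^ 2 * e - c ^ 2 * d ^ 2 + 6 * a * e + a ^ 3) * H.m2

theorem gsw (H : Klein a b c d e f) : gg d e f a b c = 7 - gg a b c d e f := by
  simp only [gg]
  linear_combination (-d * f) * H.k1 + (a * c * d) * H.t1 + (-c * d - a * f - a * c) * H.t2 + (1) * H.h1

end Klein

def bs (a b c : R) : ℕ → R
  | 0 => 1
  | 1 => s1 a b c
  | 2 => s2 a b c
  | 3 => s3 a b c
  | 4 => s4 a b c
  | 5 => s5 a b c
  | 6 => s6 a b c
  | _ => 0

def cfl : ℕ → ℕ → List (ℤ × ℕ)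
  | 0, 0 => [(1, 0)]
  | 1, 0 => [(-1, 0)]
  | 1, 4 => [(1, 0)]
  | 2, 0 => [(1, 0)]
  | 2, 1 => [(2, 0)]
  | 2, 4 => [(-2, 0)]
  | 2, 5 => [(1, 0)]
  | 3, 0 => [(-7, 0)]
  | 3, 1 => [(-6, 0)]
  | 3, 2 => [(1, 0)]
  | 3, 3 => [(3, 0)]
  | 4, 0 => [(-7, 0), (-4, 1)]
  | 4, 1 => [(2, 0)]
  | 4, 2 => [(2, 0)]
  | 4, 3 => [(-8, 0)]
  | 4, 4 => [(-4, 0)]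
  | 4, 5 => [(-6, 0)]
  | 4, 6 => [(1, 0)]
  | 5, 0 => [(49, 0), (10, 1)]
  | 5, 1 => [(-14, 0), (-1, 1)]
  | 5, 2 => [(-14, 0)]
  | 5, 3 => [(7, 0)]
  | 5, 4 => [(-5, 1)]
  | 6, 0 => [(49, 0)]
  | 6, 1 => [(21, 0), (-9, 1)]
  | 6, 2 => [(21, 0)]
  | 6, 3 => [(-35, 0), (-1, 1)]
  | 6, 4 => [(56, 0), (16, 1)]
  | 6, 5 => [(-14, 0), (-6, 1)]
  | 6, 6 => [(-14, 0)]
  | _, _ => []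

def cf (x : R) (i k : ℕ) : R := ((cfl i k).map fun t => (t.1 : R) * x ^ t.2).sum

set_option maxHeartbeats 1000000 in
theorem xpow (H : Klein a b c d e f) (i : ℕ) (hi : i < 7) :
    (a + b + c - 1) ^ i = ∑ k ∈ Finset.range 7, cf (XX a b c) i k * bs a b c k := by
  have e : a + b + c = s4 a b c := rfl
  have e1 := H.s4s1; have e2 := H.s4s2; have e3 := H.s4s3
  have e4 := H.s4s4; have e5 := H.s4s5; have e6 := H.s4s6
  have p2 : (s4 a b c - 1) ^ 2 = 1 + 2 * s1 a b c - 2 * s4 a b c + s5 a b c := by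
    linear_combination e4
  have p3 : (s4 a b c - 1) ^ 3 = -7 - 6 * s1 a b c + s2 a b c + 3 * s3 a b c := by
    rw [pow_succ, p2]
    linear_combination 2 * e1 - 2 * e4 + e5
  have p4 : (s4 a b c - 1) ^ 4 = -7 - 4 * XX a b c + 2 * s1 a b c + 2 * s2 a b c - 8 * s3 a b c
      - 4 * s4 a b c - 6 * s5 a b c + s6 a b c := by
    rw [pow_succ, p3]
    linear_combination -6 * e1 + e2 + 3 * e3
  have p5 : (s4 a b c - 1) ^ 5 = 49 + 10 * XX a b c - (14 + XX a b c) * s1 a b c - 14 * s2 a b c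
      + 7 * s3 a b c - 5 * XX a b c * s4 a b c := by
    rw [pow_succ, p4]
    linear_combination 2 * e1 + 2 * e2 - 8 * e3 - 4 * e4 - 6 * e5 + e6
  have p6 : (s4 a b c - 1) ^ 6 = 49 + (21 - 9 * XX a b c) * s1 a b c + 21 * s2 a b c
      - (35 + XX a b c) * s3 a b c + (56 + 16 * XX a b c) * s4 a b c
      - (14 + 6 * XX a b c) * s5 a b c - 14 * s6 a b c := by
    rw [pow_succ, p5]
    linear_combination -(14 + XX a b c) * e1 - 14 * e2 + 7 * e3 - 5 * XX a b c * e4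
  rw [e]
  have hh : ∀ i, ∑ k ∈ Finset.range 7, cf (XX a b c) i k * bs a b c k = cf (XX a b c) i 0
      + cf (XX a b c) i 1 * s1 a b c + cf (XX a b c) i 2 * s2 a b c + cf (XX a b c) i 3 * s3 a b c
      + cf (XX a b c) i 4 * s4 a b c + cf (XX a b c) i 5 * s5 a b c
      + cf (XX a b c) i 6 * s6 a b c := by
    intro i
    simp only [Finset.sum_range_succ, Finset.sum_range_zero, bs]
    ring
  rw [hh]
  generalize s1 a b c = z1 at *
  generalize s2 a b c = z2 at *
  generalize s3 a b c = z3 at *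
  generalize s4 a b c = z4 at *
  generalize s5 a b c = z5 at *
  generalize s6 a b c = z6 at *
  generalize XX a b c = z at *
  clear hh e
  interval_cases i <;> simp only [cf, cfl,
    List.map_cons, List.map_nil, List.sum_cons, List.sum_nil] <;> push_cast
  · ring
  · ring
  · rw [p2]; ring
  · rw [p3]; ring
  · rw [p4]; ring
  · rw [p5]; ring
  · rw [p6]; ring

def P7 (x X : R) : R := x ^ 7 + 7 * x ^ 6 + 21 * x ^ 5 + 49 * x ^ 4 + 147 * x ^ 3 + 343 * x ^ 2
  + 343 * x + X * (7 * x ^ 3 + 35 * x ^ 2 + 49 * x) - X ^ 2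

theorem P7_eq (H : Klein a b c d e f) : P7 (a + b + c - 1) (XX a b c) = 0 := by
  have h := xpow H
  have h2 := h 2 (by norm_num)
  have h3 := h 3 (by norm_num)
  have h4 := h 4 (by norm_num)
  have h5 := h 5 (by norm_num)
  have h6 := h 6 (by norm_num)
  have h7 : (a + b + c - 1) ^ 7 = (a + b + c - 1) * (a + b + c - 1) ^ 6 := by ring
  have e : a + b + c = s4 a b c := rfl
  have e1 := H.s4s1; have e2 := H.s4s2; have e3 := H.s4s3
  have e4 := H.s4s4; have e5 := H.s4s5; have e6 := H.s4s6
  rw [P7, h7, h6, h5, h4, h3, h2, e]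
  simp only [Finset.sum_range_succ, Finset.sum_range_zero, cf, bs, cfl,
    List.map_cons, List.map_nil, List.sum_cons, List.sum_nil]
  push_cast
  linear_combination (21 - 9 * XX a b c) * e1 + 21 * e2 - (35 + XX a b c) * e3
    + (56 + 16 * XX a b c) * e4 - (14 + 6 * XX a b c) * e5 - 14 * e6

/-- values of the class-zero part of products -/
def mml : ℕ → ℕ → List (ℤ × ℕ × ℕ × ℕ)
  | 0, 0 => [(1, 0, 0, 0)]
  | 1, 4 => [(4, 0, 0, 0), (-1, 0, 0, 1)]
  | 1, 5 => [(-1, 0, 0, 0)]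
  | 1, 6 => [(-25, 0, 0, 0), (3, 0, 0, 1), (-1, 0, 1, 0), (-1, 1, 0, 0)]
  | 2, 4 => [(13, 0, 0, 0), (-2, 0, 0, 1), (1, 1, 0, 0)]
  | 2, 5 => [(9, 0, 0, 0), (1, 0, 0, 1), (1, 0, 1, 0), (1, 1, 0, 0)]
  | 2, 6 => [(-20, 0, 0, 0), (5, 0, 0, 1), (1, 0, 1, 0), (-1, 1, 0, 0)]
  | 3, 4 => [(-1, 0, 0, 0), (1, 0, 0, 1)]
  | 3, 5 => [(-12, 0, 0, 0), (2, 0, 0, 1), (-1, 1, 0, 0)]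
  | 3, 6 => [(-6, 0, 0, 0), (-5, 0, 0, 1), (2, 0, 1, 0), (-1, 0, 1, 1), (-2, 1, 0, 0)]
  | 4, 1 => [(-3, 0, 0, 0), (1, 0, 0, 1)]
  | 5, 1 => [(-1, 0, 0, 0)]
  | 6, 1 => [(-4, 0, 0, 0), (-3, 0, 0, 1), (-1, 0, 1, 0), (-1, 1, 0, 0)]
  | 4, 2 => [(-1, 0, 0, 0), (2, 0, 0, 1), (1, 0, 1, 0)]
  | 5, 2 => [(16, 0, 0, 0), (-1, 0, 0, 1), (1, 0, 1, 0), (1, 1, 0, 0)]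
  | 6, 2 => [(15, 0, 0, 0), (-5, 0, 0, 1), (-1, 0, 1, 0), (1, 1, 0, 0)]
  | 4, 3 => [(6, 0, 0, 0), (-1, 0, 0, 1)]
  | 5, 3 => [(2, 0, 0, 0), (-2, 0, 0, 1), (-1, 0, 1, 0)]
  | 6, 3 => [(-41, 0, 0, 0), (5, 0, 0, 1), (-2, 0, 1, 0), (-5, 1, 0, 0), (1, 1, 0, 1)]
  | _, _ => []

abbrev PT := ℤ × ℕ × ℕ × ℕ

def addT (t : PT) : List PT → List PT
  | [] => [t]
  | s :: l => if t.2 = s.2 then (t.1 + s.1, s.2) :: l else s :: addT t l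

theorem ev_nil (x y g : R) : ev x y g [] = 0 := rfl

theorem ev_cons (x y g : R) (t : PT) (l : List PT) :
    ev x y g (t :: l) = (t.1 : R) * x ^ t.2.1 * y ^ t.2.2.1 * g ^ t.2.2.2 + ev x y g l := by
  simp [ev]

theorem ev_addT (x y g : R) (t : PT) (l : List PT) : ev x y g (addT t l) = ev x y g (t :: l) := by
  induction l with
  | nil => rfl
  | cons s l ih =>
    rw [addT]
    split_ifs with h
    · rw [ev_cons, ev_cons, ev_cons, h]; push_cast; ring
    · rw [ev_cons, ih, ev_cons, ev_cons, ev_cons]; ring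

theorem ev_norm (x y g : R) (l : List PT) : ev x y g (l.foldr addT []) = ev x y g l := by
  induction l with
  | nil => rfl
  | cons s l ih => rw [List.foldr_cons, ev_addT, ev_cons, ih, ev_cons]

theorem ev_all0 (x y g : R) (l : List PT) (h : ∀ t ∈ l, t.1 = 0) : ev x y g l = 0 := by
  induction l with
  | nil => rfl
  | cons s l ih => rw [ev_cons, ih fun t ht => h t (by simp [ht]), h s (by simp)]; simp

theorem ev_app (x y g : R) (l m : List PT) : ev x y g (l ++ m) = ev x y g l + ev x y g m := by
  simp [ev]

def pm (s t : PT) : PT := (s.1 * t.1, s.2.1 + t.2.1, s.2.2.1 + t.2.2.1, s.2.2.2 + t.2.2.2)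

def pmul (l m : List PT) : List PT := l.flatMap fun s => m.map (pm s)

theorem ev_pm (x y g : R) (s : PT) (m : List PT) : ev x y g (m.map (pm s)) = ev x y g [s] * ev x y g m := by
  induction m with
  | nil => simp [ev_nil]
  | cons t m ih =>
    rw [List.map_cons, ev_cons, ih, ev_cons _ _ _ t, ev_cons, ev_nil, pm]; push_cast; ring

theorem ev_pmul (x y g : R) (l m : List PT) : ev x y g (pmul l m) = ev x y g l * ev x y g m := by
  induction l with
  | nil => simp [pmul, ev_nil]
  | cons s l ih =>
    rw [pmul, List.flatMap_cons, ev_app, ev_pm, ← pmul, ih, ev_cons, ev_cons _ _ _ s, ev_nil]; ring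

theorem ev_flat (x y g : R) (n : ℕ) (F : ℕ → List PT) :
    ev x y g ((List.range n).flatMap F) = ∑ k ∈ Finset.range n, ev x y g (F k) := by
  induction n with
  | zero => rfl
  | succ n ih => rw [List.range_succ, List.flatMap_append, ev_app, ih, Finset.sum_range_succ]; simp

def MM (x y g : R) (k l : ℕ) : R := ev x y g (mml k l)

def cX (i k : ℕ) : List PT := (cfl i k).map fun t => (t.1, t.2, 0, 0)
def cY (i k : ℕ) : List PT := (cfl i k).map fun t => (t.1, 0, t.2, 0)

theorem ev_cX (x y g : R) (i k : ℕ) : ev x y g (cX i k) = cf x i k := by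
  simp [ev, cX, cf, Function.comp_def]

theorem ev_cY (x y g : R) (i k : ℕ) : ev x y g (cY i k) = cf y i k := by
  simp [ev, cY, cf, Function.comp_def]

def big (i j : ℕ) : List PT :=
  ((List.range 7).flatMap fun k => (List.range 7).flatMap fun l =>
    pmul (pmul (cX i k) (cY j l)) (mml k l)) ++ pmul [(-1, 0, 0, 0)] (tab i j)
      ++ if i = 4 ∧ j = 4 then [(-8, 0, 1, 1), (8, 1, 0, 1), (56, 0, 1, 0), (8, 1, 1, 0)] else []

theorem big_ok : ∀ i < 7, ∀ j < 7, ∀ t ∈ (big i j).foldr addT [], t.1 = 0 := by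
  decide +kernel

theorem tab_eq (x y g : R) (h : g * (y - x) = 7 * y + x * y) (i j : ℕ) (hi : i < 7) (hj : j < 7) :
    ∑ k ∈ Finset.range 7, ∑ l ∈ Finset.range 7, cf x i k * cf y j l * MM x y g k l
      = ev x y g (tab i j) := by
  have h1 := ev_all0 x y g _ (big_ok i hi j hj)
  rw [ev_norm, big, ev_app, ev_app, ev_flat] at h1
  simp only [ev_flat, ev_pmul, ev_cX, ev_cY] at h1
  have h2 : ev x y g (if i = 4 ∧ j = 4 then
      [((-8 : ℤ), 0, 1, 1), (8, 1, 0, 1), (56, 0, 1, 0), (8, 1, 1, 0)] else []) = 0 := by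
    split_ifs
    · simp only [ev_cons, ev_nil]; push_cast; linear_combination -8 * h
    · rfl
  rw [h2, ev_cons, ev_nil] at h1
  push_cast at h1
  simp only [MM]
  linear_combination h1

end alg

section infra
variable {K : Type*} [CommRing K]

theorem coeff_mul_zero (f g : LaurentSeries K) (n : ℤ)
    (h : ∀ i j : ℤ, i + j = n → f.coeff i = 0 ∨ g.coeff j = 0) : (f * g).coeff n = 0 := by
  rw [HahnSeries.coeff_mul]
  refine Finset.sum_eq_zero fun ij hij => ?_
  rw [Finset.mem_antidiagonal] at hij
  rcases h ij.1 ij.2 hij.2.2 with h | h <;> simp [h]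

/-- series starting at degree `M` -/
def IM (M : ℤ) : AddSubgroup (LaurentSeries K) where
  carrier := {f | ∀ i < M, f.coeff i = 0}
  add_mem' := fun {f g} hf hg i hi => by simp [hf i hi, hg i hi]
  zero_mem' := fun i _ => by simp
  neg_mem' := fun {f} hf i hi => by simp [hf i hi]

theorem IM_mul {M N : ℤ} {f g : LaurentSeries K} (hf : f ∈ IM M) (hg : g ∈ IM N) :
    f * g ∈ IM (M + N) := fun i hi => by
  apply coeff_mul_zero
  intro a b hab
  by_cases h : a < M
  · exact Or.inl (hf a h)
  · exact Or.inr (hg b (by omega))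

theorem IM_mono {M N : ℤ} (h : N ≤ M) {f : LaurentSeries K} (hf : f ∈ IM M) : f ∈ IM N :=
  fun i hi => hf i (by omega)

theorem IM_eq {f g : LaurentSeries K} (h : ∀ M : ℕ, f - g ∈ IM (M : ℤ)) : f = g := by
  ext i
  have := h (i.toNat + 1) i (by omega)
  simpa [sub_eq_zero] using this

theorem IM_one : (1 : LaurentSeries K) ∈ IM 0 := fun i hi => by
  rw [HahnSeries.coeff_one, if_neg (by omega)]

theorem IM_pow {f : LaurentSeries K} (hf : f ∈ IM 0) (n : ℕ) : f ^ n ∈ IM 0 := by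
  induction n with
  | zero => simpa using IM_one
  | succ n ih => rw [pow_succ]; simpa using IM_mul ih hf

theorem IM_prod {ι : Type*} (s : Finset ι) (f : ι → LaurentSeries K) (hf : ∀ i ∈ s, f i ∈ IM 0) :
    ∏ i ∈ s, f i ∈ IM 0 := by
  classical
  induction s using Finset.induction with
  | empty => simpa using IM_one
  | insert a s ha ih =>
    rw [Finset.prod_insert ha]
    simpa using IM_mul (hf a (by simp)) (ih fun i hi => hf i (by simp [hi]))

/-- congruence modulo degree `M` between series without polar part -/
structure Cg (M : ℤ) (f g : LaurentSeries K) : Prop where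
  l : f ∈ IM 0
  r : g ∈ IM 0
  s : f - g ∈ IM M

theorem Cg.rfl' {M : ℤ} {f : LaurentSeries K} (h : f ∈ IM 0) : Cg M f f :=
  ⟨h, h, by simp [zero_mem]⟩

theorem Cg.symm {M : ℤ} {f g : LaurentSeries K} (h : Cg M f g) : Cg M g f :=
  ⟨h.r, h.l, by simpa using neg_mem h.s⟩

theorem Cg.trans {M : ℤ} {f g k : LaurentSeries K} (h : Cg M f g) (h' : Cg M g k) : Cg M f k :=
  ⟨h.l, h'.r, by simpa using add_mem h.s h'.s⟩

theorem Cg.mul {M : ℤ} {f g f' g' : LaurentSeries K} (h : Cg M f g) (h' : Cg M f' g') :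
    Cg M (f * f') (g * g') := by
  refine ⟨by simpa using IM_mul h.l h'.l, by simpa using IM_mul h.r h'.r, ?_⟩
  rw [show f * f' - g * g' = (f - g) * f' + g * (f' - g') by ring]
  have h1 := IM_mul h.s h'.l
  have h2 := IM_mul h.r h'.s
  rw [add_zero] at h1
  rw [zero_add] at h2
  exact add_mem h1 h2

theorem Cg.pow {M : ℤ} {f g : LaurentSeries K} (h : Cg M f g) (n : ℕ) : Cg M (f ^ n) (g ^ n) := by
  induction n with
  | zero => simpa using Cg.rfl' IM_one
  | succ n ih => rw [pow_succ, pow_succ]; exact ih.mul h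

theorem Cg.prod {M : ℤ} (s : Finset ℕ) (f g : ℕ → LaurentSeries K) (h : ∀ i ∈ s, Cg M (f i) (g i)) :
    Cg M (∏ i ∈ s, f i) (∏ i ∈ s, g i) := by
  induction s using Finset.induction with
  | empty => simpa using Cg.rfl' IM_one
  | insert a s ha ih =>
    rw [Finset.prod_insert ha, Finset.prod_insert ha]
    exact (h a (by simp)).mul (ih fun i hi => h i (by simp [hi]))

theorem Cg.sum {ι : Type*} {M : ℤ} (s : Finset ι) (f g : ι → LaurentSeries K)
    (h : ∀ i ∈ s, Cg M (f i) (g i)) : Cg M (∑ i ∈ s, f i) (∑ i ∈ s, g i) := by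
  refine ⟨sum_mem fun i hi => (h i hi).l, sum_mem fun i hi => (h i hi).r, ?_⟩
  rw [← Finset.sum_sub_distrib]
  exact sum_mem fun i hi => (h i hi).s

theorem Cg.eq {f g : LaurentSeries K} (h : ∀ M : ℕ, Cg (M : ℤ) f g) : f = g :=
  IM_eq fun M => (h M).s

/-- monomials -/
def qz (n : ℤ) : LaurentSeries K := HahnSeries.single n 1

theorem qz_mul (m n : ℤ) : (qz m * qz n : LaurentSeries K) = qz (m + n) := by
  simp [qz]

theorem qz_zero : (qz 0 : LaurentSeries K) = 1 := rfl

theorem qz_pow (m : ℤ) (n : ℕ) : (qz m ^ n : LaurentSeries K) = qz (m * n) := by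
  induction n with
  | zero => simp [qz_zero]
  | succ n ih => rw [pow_succ, ih, qz_mul]; congr 1; push_cast; ring

theorem coeff_qz (m n : ℤ) : (qz m : LaurentSeries K).coeff n = if n = m then 1 else 0 := by
  simp [qz, HahnSeries.coeff_single]

theorem coeff_qz_mul (m n : ℤ) (f : LaurentSeries K) : (qz m * f).coeff n = f.coeff (n - m) := by
  simp [qz, HahnSeries.coeff_single_mul]

theorem qz_mem {M m : ℤ} (h : M ≤ m) : (qz m : LaurentSeries K) ∈ IM M := fun i hi => by
  rw [coeff_qz, if_neg (by omega)]

def qu : (LaurentSeries K)ˣ :=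
  ⟨qz 1, qz (-1), by simp [qz_mul, qz_zero], by simp [qz_mul, qz_zero]⟩

theorem qu_zpow (n : ℤ) : ((qu ^ n : (LaurentSeries K)ˣ) : LaurentSeries K) = qz n := by
  have h : ∀ n : ℕ, ((qu ^ n : (LaurentSeries K)ˣ) : LaurentSeries K) = qz n := fun n => by
    rw [Units.val_pow_eq_pow_val]
    simp [qu, qz_pow]
  have h' : ∀ n : ℕ, (((qu ^ n)⁻¹ : (LaurentSeries K)ˣ) : LaurentSeries K) = qz (-n) := fun n => by
    rw [← inv_pow, Units.val_pow_eq_pow_val]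
    simp [qu, qz_pow]
  obtain ⟨m, rfl | rfl⟩ := n.eq_nat_or_neg
  · rw [zpow_natCast, h]
  · rw [zpow_neg, zpow_natCast, h']

/-- coefficient of a product, when the constant terms are the lowest ones -/
theorem IM_c0 {M N : ℤ} {f g : LaurentSeries K} (hf : f ∈ IM M) (hg : g ∈ IM N) :
    (f * g).coeff (M + N) = f.coeff M * g.coeff N := by
  have h1 : f - HahnSeries.C (f.coeff M) * qz M ∈ IM (M + 1) := fun i hi => by
    rw [HahnSeries.coeff_sub, HahnSeries.C_apply, HahnSeries.coeff_single_zero_mul, coeff_qz]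
    split_ifs with h
    · simp [h]
    · rw [hf i (by omega)]; simp
  have h2 := IM_mul h1 hg (M + N) (by omega)
  rw [sub_mul, HahnSeries.coeff_sub, sub_eq_zero] at h2
  rw [h2, mul_assoc, HahnSeries.C_apply, HahnSeries.coeff_single_zero_mul, coeff_qz_mul]
  simp

theorem mulb_le (b : ℕ) (hb : 0 < b) (x y : ℤ) : (b : ℤ) * x ≤ b * y ↔ x ≤ y := by
  have : (0 : ℤ) < b := by omega
  exact ⟨fun h => le_of_mul_le_mul_left h this, fun h => mul_le_mul_of_nonneg_left h this.le⟩

/-- substitution `q -> q^b` -/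
def Vb (b : ℕ) (hb : 0 < b) : LaurentSeries K →+* LaurentSeries K :=
  HahnSeries.embDomainRingHom (AddMonoidHom.mulLeft (b : ℤ))
    (fun x y h => by simpa [hb.ne'] using h) (fun x y => mulb_le b hb x y)

theorem Vb_coeff (b : ℕ) (hb : 0 < b) (f : LaurentSeries K) (n : ℤ) :
    (Vb b hb f).coeff (b * n) = f.coeff n := by
  have := HahnSeries.embDomain_coeff (f := ⟨⟨AddMonoidHom.mulLeft (b : ℤ), fun x y h => by
    simpa [hb.ne'] using h⟩, fun {x y} => mulb_le b hb x y⟩) (x := f) (a := n)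
  exact this

theorem Vb_coeff0 (b : ℕ) (hb : 0 < b) (f : LaurentSeries K) (n : ℤ) (h : ¬ (b : ℤ) ∣ n) :
    (Vb b hb f).coeff n = 0 := by
  apply HahnSeries.embDomain_of_notMem_range
  rintro ⟨m, hm⟩
  exact h ⟨m, hm.symm⟩

theorem Vb_inj (b : ℕ) (hb : 0 < b) : Function.Injective (Vb b hb : LaurentSeries K →+* _) := by
  intro f g h
  ext n
  rw [← Vb_coeff b hb f, h, Vb_coeff]

theorem Vb_qz (b : ℕ) (hb : 0 < b) (m : ℤ) : Vb b hb (qz m : LaurentSeries K) = qz (b * m) := by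
  ext n
  by_cases h : (b : ℤ) ∣ n
  · obtain ⟨k, rfl⟩ := h
    rw [Vb_coeff, coeff_qz, coeff_qz]
    simp [hb.ne']
  · rw [Vb_coeff0 b hb _ _ h, coeff_qz, if_neg]
    rintro rfl
    exact h (dvd_mul_right _ _)

theorem Vb_IM (b : ℕ) (hb : 0 < b) (M : ℤ) (f : LaurentSeries K) (hf : f ∈ IM M) :
    Vb b hb f ∈ IM (b * M) := fun i hi => by
  by_cases h : (b : ℤ) ∣ i
  · obtain ⟨k, rfl⟩ := h
    rw [Vb_coeff]
    exact hf k (lt_of_mul_lt_mul_left hi (by omega))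
  · exact Vb_coeff0 b hb _ _ h

theorem Vb_Cg (b : ℕ) (hb : 0 < b) (M : ℕ) (f g : LaurentSeries K) (h : Cg (M : ℤ) f g) :
    Cg (M : ℤ) (Vb b hb f) (Vb b hb g) := by
  refine ⟨by simpa using Vb_IM b hb 0 _ h.l, by simpa using Vb_IM b hb 0 _ h.r, ?_⟩
  rw [← map_sub]
  exact IM_mono (by nlinarith) (Vb_IM b hb _ _ h.s)

/-- partial products -/
def poc (b : ℤ) (n : ℕ) : LaurentSeries K := ∏ k ∈ Finset.range n, (1 - qz (b * (k + 1)))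

theorem poc_mem (b : ℕ) (n : ℕ) : (poc b n : LaurentSeries K) ∈ IM 0 :=
  IM_prod _ _ fun i _ => sub_mem IM_one (qz_mem (by positivity))

theorem poc_Cg (b : ℕ) (hb : 0 < b) (M n m : ℕ) (h1 : M ≤ n + 1) (h2 : n ≤ m) :
    Cg (M : ℤ) (poc b n : LaurentSeries K) (poc b m) := by
  obtain ⟨k, rfl⟩ := Nat.exists_eq_add_of_le h2
  clear h2
  induction k with
  | zero => exact Cg.rfl' (poc_mem _ _)
  | succ k ih =>
    refine ih.trans ⟨poc_mem _ _, poc_mem _ _, ?_⟩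
    rw [← add_assoc, poc, poc, Finset.prod_range_succ, ← poc, mul_sub, mul_one, sub_sub_cancel]
    have := IM_mul (poc_mem b (n + k) (K := K))
      (qz_mem (K := K) (M := M) (m := b * (((n + k : ℕ) : ℤ) + 1)) (by push_cast; nlinarith))
    simpa using this

end infra

def jj (b : ℕ) : LaurentSeries ℤ := HahnSeries.ofPowerSeries ℤ ℤ (J b)

theorem ofPS_mem (f : PowerSeries ℤ) : HahnSeries.ofPowerSeries ℤ ℤ f ∈ IM 0 := fun i hi => by
  rw [HahnSeries.ofPowerSeries_apply]
  apply HahnSeries.embDomain_of_notMem_range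
  rintro ⟨m, hm⟩
  simp at hm
  omega

theorem poc_eq (b n : ℕ) : poc (b : ℤ) n = HahnSeries.ofPowerSeries ℤ ℤ
    (∏ k ∈ Finset.range n, (1 - (PowerSeries.X : PowerSeries ℤ) ^ (b * (k + 1)))) := by
  rw [map_prod]
  refine Finset.prod_congr rfl fun k _ => ?_
  rw [map_sub, map_one, HahnSeries.ofPowerSeries_X_pow, qz]
  congr 2

theorem jj_Cg (b : ℕ) (hb : 0 < b) (M n : ℕ) (h : M ≤ n) : Cg (M : ℤ) (jj b) (poc b n) := by
  refine ⟨ofPS_mem _, poc_mem _ _, fun i hi => ?_⟩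
  by_cases h0 : i < 0
  · rw [HahnSeries.coeff_sub, jj, ofPS_mem _ i h0, poc_mem b n i h0, sub_zero]
  obtain ⟨k, rfl⟩ := Int.eq_ofNat_of_zero_le (not_lt.1 h0)
  have h1 : (jj b).coeff (k : ℤ) = (poc (b : ℤ) (k + 1) : LaurentSeries ℤ).coeff (k : ℤ) := by
    rw [poc_eq, jj, HahnSeries.ofPowerSeries_apply_coeff, HahnSeries.ofPowerSeries_apply_coeff, J,
      PowerSeries.coeff_mk]
  have h2 := (poc_Cg (K := ℤ) b hb (k + 1) (k + 1) n (by omega) (by omega)).s k (by push_cast; omega)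
  rw [HahnSeries.coeff_sub, h1, ← HahnSeries.coeff_sub, h2]

theorem Vb_poc {K : Type*} [CommRing K] (b : ℕ) (hb : 0 < b) (c : ℤ) (n : ℕ) :
    Vb b hb (poc c n : LaurentSeries K) = poc (b * c) n := by
  rw [poc, map_prod]
  refine Finset.prod_congr rfl fun k _ => ?_
  rw [map_sub, map_one, Vb_qz, mul_assoc]

theorem Vb_jj (b : ℕ) (hb : 0 < b) (c : ℕ) (hc : 0 < c) : Vb b hb (jj c) = jj (b * c) := by
  refine Cg.eq fun M => ?_
  have h1 := Vb_Cg b hb M _ _ (jj_Cg c hc M M le_rfl)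
  rw [Vb_poc] at h1
  have h2 := jj_Cg (b * c) (by positivity) M M le_rfl
  push_cast at h2
  exact h1.trans h2.symm

theorem jj_unit (b : ℕ) (hb : 0 < b) : IsUnit (J b) := by
  rw [PowerSeries.isUnit_iff_constantCoeff, ← PowerSeries.coeff_zero_eq_constantCoeff_apply, J,
    PowerSeries.coeff_mk]
  simp [hb.ne']

def ju (b : ℕ) (hb : 0 < b) : (LaurentSeries ℤ)ˣ :=
  Units.map (HahnSeries.ofPowerSeries ℤ ℤ).toMonoidHom (jj_unit b hb).unit

theorem ju_val (b : ℕ) (hb : 0 < b) : ((ju b hb : (LaurentSeries ℤ)ˣ) : LaurentSeries ℤ) = jj b := rfl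

theorem ju_inv_mem (b : ℕ) (hb : 0 < b) :
    (((ju b hb)⁻¹ : (LaurentSeries ℤ)ˣ) : LaurentSeries ℤ) ∈ IM 0 := ofPS_mem _

def sgn (k : ℤ) : ℤ := ((k.negOnePow : ℤˣ) : ℤ)

theorem sgn_succ (k : ℤ) : sgn (k + 1) = - sgn k := by
  simp [sgn, Int.negOnePow_succ]

theorem sgn_zero : sgn 0 = 1 := by simp [sgn]

theorem poc_isUnit (b : ℕ) (hb : 0 < b) (n : ℕ) : IsUnit
    (∏ k ∈ Finset.range n, (1 - (PowerSeries.X : PowerSeries ℤ) ^ (b * (k + 1)))) := by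
  rw [PowerSeries.isUnit_iff_constantCoeff, map_prod]
  simp [hb.ne']

def ri (b : ℕ) (hb : 0 < b) (n : ℕ) : LaurentSeries ℤ :=
  HahnSeries.ofPowerSeries ℤ ℤ (((poc_isUnit b hb n).unit⁻¹ : (PowerSeries ℤ)ˣ) : PowerSeries ℤ)

theorem ri_mul (b : ℕ) (hb : 0 < b) (n : ℕ) : poc b n * ri b hb n = 1 := by
  rw [poc_eq, ri, ← map_mul, IsUnit.mul_val_inv, map_one]

def rr (b : ℕ) (hb : 0 < b) (m : ℤ) : LaurentSeries ℤ := if 0 ≤ m then ri b hb m.toNat else 0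

theorem rr_mem (b : ℕ) (hb : 0 < b) (m : ℤ) : rr b hb m ∈ IM 0 := by
  rw [rr]
  split_ifs
  · exact ofPS_mem _
  · exact zero_mem _

theorem rr_neg (b : ℕ) (hb : 0 < b) (m : ℤ) (h : m < 0) : rr b hb m = 0 := if_neg (by omega)

theorem rr_zero (b : ℕ) (hb : 0 < b) : rr b hb 0 = 1 := by
  have := ri_mul b hb 0
  simpa [rr, poc] using this

theorem rr_nat (b : ℕ) (hb : 0 < b) (n : ℕ) : poc b n * rr b hb n = 1 := by
  simpa [rr] using ri_mul b hb n

theorem rr_rec (b : ℕ) (hb : 0 < b) (m : ℤ) :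
    rr b hb (m - 1) = (1 - qz (b * m)) * rr b hb m := by
  rcases lt_trichotomy m 0 with h | rfl | h
  · rw [rr_neg _ _ _ h, rr_neg _ _ _ (by omega), mul_zero]
  · rw [rr_neg _ _ _ (by omega), mul_zero, qz_zero, sub_self, zero_mul]
  · obtain ⟨n, rfl⟩ : ∃ n : ℕ, m = n + 1 := ⟨(m - 1).toNat, by omega⟩
    rw [add_sub_cancel_right]
    have h1 := rr_nat b hb n
    have h2 := rr_nat b hb (n + 1)
    rw [poc, Finset.prod_range_succ, ← poc] at h2
    push_cast at h2
    linear_combination rr b hb n * (h2 * (-1)) + (1 - qz (b * (n + 1))) * rr b hb (n + 1) * h1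

theorem theta_alg {R : Type*} [CommRing R] (a b a' b' Q w1 wm w0 r0 r1 r2 s0 s1 s2 : R)
    (h1 : r1 = (1 - a) * r0) (h2 : r2 = (1 - a') * r1) (h3 : s1 = (1 - b) * s0)
    (h4 : s2 = (1 - b') * s1) (hQm : Q * wm = - w0 * a) (hQ1 : Q * w1 = - w0 * b)
    (hQ : Q * Q = a * b') (hQ' : a' * b = a * b') :
    (1 - Q ^ 2) * (1 - a * b) * (w0 * r0 * s0) = (1 + Q ^ 2) * (w0 * r1 * s1)
      - Q * (wm * r0 * s2 + w1 * r2 * s0) := by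
  have e : Q * (wm * r0 * s2 + w1 * r2 * s0) = -w0 * a * (r0 * s2) - w0 * b * (r2 * s0) := by
    linear_combination r0 * s2 * hQm + r2 * s0 * hQ1
  rw [e, h4, h2, h1, h3, show Q ^ 2 = a * b' by rw [sq, hQ]]
  linear_combination (w0 * r0 * s0 * (1 - a)) * hQ'

section
variable (b δ : ℕ) (hb : 0 < b) (e : ℤ → ℤ)

def cc (n : ℕ) (k : ℤ) : LaurentSeries ℤ :=
  (sgn k : LaurentSeries ℤ) * qz (e k) * rr b hb (n - k) * rr b hb (n + δ + k)

theorem cc_rec (hd : b * (1 + δ) = 2) (he : ∀ k, e (k + 1) = e k + 1 + b * k) (n : ℕ) (k : ℤ) :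
    (1 - qz (1 + b * n) ^ 2) * (1 - qz (b * (2 * n + 2 + δ))) * cc b δ hb e (n + 1) k =
      (1 + qz (1 + b * n) ^ 2) * cc b δ hb e n k
      - qz (1 + b * n) * (cc b δ hb e n (k - 1) + cc b δ hb e n (k + 1)) := by
  have hd' : (b : ℤ) * (1 + δ) = 2 := by exact_mod_cast hd
  have he1 := he (k - 1)
  rw [sub_add_cancel] at he1
  have hs1 := sgn_succ (k - 1)
  rw [sub_add_cancel] at hs1
  have r1 := rr_rec b hb (n + 1 - k)
  have r2 := rr_rec b hb (n - k)
  have r3 := rr_rec b hb (n + 1 + δ + k)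
  have r4 := rr_rec b hb (n + δ + k)
  rw [show (n + 1 - k - 1 : ℤ) = n - k by ring] at r1
  rw [show (n + 1 + δ + k - 1 : ℤ) = n + δ + k by ring] at r3
  have := theta_alg _ _ _ _ (qz (1 + b * n)) ((sgn (k + 1) : LaurentSeries ℤ) * qz (e (k + 1)))
    ((sgn (k - 1) : LaurentSeries ℤ) * qz (e (k - 1))) ((sgn k : LaurentSeries ℤ) * qz (e k))
    _ _ _ _ _ _ r1 r2 r3 r4 ?_ ?_ ?_ ?_
  · rw [qz_mul, show (b : ℤ) * (n + 1 - k) + b * (n + 1 + δ + k) = b * (2 * n + 2 + δ) by ring] at this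
    simp only [cc]
    push_cast
    rw [show (n - (k - 1) : ℤ) = n + 1 - k by ring, show (n - (k + 1) : ℤ) = n - k - 1 by ring,
      show (n + δ + (k - 1) : ℤ) = n + δ + k - 1 by ring,
      show (n + δ + (k + 1) : ℤ) = n + 1 + δ + k by ring]
    simp only [← mul_assoc] at this ⊢
    exact this
  · rw [hs1, neg_mul, mul_assoc, qz_mul, mul_left_comm, qz_mul]
    push_cast
    rw [neg_mul, neg_neg]
    congr 2
    rw [he1]; ring
  · rw [sgn_succ, neg_mul, mul_assoc, qz_mul, mul_left_comm, qz_mul, he]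
    push_cast
    rw [neg_mul]
    congr 3
    linear_combination (-1) * hd'
  · rw [qz_mul, qz_mul]
    congr 1
    linear_combination (-1) * hd'
  · rw [qz_mul, qz_mul]
    congr 1
    ring

variable (hh : ℤ → ℤ)

def GG (n : ℕ) : LaurentSeries ℤ := ∑ᶠ k : ℤ, (hh k : LaurentSeries ℤ) * cc b δ hb e n k

theorem cc_zero (n : ℕ) (k : ℤ) (h : n < k ∨ k < - (n + δ)) : cc b δ hb e n k = 0 := by
  rw [cc]
  rcases h with h | h
  · rw [rr_neg _ _ (n - k) (by omega)]; simp
  · rw [rr_neg _ _ (n + δ + k) (by omega)]; simp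

theorem cc_fin (n : ℕ) (t : ℤ) (g : ℤ → LaurentSeries ℤ) :
    (Function.support fun k => g k * cc b δ hb e n (k + t)).Finite := by
  refine (Set.finite_Icc (-(n + δ) - t : ℤ) (n - t)).subset fun k hk => ?_
  by_contra h
  apply hk
  simp only [Set.mem_Icc, not_and_or, not_le] at h
  beta_reduce
  rw [cc_zero, mul_zero]
  omega

theorem GG_shift (n : ℕ) (t : ℤ) (g : ℤ → LaurentSeries ℤ) :
    ∑ᶠ k, g k * cc b δ hb e n (k + t) = ∑ᶠ k, g (k - t) * cc b δ hb e n k := by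
  rw [← finsum_comp_equiv (Equiv.addRight t) (f := fun k => g (k - t) * cc b δ hb e n k)]
  simp

theorem GG_rec (hd : b * (1 + δ) = 2) (he : ∀ k, e (k + 1) = e k + 1 + b * k)
    (hl : ∀ k, hh (k + 1) + hh (k - 1) = 2 * hh k) (n : ℕ) :
    (1 - qz (1 + b * n) ^ 2) * (1 - qz (b * (2 * n + 2 + δ))) * GG b δ hb e hh (n + 1) =
      (1 - qz (1 + b * n)) ^ 2 * GG b δ hb e hh n := by
  have F := cc_fin b δ hb e n
  have F1 := cc_fin b δ hb e (n + 1) 0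
  simp only [add_zero] at F1
  have F0 := fun g => F 0 g
  simp only [add_zero] at F0
  set Q := (qz (1 + b * n) : LaurentSeries ℤ)
  rw [GG, mul_finsum' _ _ (F1 _)]
  rw [show (∑ᶠ k, (1 - Q ^ 2) * (1 - qz (b * (2 * n + 2 + δ))) *
      ((hh k : LaurentSeries ℤ) * cc b δ hb e (n + 1) k)) =
    ∑ᶠ k, (((1 + Q ^ 2) * hh k) * cc b δ hb e n k - ((Q * hh k) * cc b δ hb e n (k + (-1))
      + (Q * hh k) * cc b δ hb e n (k + 1))) from finsum_congr fun k => by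
      have := cc_rec b δ hb e hd he n k
      rw [← sub_eq_add_neg]
      linear_combination (hh k : LaurentSeries ℤ) * this]
  rw [finsum_sub_distrib (F0 _) (((F (-1) _).union (F 1 _)).subset (Function.support_add _ _)),
    finsum_add_distrib (F (-1) _) (F 1 _), GG_shift, GG_shift,
    ← finsum_add_distrib (F0 _) (F0 _), ← finsum_sub_distrib (F0 _)
      (((F0 _).union (F0 _)).subset (Function.support_add _ _)), GG, mul_finsum' _ _ (F0 _)]
  refine finsum_congr fun k => ?_
  have h1 := congrArg (Int.cast : ℤ → LaurentSeries ℤ) (hl k)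
  push_cast at h1
  rw [sub_neg_eq_add]
  linear_combination (-Q * cc b δ hb e n k) * h1

def od (n : ℕ) : LaurentSeries ℤ := ∏ j ∈ Finset.range n, (1 - qz (1 + b * j))

theorem GG_prod (hd : b * (1 + δ) = 2) (he : ∀ k, e (k + 1) = e k + 1 + b * k)
    (hl : ∀ k, hh (k + 1) + hh (k - 1) = 2 * hh k) (n : ℕ) :
    poc b (2 * n + δ) * GG b δ hb e hh n = poc b δ * GG b δ hb e hh 0 * od b n ^ 2 := by
  have hd' : (b : ℤ) * (1 + δ) = 2 := by exact_mod_cast hd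
  induction n with
  | zero => simp [od]
  | succ n ih =>
    have h := GG_rec b δ hb e hh hd he hl n
    rw [od, Finset.prod_range_succ, ← od, mul_pow, ← mul_assoc, ← ih,
      show 2 * (n + 1) + δ = 2 * n + δ + 1 + 1 by ring, poc, Finset.prod_range_succ,
      Finset.prod_range_succ, ← poc]
    rw [qz_pow, show ((1 + b * n : ℤ) * ((2 : ℕ) : ℤ)) = b * (2 * n + δ + 1) by
      push_cast; linear_combination (-1) * hd'] at h
    push_cast
    rw [show ((2 : ℤ) * n + δ + 1 + 1) = 2 * n + 2 + δ by ring]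
    linear_combination poc b (2 * n + δ) * h
end

structure Gr (e : ℤ → ℤ) : Prop where
  nn : ∀ k, 0 ≤ e k
  gr : ∀ k, |k| ≤ e k + 1

def th (e h : ℤ → ℤ) : LaurentSeries ℤ := HahnSeries.ofPowerSeries ℤ ℤ (PowerSeries.mk fun n =>
  ∑ k ∈ Finset.Icc (-((n : ℤ) + 1)) (n + 1), if e k = n then h k else 0)

theorem sum_ite_eq' (e h : ℤ → ℤ) (n : ℤ) (s s' : Finset ℤ) (hs : ∀ k, e k = n → k ∈ s)
    (hs' : ∀ k, e k = n → k ∈ s') :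
    (∑ k ∈ s, if e k = n then h k else 0) = ∑ k ∈ s', if e k = n then h k else 0 := by
  rw [← Finset.sum_filter, ← Finset.sum_filter]
  refine Finset.sum_congr ?_ fun _ _ => rfl
  ext k
  simp only [Finset.mem_filter]
  exact ⟨fun h => ⟨hs' k h.2, h.2⟩, fun h => ⟨hs k h.2, h.2⟩⟩

theorem th_coeff {e : ℤ → ℤ} (he : Gr e) (h : ℤ → ℤ) (n : ℤ) (s : Finset ℤ)
    (hs : ∀ k, e k = n → k ∈ s) :
    (th e h).coeff n = ∑ k ∈ s, if e k = n then h k else 0 := by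
  by_cases h0 : n < 0
  · rw [th, ofPS_mem _ n h0]
    refine (Finset.sum_eq_zero fun k _ => if_neg fun hk => ?_).symm
    have := he.nn k
    omega
  · obtain ⟨m, rfl⟩ := Int.eq_ofNat_of_zero_le (not_lt.1 h0)
    rw [th, HahnSeries.ofPowerSeries_apply_coeff, PowerSeries.coeff_mk]
    refine sum_ite_eq' _ _ _ _ _ (fun k hk => ?_) hs
    have := abs_le.1 (he.gr k)
    rw [Finset.mem_Icc]
    omega

theorem coeff_int_mul (z : ℤ) (f : LaurentSeries ℤ) (n : ℤ) :
    ((z : LaurentSeries ℤ) * f).coeff n = z * f.coeff n := by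
  rw [← zsmul_eq_mul, HahnSeries.coeff_smul, smul_eq_mul]

theorem th_Cg {e : ℤ → ℤ} (he : Gr e) (h : ℤ → ℤ) (M : ℕ) (s : Finset ℤ)
    (hs : ∀ k, e k < M → k ∈ s) :
    Cg (M : ℤ) (th e h) (∑ k ∈ s, (h k : LaurentSeries ℤ) * qz (e k)) := by
  refine ⟨ofPS_mem _, sum_mem fun k _ => ?_, fun i hi => ?_⟩
  · rw [← zsmul_eq_mul]
    exact zsmul_mem (qz_mem (he.nn k)) _
  · rw [HahnSeries.coeff_sub, th_coeff he h i s fun k hk => hs k (by omega), HahnSeries.coeff_sum,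
      sub_eq_zero]
    refine Finset.sum_congr rfl fun k _ => ?_
    rw [coeff_int_mul, coeff_qz]
    simp [eq_comm]

theorem theta_lim (b δ : ℕ) (hb : 0 < b) (e : ℤ → ℤ) (hh : ℤ → ℤ) (hd : b * (1 + δ) = 2)
    (he : ∀ k, e (k + 1) = e k + 1 + b * k) (hl : ∀ k, hh (k + 1) + hh (k - 1) = 2 * hh k)
    (G : Gr e) (M : ℕ) : Cg (M : ℤ) (th e fun k => hh k * sgn k)
      (jj b * (poc b δ * GG b δ hb e hh 0 * od b (2 * M) ^ 2)) := by
  have hd1 : δ ≤ 1 := by nlinarith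
  have hj : ∀ m : ℤ, M ≤ m → Cg (M : ℤ) (jj b * rr b hb m) 1 := fun m hm => by
    obtain ⟨n, rfl⟩ := Int.eq_ofNat_of_zero_le (show 0 ≤ m by omega)
    rw [← rr_nat b hb n]
    exact (jj_Cg b hb M n (by exact_mod_cast hm)).mul (Cg.rfl' (rr_mem _ _ _))
  rw [← GG_prod b δ hb e hh hd he hl, GG]
  rw [finsum_eq_sum_of_support_subset (s := Finset.Icc (-(2 * M + 1 : ℤ)) (2 * M + 1)), Finset.mul_sum,
    Finset.mul_sum]
  · refine (th_Cg G _ M (Finset.Icc (-(2 * M + 1 : ℤ)) (2 * M + 1)) fun k hk => ?_).trans ?_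
    · have := abs_le.1 (G.gr k)
      rw [Finset.mem_Icc]; omega
    · refine Cg.sum _ _ _ fun k hk => ?_
      have hw : ((hh k * sgn k : ℤ) : LaurentSeries ℤ) * qz (e k) ∈ IM (e k) := by
        rw [← zsmul_eq_mul]
        exact zsmul_mem (qz_mem le_rfl) _
      have hw0 := IM_mono (G.nn k) hw
      have hx : jj b * poc b (2 * (2 * M) + δ) * rr b hb ((2 * M : ℕ) - k) *
          rr b hb ((2 * M : ℕ) + δ + k) ∈ IM 0 := by
        have := IM_mul (IM_mul (IM_mul (ofPS_mem (J b)) (poc_mem b (2 * (2 * M) + δ)))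
          (rr_mem b hb ((2 * M : ℕ) - k))) (rr_mem b hb ((2 * M : ℕ) + δ + k))
        rw [jj]
        simpa using this
      have hy := IM_mul hw hx
      have e1 : jj b * (poc b (2 * (2 * M) + δ) * ((hh k : LaurentSeries ℤ) * cc b δ hb e (2 * M) k)) =
          ((hh k * sgn k : ℤ) : LaurentSeries ℤ) * qz (e k) * (jj b * poc b (2 * (2 * M) + δ) *
          rr b hb ((2 * M : ℕ) - k) * rr b hb ((2 * M : ℕ) + δ + k)) := by
        rw [cc]
        push_cast
        ring
      rw [e1]
      by_cases hk : |k| ≤ M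
      · have hk' := abs_le.1 hk
        have h1 := hj ((2 * M : ℕ) - k) (by push_cast; omega)
        have h2 := hj ((2 * M : ℕ) + δ + k) (by push_cast; omega)
        have h3 : Cg (M : ℤ) (jj b * poc b (2 * (2 * M) + δ) * rr b hb ((2 * M : ℕ) - k) *
          rr b hb ((2 * M : ℕ) + δ + k)) 1 := by
          have h4 := (Cg.rfl' (M := M) (ofPS_mem (J b))).mul
            (jj_Cg b hb M (2 * (2 * M) + δ) (by omega)).symm
          have h5 := (h4.mul (Cg.rfl' (rr_mem b hb ((2 * M : ℕ) - k)))).mul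
            (Cg.rfl' (rr_mem b hb ((2 * M : ℕ) + δ + k)))
          refine h5.trans ?_
          have h6 := h1.mul h2
          rw [mul_one] at h6
          convert h6 using 1
          rw [jj]
          ring
        have := (Cg.rfl' (M := M) hw0).mul h3.symm
        rwa [mul_one] at this
      · have hM : (M : ℤ) ≤ e k := by have := G.gr k; omega
        refine ⟨hw0, by rw [add_zero] at hy; exact IM_mono (G.nn k) hy, sub_mem (IM_mono hM hw) ?_⟩
        rw [add_zero] at hy
        exact IM_mono hM hy
  · intro k hk
    by_contra h
    apply hk
    simp only [Finset.coe_Icc, Set.mem_Icc, not_and_or, not_le] at h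
    beta_reduce
    rw [cc_zero, mul_zero]
    push_cast
    omega

section cls
variable {K : Type*} [CommRing K]

def Cl (r : ℤ) : AddSubgroup (LaurentSeries K) where
  carrier := {f | ∀ n : ℤ, n % 7 ≠ r % 7 → f.coeff n = 0}
  add_mem' := fun {f g} hf hg i hi => by simp [hf i hi, hg i hi]
  zero_mem' := fun i _ => by simp
  neg_mem' := fun {f} hf i hi => by simp [hf i hi]

theorem Cl_mul {r s : ℤ} {f g : LaurentSeries K} (hf : f ∈ Cl r) (hg : g ∈ Cl s) :
    f * g ∈ Cl (r + s) := fun n hn => by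
  apply coeff_mul_zero
  intro i j hij
  by_cases h : i % 7 = r % 7
  · exact Or.inr (hg j (by omega))
  · exact Or.inl (hf i h)

theorem Cl_cast {r : ℤ} (s : ℤ) {f : LaurentSeries K} (hf : f ∈ Cl r) (h : r % 7 = s % 7 := by norm_num) :
    f ∈ Cl s := fun n hn => hf n (by omega)

theorem Cl_one : (1 : LaurentSeries K) ∈ Cl 0 := fun n hn => by
  rw [HahnSeries.coeff_one, if_neg]
  rintro rfl
  exact hn rfl

theorem Cl_qz (m : ℤ) : (qz m : LaurentSeries K) ∈ Cl m := fun n hn => by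
  rw [coeff_qz, if_neg]
  rintro rfl
  exact hn rfl

theorem Cl_sum (g : ℕ → LaurentSeries K) (hg : ∀ r : ℕ, r < 7 → g r ∈ Cl (r : ℤ))
    (h : ∑ r ∈ Finset.range 7, g r = 0) (r : ℕ) (hr : r < 7) : g r = 0 := by
  ext n
  by_cases hn : n % 7 = r % 7
  · have := congrArg (fun f => f.coeff n) h
    simp only [HahnSeries.coeff_sum] at this
    rwa [Finset.sum_eq_single_of_mem r (Finset.mem_range.2 hr) fun s hs hsr =>
      hg s (Finset.mem_range.1 hs) n (by rw [Finset.mem_range] at hs; omega)] at this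
  · exact hg r hr n hn

def cp (r : ℤ) (f : LaurentSeries K) : LaurentSeries K where
  coeff n := if n % 7 = r % 7 then f.coeff n else 0
  isPWO_support' := f.isPWO_support.mono fun n hn => by
    rw [Function.mem_support] at hn
    rw [HahnSeries.mem_support]
    split_ifs at hn with h
    · exact hn
    · exact absurd rfl hn

theorem cp_coeff (r : ℤ) (f : LaurentSeries K) (n : ℤ) :
    (cp r f).coeff n = if n % 7 = r % 7 then f.coeff n else 0 := rfl

theorem cp_Cl (r : ℤ) (f : LaurentSeries K) : cp r f ∈ Cl r := fun n hn => by
  rw [cp_coeff, if_neg hn]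

theorem cp_sum (f : LaurentSeries K) : ∑ r ∈ Finset.range 7, cp r f = f := by
  ext n
  simp only [HahnSeries.coeff_sum, cp_coeff]
  rw [Finset.sum_eq_single (n % 7).toNat]
  · rw [if_pos (by omega)]
  · intro r hr h
    rw [Finset.mem_range] at hr
    rw [if_neg (by omega)]
  · intro h
    rw [Finset.mem_range] at h
    omega

theorem cp_mem {M : ℤ} (r m : ℤ) {f : LaurentSeries K} (hf : f ∈ IM M)
    (h : ∀ n, M ≤ n → n % 7 = r % 7 → m ≤ n) : cp r f ∈ IM m := fun n hn => by
  rw [cp_coeff]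
  split_ifs with h1
  · apply hf
    by_contra h2
    have := h n (by omega) h1
    omega
  · rfl

theorem Vb_Cl (b : ℕ) (hb : 0 < b) (r : ℤ) (f : LaurentSeries K) (hf : f ∈ Cl r) :
    Vb b hb f ∈ Cl (b * r) := fun n hn => by
  by_cases h : (b : ℤ) ∣ n
  · obtain ⟨k, rfl⟩ := h
    rw [Vb_coeff]
    apply hf
    intro h
    apply hn
    rw [Int.mul_emod, h, ← Int.mul_emod]
  · exact Vb_coeff0 b hb _ _ h

theorem Vb7_Cl (b : ℕ) (hb : 0 < b) (h7 : 7 ∣ b) (f : LaurentSeries K) :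
    Vb b hb f ∈ Cl 0 := fun n hn => by
  apply Vb_coeff0
  intro h
  have : (7 : ℤ) ∣ n := dvd_trans (by exact_mod_cast h7) h
  omega

end cls

theorem th_class {e : ℤ → ℤ} (G : Gr e) (h : ℤ → ℤ) (s t c : ℤ)
    (h1 : ∀ k, e k % 7 = t % 7 → ∃ m, k = 7 * m + s) (h2 : ∀ m, e (7 * m + s) = 49 * e m + t)
    (h3 : ∀ m, h (7 * m + s) = c * h m) :
    cp t (th e h) = (c : LaurentSeries ℤ) * (qz t * Vb 49 (by norm_num) (th e h)) := by
  ext n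
  rw [cp_coeff, coeff_int_mul, coeff_qz_mul]
  by_cases h49 : (49 : ℤ) ∣ n - t
  · obtain ⟨m, hm⟩ := h49
    rw [if_pos (by omega), hm]
    have := Vb_coeff 49 (by norm_num) (th e h) m
    push_cast at this
    rw [this, th_coeff G h m (Finset.Icc (-(m + 1)) (m + 1)), th_coeff G h n
      ((Finset.Icc (-(m + 1)) (m + 1)).image fun k => 7 * k + s), Finset.sum_image, Finset.mul_sum]
    · refine Finset.sum_congr rfl fun k _ => ?_
      rw [h2, h3, mul_ite, mul_zero]
      congr 1
      simp only [eq_iff_iff]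
      omega
    · intro x _ y _ hxy
      simpa using hxy
    · intro k hk
      obtain ⟨l, rfl⟩ := h1 k (by omega)
      rw [h2] at hk
      have := abs_le.1 (G.gr l)
      exact Finset.mem_image.2 ⟨l, Finset.mem_Icc.2 (by omega), rfl⟩
    · intro k hk
      have := abs_le.1 (G.gr k)
      rw [Finset.mem_Icc]
      omega
  · rw [Vb_coeff0 _ _ _ _ (by exact_mod_cast h49), mul_zero]
    split_ifs with hn
    · rw [th_coeff G h n (Finset.Icc (-(n + 1)) (n + 1))]
      · refine Finset.sum_eq_zero fun k _ => if_neg fun hk => ?_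
        obtain ⟨l, rfl⟩ := h1 k (by omega)
        rw [h2] at hk
        exact h49 ⟨e l, by omega⟩
      · intro k hk
        have := abs_le.1 (G.gr k)
        rw [Finset.mem_Icc]
        omega
    · rfl

theorem th_class0 {e : ℤ → ℤ} (G : Gr e) (h : ℤ → ℤ) (t : ℤ)
    (h1 : ∀ k, e k % 7 ≠ t % 7) : cp t (th e h) = 0 := by
  ext n
  rw [cp_coeff, HahnSeries.coeff_zero]
  split_ifs with hn
  · rw [th_coeff G h n (Finset.Icc (-(n + 1)) (n + 1))]
    · exact Finset.sum_eq_zero fun k _ => if_neg fun hk => h1 k (by omega)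
    · intro k hk
      have := abs_le.1 (G.gr k)
      rw [Finset.mem_Icc]
      omega
  · rfl

theorem jj1_ps (n : ℕ) : (jj 1).coeff (n : ℤ) = (PowerSeries.pentagonalSeries ℤ).coeff n := by
  obtain ⟨s, hs⟩ := Filter.eventually_atTop.1 (PowerSeries.coeff_prod_one_sub_X_pow_eventually_eq ℤ n)
  obtain ⟨N, hN⟩ := s.exists_nat_subset_range
  rw [← hs (Finset.range (N + n + 1)) (hN.trans (Finset.range_mono (by omega)))]
  have h := (jj_Cg 1 one_pos (n + 1) (N + n + 1) (by omega)).s n (by push_cast; omega)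
  rw [HahnSeries.coeff_sub, sub_eq_zero, poc_eq, HahnSeries.ofPowerSeries_apply_coeff] at h
  simpa using h

def eP (k : ℤ) : ℤ := pentagonal k

theorem eP2 (k : ℤ) : 2 * eP k = k * (3 * k - 1) := two_mul_natCast_pentagonal k

theorem GrP : Gr eP := by
  refine ⟨fun k => Int.natCast_nonneg _, fun k => abs_le.2 ?_⟩
  have := eP2 k
  constructor
  · nlinarith [sq_nonneg (2 * k + 1), sq_nonneg k]
  · nlinarith [sq_nonneg (2 * k - 1)]

theorem jj1_pent (k : ℤ) : (jj 1).coeff (eP k) = sgn k := by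
  rw [eP, jj1_ps, PowerSeries.coeff_pentagonalSeries_pentagonal]
  rfl

theorem jj1_th : jj 1 = th eP sgn := by
  ext n
  by_cases hn : ∃ k, eP k = n
  · obtain ⟨k, rfl⟩ := hn
    rw [jj1_pent, th_coeff GrP sgn _ {k}]
    · simp
    · intro l hl
      rw [eP, eP, Nat.cast_inj, pentagonal_inj] at hl
      simp [hl]
  · push Not at hn
    rw [th_coeff GrP sgn n ∅ (fun k hk => absurd hk (hn k)), Finset.sum_empty]
    by_cases h0 : n < 0
    · rw [jj, ofPS_mem _ n h0]
    · obtain ⟨m, rfl⟩ := Int.eq_ofNat_of_zero_le (not_lt.1 h0)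
      rw [jj1_ps, PowerSeries.coeff_pentagonalSeries_eq_zero]
      rintro ⟨k, hk⟩
      exact hn k (by rw [eP, hk])

def eG (k : ℤ) : ℤ := k * k
def eT (k : ℤ) : ℤ := k * (k + 1) / 2

theorem eT2 (k : ℤ) : 2 * eT k = k * (k + 1) :=
  Int.mul_ediv_cancel' (Int.even_mul_succ_self k).two_dvd

theorem GrG : Gr eG := by
  refine ⟨fun k => mul_self_nonneg k, fun k => abs_le.2 ?_⟩
  rw [eG]
  constructor
  · nlinarith
  · nlinarith

theorem GrT : Gr eT := by
  refine ⟨fun k => ?_, fun k => abs_le.2 ?_⟩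
  · have h := eT2 k
    by_contra h0
    rcases le_or_gt 0 k with h1 | h1
    · nlinarith
    · nlinarith
  · have h := eT2 k
    constructor
    · nlinarith [sq_nonneg (k + 1), sq_nonneg (k + 2)]
    · nlinarith [sq_nonneg (2 * k - 1)]

theorem jj_mem (b : ℕ) : jj b ∈ IM 0 := ofPS_mem (J b)

def Ph : LaurentSeries ℤ := th eG sgn

theorem od2 (n : ℕ) : od 2 n * poc (2 : ℕ) n = poc (1 : ℕ) (2 * n) := by
  induction n with
  | zero => simp [od, poc]
  | succ n ih =>
    rw [mul_add, mul_one, poc, poc, od, Finset.prod_range_succ, Finset.prod_range_succ,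
      Finset.prod_range_succ, Finset.prod_range_succ, ← od, ← poc, ← poc, ← ih]
    push_cast
    rw [show (1 + 2 * n : ℤ) = 1 * (2 * n + 1) by ring,
      show (2 * (n + 1) : ℤ) = 1 * (2 * n + 1 + 1) by ring]
    ring

theorem gauss : Ph * jj 2 = jj 1 ^ 2 := by
  refine Cg.eq fun M => ?_
  have h := theta_lim 2 0 two_pos eG (fun _ => 1) rfl (fun k => by simp only [eG]; push_cast; ring)
    (fun k => by norm_num) GrG M
  simp only [one_mul] at h
  have h0 : GG 2 0 two_pos eG (fun _ => 1) 0 = 1 := by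
    rw [GG, finsum_eq_single _ 0]
    · simp [cc, sgn_zero, eG, qz_zero, rr_zero]
    · intro k hk
      rw [cc_zero, mul_zero]
      push_cast
      omega
  rw [h0, show (poc ((2 : ℕ) : ℤ) 0 : LaurentSeries ℤ) = 1 by simp [poc]] at h
  have hj := jj_Cg 2 two_pos M (2 * M) (by omega)
  have ho : od 2 (2 * M) ∈ IM 0 := IM_prod _ _ fun i _ => sub_mem IM_one (qz_mem (by positivity))
  have h1 := (hj.mul (Cg.rfl' ho)).trans (Cg.trans (by
    rw [mul_comm, od2]
    exact Cg.rfl' (poc_mem _ _)) (jj_Cg 1 one_pos M (2 * (2 * M)) (by omega)).symm)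
  have h2 := (h.mul (Cg.rfl' (ofPS_mem (J 2)))).trans (Cg.trans (by
    rw [show jj 2 * (1 * 1 * od 2 (2 * M) ^ 2) * HahnSeries.ofPowerSeries ℤ ℤ (J 2) =
      (jj 2 * od 2 (2 * M)) ^ 2 by rw [jj]; ring]
    exact Cg.rfl' (IM_pow h1.l 2)) (h1.pow 2))
  exact h2

theorem jacobi : 2 * jj 1 ^ 3 = th eT (fun k => (2 * k + 1) * sgn k) := by
  refine Cg.eq fun M => ?_
  have h := theta_lim 1 1 one_pos eT (fun k => 2 * k + 1) rfl
    (fun k => by have h1 := eT2 k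
                 have h2 := eT2 (k + 1)
                 push_cast
                 nlinarith)
    (fun k => by ring) GrT M
  have h0 : poc ((1 : ℕ) : ℤ) 1 * GG 1 1 one_pos eT (fun k => 2 * k + 1) 0 = 2 := by
    have e1 : sgn (-1) = -1 := by simp [sgn]
    have hr := rr_nat 1 one_pos 1
    push_cast at hr
    rw [GG, finsum_eq_sum_of_support_subset (s := {0, -1})]
    · rw [Finset.sum_pair (by norm_num)]
      simp [cc, sgn_zero, e1, eT, qz_zero, rr_zero]
      linear_combination 2 * hr
    · intro k hk
      by_contra h
      apply hk
      beta_reduce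
      rw [cc_zero, mul_zero]
      push_cast
      simp at h
      omega
  rw [h0] at h
  have ho : od 1 (2 * M) = poc (1 : ℕ) (2 * M) := Finset.prod_congr rfl fun k _ => by
    push_cast; congr 2; ring
  rw [ho] at h
  have hj := jj_Cg 1 one_pos M (2 * M) (by omega)
  refine Cg.symm (h.trans ?_)
  have h2 : (2 : LaurentSeries ℤ) ∈ IM 0 := by
    rw [← one_add_one_eq_two]; exact add_mem IM_one IM_one
  have h3 := (Cg.rfl' (M := M) (jj_mem 1)).mul ((Cg.rfl' h2).mul (hj.symm.pow 2))
  rw [show 2 * jj 1 ^ 3 = jj 1 * (2 * jj 1 ^ 2) by ring]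
  exact h3

theorem sgn_seven (m j : ℤ) : sgn (7 * m + j) = sgn m * sgn j := by
  rw [sgn, Int.negOnePow_add, show 7 * m = m + 2 * (3 * m) by ring, Int.negOnePow_add,
    Int.negOnePow_two_mul, mul_one, Units.val_mul, sgn, sgn]

theorem resd (k : ℤ) : ∃ m j : ℤ, k = 7 * m + j ∧ 0 ≤ j ∧ j < 7 := ⟨k / 7, k % 7, by omega⟩

theorem resP (k : ℤ) : (eP k % 7 = 0 ∨ eP k % 7 = 1 ∨ eP k % 7 = 5) ∨
    (eP k % 7 = 2 ∧ ∃ m, k = 7 * m + (-1)) := by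
  have h := eP2 k
  obtain ⟨m, j, rfl, h0, h7⟩ := resd k
  interval_cases j
  all_goals
    generalize eP _ = z at *
    ring_nf at h
    first
    | left; omega
    | right; exact ⟨by omega, m + 1, by ring⟩

theorem resT (k : ℤ) : eT k % 7 ≠ 6 ∨ ∃ m, k = 7 * m + 3 := by
  have h := eT2 k
  obtain ⟨m, j, rfl, h0, h7⟩ := resd k
  interval_cases j
  all_goals
    generalize eT _ = z at *
    ring_nf at h
    first
    | left; omega
    | right; exact ⟨m, rfl⟩

theorem resG (k : ℤ) : (eG k % 7 = 1 ∨ eG k % 7 = 2 ∨ eG k % 7 = 4) ∨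
    (eG k % 7 = 0 ∧ ∃ m, k = 7 * m + 0) := by
  have h : eG k = k * k := rfl
  obtain ⟨m, j, rfl, h0, h7⟩ := resd k
  interval_cases j
  all_goals
    generalize eG _ = z at *
    ring_nf at h
    first
    | left; omega
    | right; exact ⟨by omega, m, rfl⟩

theorem jj1_2 : cp 2 (jj 1) = -(qz 2 * jj 49) := by
  rw [jj1_th, th_class GrP sgn (-1) 2 (-1), ← jj1_th, Vb_jj _ _ _ one_pos]
  · push_cast; ring
  · intro k hk
    rcases resP k with h | h
    · omega
    · exact h.2
  · intro m
    have h1 := eP2 m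
    have h2 := eP2 (7 * m + (-1))
    nlinarith
  · intro m
    rw [sgn_seven]
    simp [sgn]

theorem jj1_no (t : ℤ) (h : t = 3 ∨ t = 4 ∨ t = 6) : cp t (jj 1) = 0 := by
  rw [jj1_th]
  refine th_class0 GrP _ _ fun k => ?_
  rcases resP k with h | h <;> omega

theorem jj3_6 : 2 * cp 6 (jj 1 ^ 3) = -(14 * (qz 6 * jj 49 ^ 3)) := by
  have e : 2 * cp 6 (jj 1 ^ 3) = cp 6 (2 * jj 1 ^ 3) := by
    ext n
    rw [show (2 : LaurentSeries ℤ) = ((2 : ℤ) : LaurentSeries ℤ) by norm_cast, coeff_int_mul,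
      cp_coeff, cp_coeff, coeff_int_mul, mul_ite, mul_zero]
  rw [e, jacobi, th_class GrT _ 3 6 (-7), ← jacobi, map_mul, map_pow, Vb_jj _ _ _ one_pos, map_ofNat]
  · push_cast; ring
  · intro k hk
    rcases resT k with h | h
    · omega
    · exact h
  · intro m
    have h1 := eT2 m
    have h2 := eT2 (7 * m + 3)
    nlinarith
  · intro m
    rw [sgn_seven, show sgn 3 = -1 by simp [sgn, Int.negOnePow_odd 3 ⟨1, by norm_num⟩]]
    ring

theorem Ph0 : cp 0 Ph = Vb 49 (by norm_num) Ph := by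
  rw [Ph, th_class GrG sgn 0 0 1]
  · rw [qz_zero, one_mul, Int.cast_one, one_mul]
  · intro k hk
    rcases resG k with h | h
    · omega
    · exact h.2
  · intro m
    rw [eG, eG]
    ring
  · intro m
    rw [sgn_seven, sgn_zero]
    ring

theorem Ph_no (t : ℤ) (h : t = 3 ∨ t = 5 ∨ t = 6) : cp t Ph = 0 := by
  refine th_class0 GrG _ _ fun k => ?_
  rcases resG k with h | h <;> omega

theorem num_ne (n : ℤ) (hn : n ≠ 0) : (n : LaurentSeries ℤ) ≠ 0 := fun h => hn <| by
  have := congrArg (fun f => f.coeff 0) h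
  beta_reduce at this
  rwa [← mul_one (n : LaurentSeries ℤ), coeff_int_mul, HahnSeries.coeff_one, if_pos rfl, mul_one] at this

theorem klein_alg {R : Type*} [CommRing R] [IsDomain R] (h20 : (2 : R) ≠ 0) (a b c d e f x y z : R)
    (h1 : a * b * c + 1 = 0) (h2 : d * e * f + 1 = 0)
    (r1 : 2 * (a * c) + x - e * y = 0) (r2 : 2 * (a * b) + y - f * z = 0)
    (r4 : 2 * (b * c) + z - d * x = 0)
    (r3 : c * c - 2 * a - d - e * z = 0) (r6 : a * a - 2 * b - e - f * x = 0)
    (r5 : b * b - 2 * c - f - d * y = 0)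
    (hn : (c * f - a) * (a * d - b) * (b * e - c) ≠ -1) : Klein a b c d e f := by
  have hx : x = -(b * c * (e * f) + a * b * e + a * c) := by
    apply mul_left_cancel₀ h20
    linear_combination r1 + e * r2 + e * f * r4 + x * h2
  have hy : y = -(c * a * (f * d) + b * c * f + b * a) := by
    apply mul_left_cancel₀ h20
    linear_combination r2 + f * r4 + f * d * r1 + y * h2
  have hz : z = -(a * b * (d * e) + c * a * d + c * b) := by
    apply mul_left_cancel₀ h20
    linear_combination r4 + d * r1 + d * e * r2 + z * h2
  subst hx hy hz
  have e1 : (b * e + c + f) * (c * f - a) = f * (c * f + a + d) := by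
    linear_combination f * r3 - (a * b * e + c * a) * h2
  have e2 : (c * f + a + d) * (a * d - b) = d * (a * d + b + e) := by
    linear_combination d * r6 - (b * c * f + a * b) * h2
  have e3 : (a * d + b + e) * (b * e - c) = e * (b * e + c + f) := by
    linear_combination e * r5 - (c * a * d + b * c) * h2
  have hd : d ≠ 0 := by rintro rfl; simp at h2
  have he : e ≠ 0 := by rintro rfl; simp at h2
  have hf : f ≠ 0 := by rintro rfl; simp at h2
  by_cases t1 : c * f + a + d = 0
  · have t2 : a * d + b + e = 0 := by
      rw [t1, zero_mul] at e2
      exact (mul_eq_zero.1 e2.symm).resolve_left hd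
    have t3 : b * e + c + f = 0 := by
      rw [t2, zero_mul] at e3
      exact (mul_eq_zero.1 e3.symm).resolve_left he
    exact ⟨h1, h2, t1, t2, t3⟩
  · by_cases t2 : a * d + b + e = 0
    · exfalso
      rw [t2, zero_mul] at e3
      rw [(mul_eq_zero.1 e3.symm).resolve_left he, zero_mul] at e1
      exact t1 ((mul_eq_zero.1 e1.symm).resolve_left hf)
    · have t3 : b * e + c + f ≠ 0 := fun t3 => by
        rw [t3, zero_mul] at e1
        exact t1 ((mul_eq_zero.1 e1.symm).resolve_left hf)
      exfalso
      apply hn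
      apply mul_left_cancel₀ (mul_ne_zero (mul_ne_zero t1 t2) t3)
      calc _ = ((b * e + c + f) * (c * f - a)) * ((c * f + a + d) * (a * d - b)) *
            ((a * d + b + e) * (b * e - c)) := by ring
        _ = _ := by
          rw [e1, e2, e3]
          linear_combination (c * f + a + d) * (a * d + b + e) * (b * e + c + f) * h2

def ia : LaurentSeries ℤ := (((ju 49 (by norm_num))⁻¹ : (LaurentSeries ℤ)ˣ) : LaurentSeries ℤ)

theorem ia_mul : jj 49 * ia = 1 := (ju 49 (by norm_num)).mul_inv

theorem ia_mem : ia ∈ IM 0 := ju_inv_mem _ _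

theorem ia_V : ia = Vb 49 (by norm_num) ((((ju 1 one_pos)⁻¹ : (LaurentSeries ℤ)ˣ) : LaurentSeries ℤ)) := by
  have h1 : jj 1 * (((ju 1 one_pos)⁻¹ : (LaurentSeries ℤ)ˣ) : LaurentSeries ℤ) = 1 :=
    (ju 1 one_pos).mul_inv
  have h2 := congrArg (Vb 49 (by norm_num)) h1
  rw [map_mul, map_one, Vb_jj _ _ _ one_pos] at h2
  have h3 := ia_mul
  rw [mul_one] at h2
  linear_combination ia * (-h2) + Vb 49 (by norm_num) ((((ju 1 one_pos)⁻¹ : (LaurentSeries ℤ)ˣ) : LaurentSeries ℤ)) * h3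

theorem ia_Cl : ia ∈ Cl 0 := by
  rw [ia_V]
  exact Vb7_Cl _ _ (by norm_num) _

theorem jj49_Cl : jj 49 ∈ Cl 0 := by
  rw [← Vb_jj 49 (by norm_num) 1 one_pos]
  exact Vb7_Cl _ _ (by norm_num) _

theorem jj98_Cl : jj 98 ∈ Cl 0 := by
  rw [← Vb_jj 49 (by norm_num) 2 two_pos]
  exact Vb7_Cl _ _ (by norm_num) _

theorem jc0 : (jj 1).coeff 0 = 1 := by
  have h := jj1_pent 0
  have := eP2 0
  rwa [show eP 0 = 0 by omega, sgn_zero] at h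

theorem jc1 : (jj 1).coeff 1 = -1 := by
  have h := jj1_pent 1
  have := eP2 1
  rwa [show eP 1 = 1 by omega, show sgn 1 = -1 by simp [sgn]] at h

theorem jc5 : (jj 1).coeff 5 = 1 := by
  have h := jj1_pent 2
  have := eP2 2
  rwa [show eP 2 = 5 by omega, show sgn 2 = 1 by simp [sgn, Int.negOnePow_even 2 ⟨1, by norm_num⟩]] at h

theorem ia_c0 : ia.coeff 0 = 1 := by
  have h := IM_c0 (jj_mem 49) ia_mem
  have h2 := Vb_coeff 49 (by norm_num) (jj 1) 0
  rw [Vb_jj _ _ _ one_pos, jc0] at h2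
  simp only [mul_zero, mul_one] at h2
  rw [ia_mul, h2, one_mul, zero_add] at h
  simpa using h.symm

def xi : LaurentSeries ℤ := qz (-2) * jj 1 * ia
def Ca : LaurentSeries ℤ := qz (-2) * cp 5 (jj 1) * ia
def Cb : LaurentSeries ℤ := qz (-2) * cp 1 (jj 1) * ia
def Cc : LaurentSeries ℤ := qz (-2) * cp 0 (jj 1) * ia

theorem Ca_Cl : Ca ∈ Cl 3 := Cl_cast 3 (Cl_mul (Cl_mul (Cl_qz (-2)) (cp_Cl 5 _)) ia_Cl)
theorem Cb_Cl : Cb ∈ Cl 6 := Cl_cast 6 (Cl_mul (Cl_mul (Cl_qz (-2)) (cp_Cl 1 _)) ia_Cl)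
theorem Cc_Cl : Cc ∈ Cl 5 := Cl_cast 5 (Cl_mul (Cl_mul (Cl_qz (-2)) (cp_Cl 0 _)) ia_Cl)

theorem lead (n r : ℤ) (hr : n ≤ 6) (h0 : 0 ≤ n) (hn : n % 7 = r % 7) :
    qz (-2) * cp r (jj 1) * ia ∈ IM (n - 2) ∧
    (qz (-2) * cp r (jj 1) * ia).coeff (n - 2) = (jj 1).coeff n := by
  have h1 : cp r (jj 1) ∈ IM n := cp_mem r n (jj_mem 1) (by intro m hm h; omega)
  have h2 : qz (-2) * cp r (jj 1) ∈ IM (-2 + n) := IM_mul (qz_mem le_rfl) h1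
  have h3 := IM_mul h2 ia_mem
  have h4 := IM_c0 h2 ia_mem
  rw [show -2 + n + 0 = n - 2 by ring] at h3 h4
  refine ⟨h3, ?_⟩
  rw [h4, ia_c0, coeff_qz_mul, cp_coeff, if_pos (by omega), mul_one]
  congr 1
  ring

theorem Ca_l : Ca ∈ IM 3 ∧ Ca.coeff 3 = 1 := by
  have := lead 5 5 (by norm_num) (by norm_num) rfl
  rwa [jc5] at this
theorem Cb_l : Cb ∈ IM (-1) ∧ Cb.coeff (-1) = -1 := by
  have := lead 1 1 (by norm_num) (by norm_num) rfl
  rwa [jc1] at this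
theorem Cc_l : Cc ∈ IM (-2) ∧ Cc.coeff (-2) = 1 := by
  have := lead 0 0 (by norm_num) (by norm_num) rfl
  rwa [jc0] at this

theorem xi_eq : xi = Ca + Cb + Cc - 1 := by
  have h := cp_sum (jj 1)
  simp only [Finset.sum_range_succ, Finset.sum_range_zero] at h
  push_cast at h
  rw [jj1_2, jj1_no 3 (by norm_num), jj1_no 4 (by norm_num), jj1_no 6 (by norm_num)] at h
  have h2 : (qz (-2) * qz 2 : LaurentSeries ℤ) = 1 := by rw [qz_mul]; rfl
  rw [xi, Ca, Cb, Cc]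
  nth_rewrite 1 [← h]
  linear_combination (-jj 49 * ia) * h2 - ia_mul

theorem Cl_k {r u : ℤ} (n : ℤ) {f : LaurentSeries ℤ} (hf : f ∈ Cl r)
    (h : r % 7 = u % 7 := by norm_num) : (n : LaurentSeries ℤ) * f ∈ Cl u := by
  rw [← zsmul_eq_mul]
  exact zsmul_mem (Cl_cast u hf h) n

theorem Cl_m3 {r s t : ℤ} {f g k : LaurentSeries ℤ} (hf : f ∈ Cl r) (hg : g ∈ Cl s) (hk : k ∈ Cl t) :
    f * g * k ∈ Cl (r + s + t) := Cl_mul (Cl_mul hf hg) hk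

theorem cp_uniq (f : LaurentSeries ℤ) (g : ℕ → LaurentSeries ℤ)
    (hg : ∀ r : ℕ, r < 7 → g r ∈ Cl (r : ℤ)) (h : f = ∑ r ∈ Finset.range 7, g r) (r : ℕ) (hr : r < 7) :
    cp r f = g r := by
  have := Cl_sum (fun r => cp r f - g r) (fun r hr => sub_mem (cp_Cl _ _) (hg r hr))
    (by rw [Finset.sum_sub_distrib, cp_sum, h, sub_self]) r hr
  exact sub_eq_zero.1 this

theorem cp_hom (h f : LaurentSeries ℤ) (s : ℤ) (hh : h ∈ Cl s) (r : ℤ) (t : ℤ)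
    (hr : (s + t) % 7 = r % 7) : cp r (h * f) = h * cp t f := by
  have e : h * f - h * cp t f = ∑ i ∈ Finset.range 7, if (i : ℤ) = t % 7 then 0 else h * cp i f := by
    nth_rewrite 1 [← cp_sum f]
    rw [Finset.mul_sum, sub_eq_iff_eq_add, ← Finset.add_sum_erase _ _ (a := (t % 7).toNat),
      ← Finset.add_sum_erase (Finset.range 7) (fun i : ℕ => if (i : ℤ) = t % 7 then 0 else h * cp i f)
      (a := (t % 7).toNat), if_pos (by omega), zero_add, add_comm]
    · congr 1
      · refine Finset.sum_congr rfl fun i hi => ?_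
        rw [if_neg]
        have := Finset.ne_of_mem_erase hi
        omega
      · congr 1
        ext n
        rw [cp_coeff, cp_coeff]
        have : ((t % 7).toNat : ℤ) % 7 = t % 7 := by omega
        rw [this]
    · rw [Finset.mem_range]; omega
    · rw [Finset.mem_range]; omega
  ext n
  rw [cp_coeff]
  split_ifs with hn
  · have e2 := congrArg (fun f => f.coeff n) e
    simp only [HahnSeries.coeff_sum, HahnSeries.coeff_sub] at e2
    rw [Finset.sum_eq_zero, sub_eq_zero] at e2
    · exact e2
    · intro i hi
      rw [Finset.mem_range] at hi
      split_ifs with h1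
      · rfl
      · exact Cl_mul hh (cp_Cl i f) n (by omega)
  · exact (Cl_mul hh (cp_Cl t f) n (by omega)).symm

theorem cube_cp (a b c o : LaurentSeries ℤ) (ha : a ∈ Cl 3) (hb : b ∈ Cl 6) (hc : c ∈ Cl 5)
    (ho : o ∈ Cl 0) : cp 0 ((a + b + c + o) ^ 3) = o ^ 3 + 6 * (a * b * c) := by
  have := cp_uniq ((a + b + c + o) ^ 3) (fun r => match r with
    | 0 => (1 : ℤ) * (o * o * o) + (6 : ℤ) * (a * b * c)
    | 1 => (1 : ℤ) * (c * c * c) + (3 : ℤ) * (a * b * b) + (6 : ℤ) * (a * c * o)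
    | 2 => (1 : ℤ) * (a * a * a) + (3 : ℤ) * (b * c * c) + (6 : ℤ) * (a * b * o)
    | 3 => (3 : ℤ) * (b * b * c) + (3 : ℤ) * (c * c * o) + (3 : ℤ) * (a * o * o)
    | 4 => (1 : ℤ) * (b * b * b) + (3 : ℤ) * (a * a * c) + (6 : ℤ) * (b * c * o)
    | 5 => (3 : ℤ) * (a * a * b) + (3 : ℤ) * (b * b * o) + (3 : ℤ) * (c * o * o)
    | 6 => (3 : ℤ) * (a * c * c) + (3 : ℤ) * (a * a * o) + (3 : ℤ) * (b * o * o)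
    | _ => 0) (fun r hr => ?_) ?_ 0 (by norm_num)
  · simp only [Nat.cast_zero] at this
    rw [this]
    push_cast
    ring
  · interval_cases r
    · exact add_mem (Cl_k _ (Cl_m3 ho ho ho)) (Cl_k _ (Cl_m3 ha hb hc))
    · exact add_mem (add_mem (Cl_k _ (Cl_m3 hc hc hc)) (Cl_k _ (Cl_m3 ha hb hb))) (Cl_k _ (Cl_m3 ha hc ho))
    · exact add_mem (add_mem (Cl_k _ (Cl_m3 ha ha ha)) (Cl_k _ (Cl_m3 hb hc hc))) (Cl_k _ (Cl_m3 ha hb ho))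
    · exact add_mem (add_mem (Cl_k _ (Cl_m3 hb hb hc)) (Cl_k _ (Cl_m3 hc hc ho))) (Cl_k _ (Cl_m3 ha ho ho))
    · exact add_mem (add_mem (Cl_k _ (Cl_m3 hb hb hb)) (Cl_k _ (Cl_m3 ha ha hc))) (Cl_k _ (Cl_m3 hb hc ho))
    · exact add_mem (add_mem (Cl_k _ (Cl_m3 ha ha hb)) (Cl_k _ (Cl_m3 hb hb ho))) (Cl_k _ (Cl_m3 hc ho ho))
    · exact add_mem (add_mem (Cl_k _ (Cl_m3 ha hc hc)) (Cl_k _ (Cl_m3 ha ha ho))) (Cl_k _ (Cl_m3 hb ho ho))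
  · simp only [Finset.sum_range_succ, Finset.sum_range_zero]
    push_cast
    ring

theorem abc : Ca * Cb * Cc + 1 = 0 := by
  have hq : (qz (-6) * qz 6 : LaurentSeries ℤ) = 1 := by rw [qz_mul]; rfl
  have hq3 : (qz (-2) ^ 3 : LaurentSeries ℤ) = qz (-6) := by rw [qz_pow]; rfl
  have i3 : ia ^ 3 ∈ Cl 0 := by
    rw [pow_three]; exact Cl_mul ia_Cl (Cl_mul ia_Cl ia_Cl)
  have h1 := cube_cp Ca Cb Cc (-1) Ca_Cl Cb_Cl Cc_Cl (neg_mem Cl_one)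
  rw [← sub_eq_add_neg, ← xi_eq, xi, mul_pow, mul_pow, hq3,
    show qz (-6) * jj 1 ^ 3 * ia ^ 3 = qz (-6) * ia ^ 3 * jj 1 ^ 3 by ring,
    cp_hom _ _ _ (Cl_mul (Cl_qz (-6)) i3) 0 6 rfl] at h1
  have h12 : (12 : LaurentSeries ℤ) ≠ 0 := by exact_mod_cast num_ne 12 (by norm_num)
  apply (mul_eq_zero.1 (?_ : 12 * (Ca * Cb * Cc + 1) = 0)).resolve_left h12
  linear_combination (-2) * h1 + (qz (-6) * ia ^ 3) * jj3_6 - 14 * jj 49 ^ 3 * ia ^ 3 * hq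
      - 14 * ((jj 49 * ia) ^ 2 + jj 49 * ia + 1) * ia_mul

abbrev V2 : LaurentSeries ℤ →+* LaurentSeries ℤ := Vb 2 two_pos
def Kd : LaurentSeries ℤ := V2 Cc
def Ke : LaurentSeries ℤ := V2 Ca
def Kf : LaurentSeries ℤ := V2 Cb
def xi2 : LaurentSeries ℤ := V2 xi

theorem xi2_eq : xi2 = Kd + Ke + Kf - 1 := by
  rw [xi2, xi_eq, map_sub, map_add, map_add, map_one, Kd, Ke, Kf]; ring

theorem def1 : Kd * Ke * Kf + 1 = 0 := by
  have := congrArg V2 abc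
  rw [map_add, map_mul, map_mul, map_one, map_zero] at this
  rw [Kd, Ke, Kf]
  linear_combination this

theorem Kd_Cl : Kd ∈ Cl 3 := Cl_cast 3 (Vb_Cl 2 two_pos 5 _ Cc_Cl)
theorem Ke_Cl : Ke ∈ Cl 6 := Cl_cast 6 (Vb_Cl 2 two_pos 3 _ Ca_Cl)
theorem Kf_Cl : Kf ∈ Cl 5 := Cl_cast 5 (Vb_Cl 2 two_pos 6 _ Cb_Cl)

theorem V2_l {f : LaurentSeries ℤ} {n x : ℤ} (h : f ∈ IM n ∧ f.coeff n = x) :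
    V2 f ∈ IM (2 * n) ∧ (V2 f).coeff (2 * n) = x :=
  ⟨by simpa using Vb_IM 2 two_pos n f h.1, by simpa [h.2] using Vb_coeff 2 two_pos f n⟩

theorem mul_l {f g : LaurentSeries ℤ} {n x m y : ℤ} (h : f ∈ IM n ∧ f.coeff n = x)
    (h' : g ∈ IM m ∧ g.coeff m = y) : f * g ∈ IM (n + m) ∧ (f * g).coeff (n + m) = x * y :=
  ⟨IM_mul h.1 h'.1, by rw [IM_c0 h.1 h'.1, h.2, h'.2]⟩

theorem sub_l {f g : LaurentSeries ℤ} {n x y : ℤ} (h : f ∈ IM n ∧ f.coeff n = x)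
    (h' : g ∈ IM n ∧ g.coeff n = y) : f - g ∈ IM n ∧ (f - g).coeff n = x - y :=
  ⟨sub_mem h.1 h'.1, by rw [HahnSeries.coeff_sub, h.2, h'.2]⟩

theorem mono_l {f : LaurentSeries ℤ} {n x : ℤ} (m : ℤ) (h : f ∈ IM n ∧ f.coeff n = x) (hm : m < n) :
    f ∈ IM m ∧ f.coeff m = 0 := ⟨IM_mono hm.le h.1, h.1 m hm⟩

theorem not_bad : (Cc * Kf - Ca) * (Ca * Kd - Cb) * (Cb * Ke - Cc) ≠ -1 := by
  have hd := V2_l Cc_l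
  have he := V2_l Ca_l
  have hf := V2_l Cb_l
  have h1 := sub_l (mul_l Cc_l hf) (mono_l (-2 + 2 * -1) Ca_l (by norm_num))
  have h2 := sub_l (mul_l Ca_l hd) Cb_l
  have h3 := sub_l (mono_l (-2) (mul_l Cb_l he) (by norm_num)) Cc_l
  have h := (mul_l (mul_l h1 h2) h3).2
  intro h'
  change (((Cc * Kf - Ca) * (Ca * Kd - Cb) * (Cb * Ke - Cc)).coeff _ = _) at h
  rw [h'] at h
  norm_num at h

def Qq (r : ℤ) : LaurentSeries ℤ := cp r Ph * jj 98 * ia ^ 2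

theorem Qq_Cl (r : ℤ) : Qq r ∈ Cl r := by
  have := Cl_mul (Cl_mul (cp_Cl r Ph) jj98_Cl) (Cl_mul ia_Cl ia_Cl)
  rw [Qq, sq]
  exact Cl_cast r this (by norm_num)

theorem Qq0 : Qq 0 = 1 := by
  have h := congrArg (Vb 49 (by norm_num)) gauss
  rw [map_mul, map_pow, Vb_jj _ _ _ one_pos, Vb_jj _ _ _ two_pos] at h
  rw [Qq, Ph0]
  linear_combination ia ^ 2 * h + (jj 49 * ia + 1) * ia_mul

theorem xi_sq : xi ^ 2 = xi2 * (1 + Qq 1 + Qq 2 + Qq 4) := by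
  have h := cp_sum Ph
  simp only [Finset.sum_range_succ, Finset.sum_range_zero] at h
  push_cast at h
  rw [Ph_no 3 (by norm_num), Ph_no 5 (by norm_num), Ph_no 6 (by norm_num)] at h
  have hQ : 1 + Qq 1 + Qq 2 + Qq 4 = Ph * jj 98 * ia ^ 2 := by
    rw [← Qq0, ← h, Qq, Qq, Qq, Qq]
    ring
  have h2 := congrArg V2 ia_mul
  rw [map_mul, Vb_jj _ _ _ (by norm_num), map_one] at h2
  have hq : (qz (-2) ^ 2 : LaurentSeries ℤ) = qz (-4) := by rw [qz_pow]; rfl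
  rw [hQ, xi2, xi, map_mul, map_mul, Vb_jj _ _ _ one_pos, Vb_qz, mul_pow, mul_pow, hq,
    ← gauss]
  push_cast
  norm_num at h2 ⊢
  linear_combination (-qz (-4) * Ph * jj 2 * ia ^ 2) * h2

theorem Cl_m2 {r s : ℤ} (u : ℤ) {f g : LaurentSeries ℤ} (hf : f ∈ Cl r) (hg : g ∈ Cl s)
    (h : (r + s) % 7 = u % 7 := by norm_num) : f * g ∈ Cl u := Cl_cast u (Cl_mul hf hg) h

theorem kl : Klein Ca Cb Cc Kd Ke Kf := by
  have h := xi_sq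
  rw [xi_eq, xi2_eq] at h
  generalize hx : Qq 1 = x at h
  generalize hy : Qq 2 = y at h
  generalize hz : Qq 4 = z at h
  have hx := hx ▸ Qq_Cl 1
  have hy := hy ▸ Qq_Cl 2
  have hz := hz ▸ Qq_Cl 4
  have ha := Ca_Cl
  have hb := Cb_Cl
  have hc := Cc_Cl
  have hd := Kd_Cl
  have he := Ke_Cl
  have hf := Kf_Cl
  have H := Cl_sum (K := ℤ) (fun r => match r with
    | 0 => ((2 : ℤ) : LaurentSeries ℤ) * 1 - (Kd * z + Ke * x + Kf * y)
    | 1 => ((2 : ℤ) : LaurentSeries ℤ) * (Ca * Cc) + x - Ke * y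
    | 2 => ((2 : ℤ) : LaurentSeries ℤ) * (Ca * Cb) + y - Kf * z
    | 3 => Cc * Cc - ((2 : ℤ) : LaurentSeries ℤ) * Ca - Kd - Ke * z
    | 4 => ((2 : ℤ) : LaurentSeries ℤ) * (Cb * Cc) + z - Kd * x
    | 5 => Cb * Cb - ((2 : ℤ) : LaurentSeries ℤ) * Cc - Kf - Kd * y
    | 6 => Ca * Ca - ((2 : ℤ) : LaurentSeries ℤ) * Cb - Ke - Kf * x
    | _ => 0) (fun r hr => ?_) ?_
  · have r1 := H 1 (by norm_num)
    have r2 := H 2 (by norm_num)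
    have r3 := H 3 (by norm_num)
    have r4 := H 4 (by norm_num)
    have r5 := H 5 (by norm_num)
    have r6 := H 6 (by norm_num)
    push_cast at r1 r2 r3 r4 r5 r6
    exact klein_alg (by exact_mod_cast num_ne 2 (by norm_num)) _ _ _ _ _ _ x y z abc def1 r1 r2 r4 r3 r6 r5 not_bad
  · interval_cases r
    · exact sub_mem (Cl_k _ Cl_one) (add_mem (add_mem (Cl_m2 0 hd hz) (Cl_m2 0 he hx)) (Cl_m2 0 hf hy))
    · exact sub_mem (add_mem (Cl_k _ (Cl_mul ha hc)) hx) (Cl_m2 1 he hy)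
    · exact sub_mem (add_mem (Cl_k _ (Cl_mul ha hb)) hy) (Cl_m2 2 hf hz)
    · exact sub_mem (sub_mem (sub_mem (Cl_m2 3 hc hc) (Cl_k _ ha)) hd) (Cl_m2 3 he hz)
    · exact sub_mem (add_mem (Cl_k _ (Cl_mul hb hc)) hz) (Cl_m2 4 hd hx)
    · exact sub_mem (sub_mem (sub_mem (Cl_m2 5 hb hb) (Cl_k _ hc)) hf) (Cl_m2 5 hd hy)
    · exact sub_mem (sub_mem (sub_mem (Cl_m2 6 ha ha) (Cl_k _ hb)) he) (Cl_m2 6 hf hx)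
  · simp only [Finset.sum_range_succ, Finset.sum_range_zero]
    push_cast
    linear_combination h

def sg (z : ℂˣ) : LaurentSeries ℤ →+* LaurentSeries ℂ where
  toFun f :=
    { coeff := fun n => ((z ^ n : ℂˣ) : ℂ) * (f.coeff n : ℂ)
      isPWO_support' := f.isPWO_support.mono fun n hn => by
        rw [Function.mem_support] at hn
        rw [HahnSeries.mem_support]
        intro h
        rw [h] at hn
        simp at hn }
  map_one' := by
    ext n
    change ((z ^ n : ℂˣ) : ℂ) * (((1 : LaurentSeries ℤ).coeff n : ℤ) : ℂ) = _
    rw [HahnSeries.coeff_one, HahnSeries.coeff_one]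
    split_ifs with h
    · simp [h]
    · simp
  map_zero' := by
    ext n
    change ((z ^ n : ℂˣ) : ℂ) * (((0 : LaurentSeries ℤ).coeff n : ℤ) : ℂ) = _
    simp
  map_add' f g := by
    ext n
    change ((z ^ n : ℂˣ) : ℂ) * (((f + g).coeff n : ℤ) : ℂ) = ((z ^ n : ℂˣ) : ℂ) * (f.coeff n : ℂ) + ((z ^ n : ℂˣ) : ℂ) * (g.coeff n : ℂ)
    rw [HahnSeries.coeff_add]
    push_cast
    ring
  map_mul' f g := by
    ext n
    change ((z ^ n : ℂˣ) : ℂ) * (((f * g).coeff n : ℤ) : ℂ) = _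
    rw [HahnSeries.coeff_mul, HahnSeries.coeff_mul]
    rw [Int.cast_sum, Finset.mul_sum]
    have key : ∀ (h : LaurentSeries ℤ) (m : ℤ), ((z ^ m : ℂˣ) : ℂ) * (h.coeff m : ℂ) ≠ 0 ↔ h.coeff m ≠ 0 := by
      intro h m
      rw [mul_ne_zero_iff]
      exact ⟨fun h => by exact_mod_cast h.2, fun h => ⟨Units.ne_zero _, by exact_mod_cast h⟩⟩
    refine Finset.sum_congr ?_ ?_
    · ext ⟨i, j⟩
      simp only [Finset.mem_antidiagonal, HahnSeries.mem_support, key]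
    · rintro ⟨i, j⟩ hij
      rw [Finset.mem_antidiagonal] at hij
      have e : i + j = n := hij.2.2
      change _ * (((f.coeff i * g.coeff j : ℤ) : ℂ)) = (((z ^ i : ℂˣ) : ℂ) * (f.coeff i : ℂ)) * (((z ^ j : ℂˣ) : ℂ) * (g.coeff j : ℂ))
      rw [← e, zpow_add]
      push_cast
      ring

theorem sg_coeff (z : ℂˣ) (f : LaurentSeries ℤ) (n : ℤ) :
    (sg z f).coeff n = ((z ^ n : ℂˣ) : ℂ) * (f.coeff n : ℂ) := rfl

theorem sg_inj (z : ℂˣ) : Function.Injective (sg z) := by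
  rw [injective_iff_map_eq_zero]
  intro f h
  ext n
  have := congrArg (fun f => f.coeff n) h
  beta_reduce at this
  rw [sg_coeff] at this
  have := (mul_eq_zero.1 this).resolve_left (Units.ne_zero _)
  exact_mod_cast this

theorem sg_IM (z : ℂˣ) (M : ℤ) (f : LaurentSeries ℤ) (hf : f ∈ IM M) : sg z f ∈ IM M := fun n hn => by
  rw [sg_coeff, hf n hn]; simp

theorem sg_Cg (z : ℂˣ) (M : ℤ) (f g : LaurentSeries ℤ) (h : Cg M f g) : Cg M (sg z f) (sg z g) :=
  ⟨sg_IM z 0 _ h.l, sg_IM z 0 _ h.r, by rw [← map_sub]; exact sg_IM z M _ h.s⟩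

theorem sg_qz (z : ℂˣ) (m : ℤ) : sg z (qz m) = HahnSeries.C ((z ^ m : ℂˣ) : ℂ) * qz m := by
  ext n
  rw [sg_coeff, coeff_qz, HahnSeries.C_mul_eq_smul, HahnSeries.coeff_smul, coeff_qz, smul_eq_mul]
  split_ifs with h
  · rw [h]; simp
  · simp

theorem sg_Cl0 (z : ℂˣ) (hz : z ^ 7 = 1) (f : LaurentSeries ℤ) (hf : f ∈ Cl 0) : sg z f = sg 1 f := by
  ext n
  rw [sg_coeff, sg_coeff]
  by_cases h : n % 7 = 0 % 7
  · have e : n = 7 * (n / 7) := by omega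
    rw [e, zpow_mul]
    norm_cast
    rw [hz]
    simp
  · rw [hf n h]; simp

theorem vieta7 {R : Type*} [CommRing R] [IsDomain R] (r : ℕ → R)
    (hr : Set.InjOn r (Finset.range 7 : Finset ℕ)) (c0 c1 c2 c3 c4 c5 c6 : R)
    (h : ∀ i < 7, r i ^ 7 + c6 * r i ^ 6 + c5 * r i ^ 5 + c4 * r i ^ 4 + c3 * r i ^ 3 + c2 * r i ^ 2
      + c1 * r i + c0 = 0) : ∏ i ∈ Finset.range 7, r i = - c0 := by
  open Polynomial in
  have hd : (X ^ 7 + C c6 * X ^ 6 + C c5 * X ^ 5 + C c4 * X ^ 4 + C c3 * X ^ 3 + C c2 * X ^ 2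
      + C c1 * X + C c0 : R[X]).degree = 7 := by compute_degree!
  have hn : (X ^ 7 + C c6 * X ^ 6 + C c5 * X ^ 5 + C c4 * X ^ 4 + C c3 * X ^ 3 + C c2 * X ^ 2
      + C c1 * X + C c0 : R[X]).natDegree = 7 := natDegree_eq_of_degree_eq_some hd
  have hm : (X ^ 7 + C c6 * X ^ 6 + C c5 * X ^ 5 + C c4 * X ^ 4 + C c3 * X ^ 3 + C c2 * X ^ 2
      + C c1 * X + C c0 : R[X]).Monic := by
    monicity!
  have hm2 : (∏ i ∈ Finset.range 7, (X - C (r i)) : R[X]).Monic := monic_prod_of_monic _ _ fun i _ => monic_X_sub_C _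
  have hd2 : (∏ i ∈ Finset.range 7, (X - C (r i)) : R[X]).degree = 7 := by
    rw [degree_prod]
    simp
  have := eq_of_degree_le_of_eval_index_eq (Finset.range 7) hr (by rw [hd]; simp) (hd.trans hd2.symm)
    (hm.trans hm2.symm) (fun i hi => by
      rw [eval_prod, Finset.prod_eq_zero hi (by simp)]
      rw [Finset.mem_range] at hi
      simpa using h i hi)
  have := congrArg (eval 0) this
  rw [eval_prod] at this
  simp only [eval_add, eval_mul, eval_C, eval_X, eval_pow, eval_sub, zero_sub, Finset.prod_neg] at this
  simp at this
  rw [this]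
  ring

theorem zet : ∃ z : ℂˣ, IsPrimitiveRoot z 7 := by
  obtain ⟨z, hz⟩ : ∃ z : ℂ, IsPrimitiveRoot z 7 := ⟨_, Complex.isPrimitiveRoot_exp 7 (by norm_num)⟩
  have : (7 : ℕ) ≠ 0 := by norm_num
  exact ⟨(hz.isUnit this).unit, hz.isUnit_unit this⟩

theorem rootprod (z : ℂˣ) (hz : IsPrimitiveRoot z 7) (m : ℕ) (hm : ¬ 7 ∣ m) :
    ∏ i ∈ Finset.range 7, sg (z ^ i) (1 - qz (m : ℤ)) = 1 - qz (7 * m : ℤ) := by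
  have h1 : IsPrimitiveRoot (z ^ m) 7 := hz.pow_of_coprime m ((Nat.Prime.coprime_iff_not_dvd (by norm_num)).2 hm).symm
  have h2 : IsPrimitiveRoot (HahnSeries.C (((z ^ m : ℂˣ) : ℂ)) : LaurentSeries ℂ) 7 :=
    ((IsPrimitiveRoot.coe_units_iff).2 h1).map_of_injective HahnSeries.C_injective
  have := X_pow_sub_C_eq_prod h2 (by norm_num) (rfl : (qz m : LaurentSeries ℂ) ^ 7 = _)
  have := congrArg (Polynomial.eval 1) this
  rw [Polynomial.eval_prod] at this
  simp only [Polynomial.eval_sub, Polynomial.eval_pow, Polynomial.eval_X, Polynomial.eval_C, one_pow] at this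
  rw [qz_pow] at this
  rw [mul_comm (7 : ℤ), show ((m : ℤ) * 7) = m * (7 : ℕ) by norm_num, this]
  refine Finset.prod_congr rfl fun i _ => ?_
  rw [map_sub, map_one, sg_qz, ← map_pow]
  congr 3
  norm_cast
  rw [← pow_mul, ← pow_mul, mul_comm]

theorem rootprod7 (z : ℂˣ) (hz : IsPrimitiveRoot z 7) (m : ℕ) :
    ∏ i ∈ Finset.range 7, sg (z ^ i) (1 - qz (7 * m : ℤ)) = (1 - qz (7 * m : ℤ)) ^ 7 := by
  rw [Finset.prod_eq_pow_card (b := (1 - qz (7 * m : ℤ)))]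
  · simp
  · intro i _
    rw [map_sub, map_one, sg_qz, zpow_mul]
    have : (z ^ i) ^ (7 : ℤ) = 1 := by
      norm_cast
      rw [← pow_mul, mul_comm, pow_mul, hz.pow_eq_one, one_pow]
    rw [this]
    simp

theorem normpoc (z : ℂˣ) (hz : IsPrimitiveRoot z 7) (N : ℕ) :
    (∏ i ∈ Finset.range 7, sg (z ^ i) (poc 1 (7 * N))) * poc 49 N = poc 7 N ^ 7 * poc 7 (7 * N) := by
  induction N with
  | zero => simp [poc]
  | succ N ih =>
    have e1 : (poc 1 (7 * (N + 1)) : LaurentSeries ℤ) = poc 1 (7 * N) * ((1 - qz ((7 * N + 1 : ℕ) : ℤ)) *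
        (1 - qz ((7 * N + 2 : ℕ) : ℤ)) * (1 - qz ((7 * N + 3 : ℕ) : ℤ)) * (1 - qz ((7 * N + 4 : ℕ) : ℤ)) *
        (1 - qz ((7 * N + 5 : ℕ) : ℤ)) * (1 - qz ((7 * N + 6 : ℕ) : ℤ)) * (1 - qz (7 * (N + 1 : ℕ) : ℤ))) := by
      rw [show 7 * (N + 1) = 7 * N + 1 + 1 + 1 + 1 + 1 + 1 + 1 by ring]
      simp only [poc, Finset.prod_range_succ, mul_assoc]
      push_cast
      ring_nf
    have e2 : (poc 7 (7 * (N + 1)) : LaurentSeries ℂ) = poc 7 (7 * N) * ((1 - qz (7 * (7 * N + 1 : ℕ) : ℤ)) *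
        (1 - qz (7 * (7 * N + 2 : ℕ) : ℤ)) * (1 - qz (7 * (7 * N + 3 : ℕ) : ℤ)) * (1 - qz (7 * (7 * N + 4 : ℕ) : ℤ)) *
        (1 - qz (7 * (7 * N + 5 : ℕ) : ℤ)) * (1 - qz (7 * (7 * N + 6 : ℕ) : ℤ)) * (1 - qz (49 * (N + 1 : ℕ) : ℤ))) := by
      rw [show 7 * (N + 1) = 7 * N + 1 + 1 + 1 + 1 + 1 + 1 + 1 by ring]
      simp only [poc, Finset.prod_range_succ, mul_assoc]
      push_cast
      ring_nf
    have e3 : (poc 49 (N + 1) : LaurentSeries ℂ) = poc 49 N * (1 - qz (49 * (N + 1 : ℕ) : ℤ)) := by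
      rw [poc, Finset.prod_range_succ, ← poc]; push_cast; rfl
    have e4 : (poc 7 (N + 1) : LaurentSeries ℂ) = poc 7 N * (1 - qz (7 * (N + 1 : ℕ) : ℤ)) := by
      rw [poc, Finset.prod_range_succ, ← poc]; push_cast; rfl
    rw [e1, e2, e3, e4]
    simp only [map_mul, Finset.prod_mul_distrib]
    rw [rootprod z hz _ (by omega), rootprod z hz _ (by omega), rootprod z hz _ (by omega),
      rootprod z hz _ (by omega), rootprod z hz _ (by omega), rootprod z hz _ (by omega), rootprod7 z hz]
    generalize (∏ i ∈ Finset.range 7, sg (z ^ i) (poc 1 (7 * N))) = F at *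
    generalize (poc 7 (7 * N) : LaurentSeries ℂ) = G at *
    linear_combination (exp := 1) ((1 - qz (7 * (7 * N + 1 : ℕ) : ℤ)) *
        (1 - qz (7 * (7 * N + 2 : ℕ) : ℤ)) * (1 - qz (7 * (7 * N + 3 : ℕ) : ℤ)) * (1 - qz (7 * (7 * N + 4 : ℕ) : ℤ)) *
        (1 - qz (7 * (7 * N + 5 : ℕ) : ℤ)) * (1 - qz (7 * (7 * N + 6 : ℕ) : ℤ)) * (1 - qz (49 * (N + 1 : ℕ) : ℤ)) * (1 - qz (7 * (N + 1 : ℕ) : ℤ)) ^ 7) * ih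

theorem sg1_poc (b : ℤ) (n : ℕ) : sg 1 (poc b n) = poc b n := by
  simp only [poc, map_prod, map_sub, map_one, sg_qz]
  simp

theorem normjj (z : ℂˣ) (hz : IsPrimitiveRoot z 7) :
    (∏ i ∈ Finset.range 7, sg (z ^ i) (jj 1)) * sg 1 (jj 49) = sg 1 (jj 7) ^ 8 := by
  refine Cg.eq fun M => ?_
  have h1 : ∀ i, Cg (M : ℤ) (sg (z ^ i) (jj 1)) (sg (z ^ i) (poc 1 (7 * M))) := fun i =>
    sg_Cg _ _ _ _ (jj_Cg 1 one_pos M (7 * M) (by omega))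
  have h2 := sg_Cg 1 _ _ _ (jj_Cg 49 (by norm_num) M M le_rfl)
  have h3 := sg_Cg 1 _ _ _ (jj_Cg 7 (by norm_num) M M le_rfl)
  have h4 := sg_Cg 1 _ _ _ (jj_Cg 7 (by norm_num) M (7 * M) (by omega))
  have A := (Cg.prod (Finset.range 7) _ _ (fun i _ => h1 i)).mul h2
  have B := (h3.pow 7).mul h4
  rw [← pow_succ] at B
  refine A.trans ?_
  refine Cg.trans ?_ B.symm
  have e := normpoc z hz M
  rw [sg1_poc, sg1_poc, sg1_poc]
  push_cast
  rw [e]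
  exact ⟨B.r |> fun h => by rw [sg1_poc, sg1_poc] at h; exact_mod_cast h, B.r |> fun h => by rw [sg1_poc, sg1_poc] at h; exact_mod_cast h, by simp [zero_mem]⟩

theorem Cl_pow {r : ℤ} {f : LaurentSeries ℤ} (hf : f ∈ Cl r) (n : ℕ) : f ^ n ∈ Cl (n * r) := by
  induction n with
  | zero => simpa using Cl_one
  | succ n ih =>
    rw [pow_succ]
    have := Cl_mul ih hf
    convert this using 1
    push_cast
    ring_nf

theorem XX_Cl {a b c : LaurentSeries ℤ} (ha : a ∈ Cl 3) (hb : b ∈ Cl 6) (hc : c ∈ Cl 5) : XX a b c ∈ Cl 0 := by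
  rw [XX]
  refine sub_mem ?_ (add_mem (add_mem ?_ ?_) ?_)
  · have := Cl_k (u := 0) (-8) Cl_one
    simpa using this
  · exact Cl_m2 0 (Cl_pow ha 3) hc
  · exact Cl_m2 0 (Cl_pow hb 3) ha
  · exact Cl_m2 0 (Cl_pow hc 3) hb

theorem xi_l : xi ∈ IM (-2) ∧ xi.coeff (-2) = 1 := by
  have h1 : (qz (-2) : LaurentSeries ℤ) ∈ IM (-2) ∧ (qz (-2) : LaurentSeries ℤ).coeff (-2) = 1 :=
    ⟨qz_mem le_rfl, by rw [coeff_qz]; simp⟩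
  exact mul_l (mul_l h1 ⟨jj_mem 1, jc0⟩) ⟨ia_mem, ia_c0⟩

theorem rel_ofne (z : ℂˣ) (hz : IsPrimitiveRoot z 7) :
    Set.InjOn (fun i => sg (z ^ i) xi) (Finset.range 7 : Finset ℕ) := by
  intro i hi j hj h
  rw [Finset.coe_range, Set.mem_Iio] at hi hj
  have h := congrArg (fun f => f.coeff (-2)) h
  beta_reduce at h
  rw [sg_coeff, sg_coeff, xi_l.2] at h
  simp only [Int.cast_one, mul_one, Units.val_inj, zpow_neg, inv_inj] at h
  have h8 : ∀ i : ℕ, ((z ^ i) ^ (2 : ℤ)) ^ 4 = z ^ i := by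
    intro i
    norm_cast
    rw [← pow_mul, show 2 * 4 = 7 + 1 by norm_num, pow_succ, ← pow_mul, mul_comm i, pow_mul, hz.pow_eq_one,
      one_pow, one_mul]
  have h' := congrArg (· ^ 4) h
  beta_reduce at h'
  rw [h8, h8] at h'
  exact hz.pow_inj hi hj h'

theorem normxi (z : ℂˣ) (hz : IsPrimitiveRoot z 7) :
    ∏ i ∈ Finset.range 7, sg (z ^ i) xi = sg 1 ((qz (-7) * jj 7 ^ 4 * ia ^ 4) ^ 2) := by
  have hi : ∀ i : ℕ, (z ^ i) ^ 7 = 1 := fun i => by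
    rw [← pow_mul, mul_comm, pow_mul, hz.pow_eq_one, one_pow]
  have h1 : ∏ i ∈ Finset.range 7, sg (z ^ i) (qz (-2)) = qz (-14) := by
    simp only [sg_qz, Finset.prod_mul_distrib, ← map_prod]
    rw [Finset.prod_const, Finset.card_range, qz_pow]
    have : ∏ i ∈ Finset.range 7, (((z ^ i) ^ (-2 : ℤ) : ℂˣ) : ℂ) = 1 := by
      rw [← Units.coe_prod, Finset.prod_zpow, Finset.prod_pow_eq_pow_sum,
        show ∑ i ∈ Finset.range 7, i = 7 * 3 by decide, pow_mul, hz.pow_eq_one]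
      simp
    rw [this, map_one, one_mul]
    norm_num
  have h2 : ∏ i ∈ Finset.range 7, sg (z ^ i) ia = sg 1 ia ^ 7 := by
    rw [Finset.prod_congr rfl fun i _ => sg_Cl0 _ (hi i) _ ia_Cl]
    simp
  have h3 := normjj z hz
  have h4 := congrArg (sg 1) ia_mul
  rw [map_mul, map_one] at h4
  simp only [xi, map_mul, Finset.prod_mul_distrib, map_pow]
  rw [h1, h2]
  have h5 : (sg 1 (qz (-7))) ^ 2 = qz (-14) := by
    rw [sg_qz]
    simp [qz_pow]
  rw [mul_pow, mul_pow, h5]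
  generalize (∏ i ∈ Finset.range 7, sg (z ^ i) (jj 1)) = F at *
  linear_combination (exp := 1) qz (-14) * sg 1 ia ^ 8 * h3 - qz (-14) * F * sg 1 ia ^ 7 * h4

theorem Pxi : P7 xi (XX Ca Cb Cc) = 0 := by rw [xi_eq]; exact P7_eq kl

theorem XXsq : (XX Ca Cb Cc) ^ 2 = (qz (-7) * jj 7 ^ 4 * ia ^ 4) ^ 2 := by
  obtain ⟨z, hz⟩ := zet
  apply sg_inj 1
  rw [← normxi z hz]
  have hX := XX_Cl Ca_Cl Cb_Cl Cc_Cl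
  set X := XX Ca Cb Cc with hXd
  have hr : ∀ i, P7 (sg (z ^ i) xi) (sg 1 X) = 0 := by
    intro i
    have := congrArg (sg (z ^ i)) Pxi
    rw [← hXd] at this
    rw [← sg_Cl0 (z ^ i) (by rw [← pow_mul, mul_comm, pow_mul, hz.pow_eq_one, one_pow]) X hX]
    simp only [P7, map_add, map_sub, map_mul, map_pow, map_zero, map_ofNat] at this ⊢
    exact this
  have := vieta7 (fun i => sg (z ^ i) xi) (rel_ofne z hz) (-(sg 1 X) ^ 2) (343 + 49 * sg 1 X) (343 + 35 * sg 1 X)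
    (147 + 7 * sg 1 X) 49 21 7 (fun i _ => by
      beta_reduce
      rw [← hr i, P7]; ring)
  rw [this, neg_neg, map_pow]

theorem XX_l : XX Ca Cb Cc ∈ IM (-7) ∧ (XX Ca Cb Cc).coeff (-7) = 1 := by
  have h1 := mono_l (-7) (mul_l (mul_l (mul_l Ca_l Ca_l) Ca_l) Cc_l) (by norm_num)
  have h2 := mono_l (-7) (mul_l (mul_l (mul_l Cb_l Cb_l) Cb_l) Ca_l) (by norm_num)
  have h3 := mul_l (mul_l (mul_l Cc_l Cc_l) Cc_l) Cb_l
  have h0 : (-8 : LaurentSeries ℤ) ∈ IM 0 ∧ (-8 : LaurentSeries ℤ).coeff 0 = -8 := by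
    have h : (-8 : LaurentSeries ℤ) = ((-8 : ℤ) : LaurentSeries ℤ) * 1 := by norm_num
    rw [h]
    refine ⟨fun i hi => ?_, ?_⟩
    · rw [coeff_int_mul, IM_one i hi, mul_zero]
    · rw [coeff_int_mul, HahnSeries.coeff_one]; simp
  have h := sub_l (sub_l (sub_l (mono_l (-7) h0 (by norm_num)) h1) h2) h3
  have e : XX Ca Cb Cc = -8 - Ca * Ca * Ca * Cc - Cb * Cb * Cb * Ca - Cc * Cc * Cc * Cb := by
    rw [XX]; ring
  rw [e]
  norm_num at h ⊢
  exact h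

theorem XXeq : XX Ca Cb Cc = qz (-7) * jj 7 ^ 4 * ia ^ 4 := by
  rcases sq_eq_sq_iff_eq_or_eq_neg.1 XXsq with h | h
  · exact h
  · exfalso
    have h1 := XX_l.2
    have hq : (qz (-7) : LaurentSeries ℤ) ∈ IM (-7) ∧ (qz (-7) : LaurentSeries ℤ).coeff (-7) = 1 :=
      ⟨qz_mem le_rfl, by rw [coeff_qz]; simp⟩
    have hj : jj 7 ∈ IM 0 ∧ (jj 7).coeff 0 = 1 := by
      refine ⟨jj_mem 7, ?_⟩
      have h2 := Vb_coeff 7 (by norm_num) (jj 1) 0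
      rw [Vb_jj _ _ _ one_pos, jc0] at h2
      simpa using h2
    have hi : ia ∈ IM 0 ∧ ia.coeff 0 = 1 := ⟨ia_mem, ia_c0⟩
    have hm := (mul_l (mul_l hq (mul_l (mul_l (mul_l hj hj) hj) hj)) (mul_l (mul_l (mul_l hi hi) hi) hi)).2
    rw [h, HahnSeries.coeff_neg] at h1
    norm_num at hm
    rw [show qz (-7) * jj 7 ^ 4 * ia ^ 4 = qz (-7) * (jj 7 * jj 7 * jj 7 * jj 7) * (ia * ia * ia * ia) by ring, hm] at h1
    norm_num at h1

abbrev V7 : LaurentSeries ℤ →+* LaurentSeries ℤ := Vb 7 (by norm_num)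

theorem V27 (f : LaurentSeries ℤ) : V7 (V2 f) = V2 (V7 f) := by
  ext n
  by_cases h7 : (7 : ℤ) ∣ n
  · obtain ⟨m, rfl⟩ := h7
    by_cases h2 : (2 : ℤ) ∣ m
    · obtain ⟨k, rfl⟩ := h2
      have e1 := Vb_coeff 7 (by norm_num) (V2 f) (2 * k)
      have e2 := Vb_coeff 2 two_pos f k
      have e3 := Vb_coeff 2 two_pos (V7 f) (7 * k)
      have e4 := Vb_coeff 7 (by norm_num) f k
      push_cast at e1 e2 e3 e4
      rw [e1, e2, show (7 : ℤ) * (2 * k) = 2 * (7 * k) by ring, e3, e4]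
    · have e1 := Vb_coeff 7 (by norm_num) (V2 f) m
      push_cast at e1
      rw [e1, Vb_coeff0 2 two_pos f m h2, Vb_coeff0 2 two_pos (V7 f) (7 * m) (by omega)]
  · rw [Vb_coeff0 7 (by norm_num) _ n h7]
    by_cases h2 : (2 : ℤ) ∣ n
    · obtain ⟨m, rfl⟩ := h2
      have e1 := Vb_coeff 2 two_pos (V7 f) m
      push_cast at e1
      rw [e1, Vb_coeff0 7 (by norm_num) _ m (by omega)]
    · rw [Vb_coeff0 2 two_pos _ n h2]

def Tu : (LaurentSeries ℤ)ˣ := qu * ju 7 (by norm_num) ^ 4 * (ju 1 one_pos)⁻¹ ^ 4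
def Su : (LaurentSeries ℤ)ˣ := Units.map V2 Tu
def Xu : (LaurentSeries ℤ)ˣ := qu ^ (-2 : ℤ) * ju 1 one_pos * (ju 49 (by norm_num))⁻¹
def Yu : (LaurentSeries ℤ)ˣ := Units.map V2 Xu

theorem Xu_val : (Xu : LaurentSeries ℤ) = xi := by
  rw [Xu, Units.val_mul, Units.val_mul, qu_zpow]; rfl

theorem Yu_val : (Yu : LaurentSeries ℤ) = xi2 := by
  rw [Yu, xi2, ← Xu_val]; rfl

def w1 : LaurentSeries ℤ := (((ju 1 one_pos)⁻¹ : (LaurentSeries ℤ)ˣ) : LaurentSeries ℤ)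

theorem w1_mul : jj 1 * w1 = 1 := (ju 1 one_pos).mul_inv

theorem Tu_val : (Tu : LaurentSeries ℤ) = qz 1 * jj 7 ^ 4 * w1 ^ 4 := by
  have := qu_zpow (K := ℤ) 1
  rw [zpow_one] at this
  rw [Tu, Units.val_mul, Units.val_mul, this]; rfl

theorem V7T : V7 Tu = qz 7 * jj 49 ^ 4 * V7 w1 ^ 4 := by
  rw [Tu_val, map_mul, map_mul, map_pow, map_pow, Vb_jj _ _ _ (by norm_num), Vb_qz]; rfl

theorem w7_mul : jj 7 * V7 w1 = 1 := by
  have := congrArg V7 w1_mul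
  rwa [map_mul, map_one, Vb_jj _ _ _ one_pos] at this

theorem qz7 : (qz (-7) * qz 7 : LaurentSeries ℤ) = 1 := by rw [qz_mul]; rfl

theorem XT : XX Ca Cb Cc * V7 Tu = 1 := by
  rw [XXeq, V7T]
  calc qz (-7) * jj 7 ^ 4 * ia ^ 4 * (qz 7 * jj 49 ^ 4 * V7 w1 ^ 4)
      = (qz (-7) * qz 7) * (jj 7 * V7 w1) ^ 4 * (jj 49 * ia) ^ 4 := by ring
    _ = 1 := by rw [qz7, w7_mul, ia_mul]; ring

theorem TTx : (Tu : LaurentSeries ℤ) * V7 Tu * xi ^ 4 = 1 := by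
  have hq : (qz 1 * qz 7 * qz (-2) ^ 4 : LaurentSeries ℤ) = 1 := by rw [qz_pow, qz_mul, qz_mul]; rfl
  rw [V7T, Tu_val, xi]
  calc qz 1 * jj 7 ^ 4 * w1 ^ 4 * (qz 7 * jj 49 ^ 4 * V7 w1 ^ 4) * (qz (-2) * jj 1 * ia) ^ 4
      = (qz 1 * qz 7 * qz (-2) ^ 4) * (jj 7 * V7 w1) ^ 4 * (jj 49 * ia) ^ 4 * (jj 1 * w1) ^ 4 := by ring
    _ = 1 := by rw [hq, w7_mul, ia_mul, w1_mul]; ring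

theorem Su_val : (Su : LaurentSeries ℤ) = V2 Tu := rfl

theorem SSx : (Su : LaurentSeries ℤ) * V7 Su * xi2 ^ 4 = 1 := by
  have := congrArg V2 TTx
  rwa [map_mul, map_mul, map_pow, map_one, ← V27] at this

theorem XX2 : XX Kd Ke Kf = V2 (XX Ca Cb Cc) := by
  simp only [XX, map_sub, map_add, map_mul, map_pow, map_neg, map_ofNat, Kd, Ke, Kf]
  ring

theorem YS : XX Kd Ke Kf * V7 Su = 1 := by
  have := congrArg V2 XT
  rwa [map_mul, map_one, ← V27, ← XX2] at this

theorem hVX : V7 (mn Tu Su (-1) 0) = XX Ca Cb Cc := by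
  have h : V7 (mn Tu Su (-1) 0) * V7 Tu = 1 := by
    rw [← map_mul]
    have : (Tu : LaurentSeries ℤ) = mn Tu Su 1 0 := by simp [mn]
    rw [this]
    rw [mn_mul]
    simp [mn_zero]
  exact left_inv_eq_right_inv h (by rw [mul_comm]; exact XT)

theorem hVY : V7 (mn Tu Su 0 (-1)) = XX Kd Ke Kf := by
  have h : V7 (mn Tu Su 0 (-1)) * V7 Su = 1 := by
    rw [← map_mul]
    have : (Su : LaurentSeries ℤ) = mn Tu Su 0 1 := by simp [mn]
    rw [this]
    rw [mn_mul]
    simp [mn_zero]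
  exact left_inv_eq_right_inv h (by rw [mul_comm]; exact YS)

theorem gg_Cl : gg Ca Cb Cc Kd Ke Kf ∈ Cl 0 := by
  rw [gg]
  refine sub_mem ?_ (add_mem (add_mem ?_ ?_) ?_)
  · have := Cl_k (u := 0) 4 Cl_one
    simpa using this
  · exact Cl_m2 0 (Cl_mul Kd_Cl Cb_Cl) Cc_Cl
  · exact Cl_m2 0 (Cl_mul Ke_Cl Ca_Cl) Cc_Cl
  · exact Cl_m2 0 (Cl_mul Kf_Cl Ca_Cl) Cb_Cl

section UU
variable (U : LaurentSeries ℤ →+ LaurentSeries ℤ)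
  (hU : ∀ (f : LaurentSeries ℤ) (n : ℤ), (U f).coeff n = f.coeff (7 * n))
include hU

theorem VU (f : LaurentSeries ℤ) : V7 (U f) = cp 0 f := by
  ext n
  rw [cp_coeff]
  by_cases h : (7 : ℤ) ∣ n
  · obtain ⟨m, rfl⟩ := h
    have e1 := Vb_coeff 7 (by norm_num) (U f) m
    push_cast at e1
    rw [e1, hU, if_pos (by omega)]
  · rw [Vb_coeff0 7 (by norm_num) _ n h, if_neg (by omega)]

theorem U_V (f h : LaurentSeries ℤ) : U (V7 f * h) = f * U h := by
  apply Vb_inj 7 (by norm_num)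
  rw [VU U hU, map_mul, VU U hU, cp_hom _ _ 0 (Vb7_Cl 7 (by norm_num) dvd_rfl f) 0 0 rfl]

theorem U_V1 (f : LaurentSeries ℤ) : U (V7 f) = f := by
  ext n
  rw [hU]
  exact Vb_coeff 7 (by norm_num) f n

theorem U_k (n : ℕ) [n.AtLeastTwo] (f : LaurentSeries ℤ) :
    U ((OfNat.ofNat n : LaurentSeries ℤ) * f) = (OfNat.ofNat n : LaurentSeries ℤ) * U f := by
  have := U_V U hU (OfNat.ofNat n) f
  rwa [map_ofNat] at this

theorem V_U0 (f : LaurentSeries ℤ) (hf : f ∈ Cl 0) : V7 (U f) = f := by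
  rw [VU U hU]
  ext n
  rw [cp_coeff]
  split_ifs with h
  · rfl
  · exact (hf n h).symm

theorem U_0 {r : ℤ} {f : LaurentSeries ℤ} (hf : f ∈ Cl r) (hr : r % 7 ≠ 0 := by norm_num) : U f = 0 := by
  ext n
  rw [hU, hf _ (by omega)]
  rfl



end UU

section UU
variable (U : LaurentSeries ℤ →+ LaurentSeries ℤ)
  (hU : ∀ (f : LaurentSeries ℤ) (n : ℤ), (U f).coeff n = f.coeff (7 * n))
include hU

structure Pt (f : LaurentSeries ℤ) (p q r : LaurentSeries ℤ) : Prop where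
  e : f = p + q + r
  p : p ∈ Cl 1
  q : q ∈ Cl 2
  r : r ∈ Cl 4

structure Qt (f : LaurentSeries ℤ) (p q r : LaurentSeries ℤ) : Prop where
  e : f = p + q + r
  p : p ∈ Cl 6
  q : q ∈ Cl 5
  r : r ∈ Cl 3

theorem U_PQ {f p q r f' p' q' r' : LaurentSeries ℤ} (P : Pt f p q r) (Q : Qt f' p' q' r') (z : LaurentSeries ℤ)
    (h : p * p' + q * q' + r * r' = V7 z) : U (f * f') = z := by
  have e : f * f' = (p * p' + q * q' + r * r') + p * q' + p * r' + q * p' + q * r' + r * p' + r * q' := by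
    rw [P.e, Q.e]; ring
  rw [e, h, map_add, map_add, map_add, map_add, map_add, map_add, U_V1 U hU,
    U_0 U hU (Cl_mul P.p Q.q), U_0 U hU (Cl_mul P.p Q.r), U_0 U hU (Cl_mul P.q Q.p),
    U_0 U hU (Cl_mul P.q Q.r), U_0 U hU (Cl_mul P.r Q.p), U_0 U hU (Cl_mul P.r Q.q)]
  ring

theorem U_PP {f p q r f' p' q' r' : LaurentSeries ℤ} (P : Pt f p q r) (Q : Pt f' p' q' r') :
    U (f * f') = 0 := by
  have e : f * f' = p * p' + q * q' + r * r' + p * q' + p * r' + q * p' + q * r' + r * p' + r * q' := by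
    rw [P.e, Q.e]; ring
  rw [e, map_add, map_add, map_add, map_add, map_add, map_add, map_add, map_add,
    U_0 U hU (Cl_mul P.p Q.p), U_0 U hU (Cl_mul P.q Q.q), U_0 U hU (Cl_mul P.r Q.r),
    U_0 U hU (Cl_mul P.p Q.q), U_0 U hU (Cl_mul P.p Q.r), U_0 U hU (Cl_mul P.q Q.p),
    U_0 U hU (Cl_mul P.q Q.r), U_0 U hU (Cl_mul P.r Q.p), U_0 U hU (Cl_mul P.r Q.q)]
  ring

theorem U_QQ {f p q r f' p' q' r' : LaurentSeries ℤ} (P : Qt f p q r) (Q : Qt f' p' q' r') :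
    U (f * f') = 0 := by
  have e : f * f' = p * p' + q * q' + r * r' + p * q' + p * r' + q * p' + q * r' + r * p' + r * q' := by
    rw [P.e, Q.e]; ring
  rw [e, map_add, map_add, map_add, map_add, map_add, map_add, map_add, map_add,
    U_0 U hU (Cl_mul P.p Q.p), U_0 U hU (Cl_mul P.q Q.q), U_0 U hU (Cl_mul P.r Q.r),
    U_0 U hU (Cl_mul P.p Q.q), U_0 U hU (Cl_mul P.p Q.r), U_0 U hU (Cl_mul P.q Q.p),
    U_0 U hU (Cl_mul P.q Q.r), U_0 U hU (Cl_mul P.r Q.p), U_0 U hU (Cl_mul P.r Q.q)]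
  ring

theorem U_P {f p q r : LaurentSeries ℤ} (P : Pt f p q r) : U f = 0 := by
  rw [P.e, map_add, map_add, U_0 U hU P.p, U_0 U hU P.q, U_0 U hU P.r]; ring

theorem U_Q {f p q r : LaurentSeries ℤ} (P : Qt f p q r) : U f = 0 := by
  rw [P.e, map_add, map_add, U_0 U hU P.p, U_0 U hU P.q, U_0 U hU P.r]; ring

omit hU in
theorem Pts {a b c : LaurentSeries ℤ} (ha : a ∈ Cl 3) (hb : b ∈ Cl 6) (hc : c ∈ Cl 5) :
    Pt (s1 a b c) (a * c) (b * a) (c * b) ∧ Pt (s2 a b c) (c ^ 3) (a ^ 3) (b ^ 3) ∧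
    Pt (s3 a b c) (a * b ^ 2) (b * c ^ 2) (c * a ^ 2) ∧ Qt (s4 a b c) b c a ∧
    Qt (s5 a b c) (a ^ 2) (b ^ 2) (c ^ 2) ∧ Qt (s6 a b c) (c ^ 4) (a ^ 4) (b ^ 4) := by
  refine ⟨⟨rfl, Cl_m2 1 ha hc, Cl_m2 2 hb ha, Cl_m2 4 hc hb⟩,
    ⟨rfl, Cl_cast 1 (Cl_pow hc 3), Cl_cast 2 (Cl_pow ha 3), Cl_cast 4 (Cl_pow hb 3)⟩,
    ⟨rfl, Cl_m2 1 ha (Cl_pow hb 2), Cl_m2 2 hb (Cl_pow hc 2), Cl_m2 4 hc (Cl_pow ha 2)⟩,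
    ⟨by rw [s4]; ring, hb, hc, ha⟩,
    ⟨by rw [s5]; ring, Cl_cast 6 (Cl_pow ha 2), Cl_cast 5 (Cl_pow hb 2), Cl_cast 3 (Cl_pow hc 2)⟩,
    ⟨by rw [s6]; ring, Cl_cast 6 (Cl_pow hc 4), Cl_cast 5 (Cl_pow ha 4), Cl_cast 3 (Cl_pow hb 4)⟩⟩

theorem gram (x y g : LaurentSeries ℤ) (hx : V7 x = XX Ca Cb Cc) (hy : V7 y = XX Kd Ke Kf)
    (hg : V7 g = gg Ca Cb Cc Kd Ke Kf) (k l : ℕ) (hk : k < 7) (hl : l < 7) :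
    U (bs Ca Cb Cc k * bs Kd Ke Kf l) = MM x y g k l := by
  obtain ⟨P1, P2, P3, P4, P5, P6⟩ := Pts Ca_Cl Cb_Cl Cc_Cl
  obtain ⟨R1, R2, R3, R4, R5, R6⟩ := Pts Kd_Cl Ke_Cl Kf_Cl
  have hg' : 7 - V7 g = gg Kd Ke Kf Ca Cb Cc := by rw [kl.gsw, hg]
  have H := kl
  have H' := kl.symm
  have u1 : U 1 = 1 := by
    have := U_V1 U hU 1
    rwa [map_one] at this
  rcases (show k = 0 ∨ (k = 1 ∨ k = 2 ∨ k = 3) ∨ (k = 4 ∨ k = 5 ∨ k = 6) by omega) with rfl | hk | hk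
  · rw [bs, one_mul]
    interval_cases l <;> simp only [bs, MM, mml, ev_cons, ev_nil]
    · rw [u1]; simp
    · exact U_P U hU R1
    · exact U_P U hU R2
    · exact U_P U hU R3
    · exact U_Q U hU R4
    · exact U_Q U hU R5
    · exact U_Q U hU R6
  · rcases (show l = 0 ∨ (l = 1 ∨ l = 2 ∨ l = 3) ∨ (l = 4 ∨ l = 5 ∨ l = 6) by omega) with rfl | hl | hl
    · rw [show bs Kd Ke Kf 0 = 1 from rfl, mul_one]
      rcases hk with rfl | rfl | rfl <;> simp only [bs, MM, mml, ev_cons, ev_nil]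
      exacts [U_P U hU P1, U_P U hU P2, U_P U hU P3]
    · obtain ⟨_, _, _, p⟩ : ∃ p q r, Pt (bs Ca Cb Cc k) p q r := by
        rcases hk with rfl | rfl | rfl
        exacts [⟨_, _, _, P1⟩, ⟨_, _, _, P2⟩, ⟨_, _, _, P3⟩]
      obtain ⟨_, _, _, q⟩ : ∃ p q r, Pt (bs Kd Ke Kf l) p q r := by
        rcases hl with rfl | rfl | rfl
        exacts [⟨_, _, _, R1⟩, ⟨_, _, _, R2⟩, ⟨_, _, _, R3⟩]
      rw [U_PP U hU p q]
      rcases hk with rfl | rfl | rfl <;> rcases hl with rfl | rfl | rfl <;> rfl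
    · rcases hk with rfl | rfl | rfl <;> rcases hl with rfl | rfl | rfl <;>
        simp only [bs, MM, mml, ev_cons, ev_nil]
      · refine U_PQ U hU P1 R4 _ ?_
        rw [H.T00, ← hg]; simp only [map_add, map_mul, map_pow, map_intCast, map_zero]; push_cast; ring
      · refine U_PQ U hU P1 R5 _ ?_
        rw [H.T01]; simp only [map_add, map_mul, map_pow, map_intCast, map_zero]; push_cast; ring
      · refine U_PQ U hU P1 R6 _ ?_
        rw [H.T02, ← hg, ← hx, ← hy]; simp only [map_add, map_mul, map_pow, map_intCast, map_zero]; push_cast; ring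
      · refine U_PQ U hU P2 R4 _ ?_
        rw [H.T10, ← hg, ← hx]; simp only [map_add, map_mul, map_pow, map_intCast, map_zero]; push_cast; ring
      · refine U_PQ U hU P2 R5 _ ?_
        rw [H.T11, ← hg, ← hx, ← hy]; simp only [map_add, map_mul, map_pow, map_intCast, map_zero]; push_cast; ring
      · refine U_PQ U hU P2 R6 _ ?_
        rw [H.T12, ← hg, ← hx, ← hy]; simp only [map_add, map_mul, map_pow, map_intCast, map_zero]; push_cast; ring
      · refine U_PQ U hU P3 R4 _ ?_
        rw [H.T20, ← hg]; simp only [map_add, map_mul, map_pow, map_intCast, map_zero]; push_cast; ring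
      · refine U_PQ U hU P3 R5 _ ?_
        rw [H.T21, ← hg, ← hx]; simp only [map_add, map_mul, map_pow, map_intCast, map_zero]; push_cast; ring
      · refine U_PQ U hU P3 R6 _ ?_
        rw [H.T22, ← hg, ← hx, ← hy]; simp only [map_add, map_mul, map_pow, map_intCast, map_zero]; push_cast; ring
  · rcases (show l = 0 ∨ (l = 1 ∨ l = 2 ∨ l = 3) ∨ (l = 4 ∨ l = 5 ∨ l = 6) by omega) with rfl | hl | hl
    · rw [show bs Kd Ke Kf 0 = 1 from rfl, mul_one]
      rcases hk with rfl | rfl | rfl <;> simp only [bs, MM, mml, ev_cons, ev_nil]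
      exacts [U_Q U hU P4, U_Q U hU P5, U_Q U hU P6]
    · rw [mul_comm]
      rcases hk with rfl | rfl | rfl <;> rcases hl with rfl | rfl | rfl <;>
        simp only [bs, MM, mml, ev_cons, ev_nil]
      · refine U_PQ U hU R1 P4 _ ?_
        rw [H'.T00, ← hg']; simp only [map_add, map_mul, map_pow, map_intCast, map_zero]; push_cast; ring
      · refine U_PQ U hU R2 P4 _ ?_
        rw [H'.T10, ← hg', ← hy]; simp only [map_add, map_mul, map_pow, map_intCast, map_zero]; push_cast; ring
      · refine U_PQ U hU R3 P4 _ ?_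
        rw [H'.T20, ← hg']; simp only [map_add, map_mul, map_pow, map_intCast, map_zero]; push_cast; ring
      · refine U_PQ U hU R1 P5 _ ?_
        rw [H'.T01]; simp only [map_add, map_mul, map_pow, map_intCast, map_zero]; push_cast; ring
      · refine U_PQ U hU R2 P5 _ ?_
        rw [H'.T11, ← hg', ← hx, ← hy]; simp only [map_add, map_mul, map_pow, map_intCast, map_zero]; push_cast; ring
      · refine U_PQ U hU R3 P5 _ ?_
        rw [H'.T21, ← hg', ← hy]; simp only [map_add, map_mul, map_pow, map_intCast, map_zero]; push_cast; ring
      · refine U_PQ U hU R1 P6 _ ?_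
        rw [H'.T02, ← hg', ← hx, ← hy]; simp only [map_add, map_mul, map_pow, map_intCast, map_zero]; push_cast; ring
      · refine U_PQ U hU R2 P6 _ ?_
        rw [H'.T12, ← hg', ← hx, ← hy]; simp only [map_add, map_mul, map_pow, map_intCast, map_zero]; push_cast; ring
      · refine U_PQ U hU R3 P6 _ ?_
        rw [H'.T22, ← hg', ← hx, ← hy]; simp only [map_add, map_mul, map_pow, map_intCast, map_zero]; push_cast; ring
    · obtain ⟨_, _, _, p⟩ : ∃ p q r, Qt (bs Ca Cb Cc k) p q r := by
        rcases hk with rfl | rfl | rfl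
        exacts [⟨_, _, _, P4⟩, ⟨_, _, _, P5⟩, ⟨_, _, _, P6⟩]
      obtain ⟨_, _, _, q⟩ : ∃ p q r, Qt (bs Kd Ke Kf l) p q r := by
        rcases hl with rfl | rfl | rfl
        exacts [⟨_, _, _, R4⟩, ⟨_, _, _, R5⟩, ⟨_, _, _, R6⟩]
      rw [U_QQ U hU p q]
      rcases hk with rfl | rfl | rfl <;> rcases hl with rfl | rfl | rfl <;> rfl

omit hU in
theorem V_cf (x : LaurentSeries ℤ) (i k : ℕ) : cf (V7 x) i k = V7 (cf x i k) := by
  rw [cf, cf, map_list_sum, List.map_map]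
  congr 2
  funext t
  simp

def uu (i j : ℤ) : LaurentSeries ℤ := U ((Xu ^ (-i) * Yu ^ (-j) : (LaurentSeries ℤ)ˣ) : LaurentSeries ℤ)

theorem uu_base (g : LaurentSeries ℤ) (hg : V7 g = gg Ca Cb Cc Kd Ke Kf) (i : ℕ) (hi : i < 7) (j : ℕ) (hj : j < 7) :
    uu U (-(i : ℕ)) (-(j : ℕ)) = ev (mn Tu Su (-1) 0) (mn Tu Su 0 (-1)) g (tab i j) := by
  set x := mn Tu Su (-1) 0 with hx
  set y := mn Tu Su 0 (-1) with hy
  have hVx := hVX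
  have hVy := hVY
  rw [← hx] at hVx
  rw [← hy] at hVy
  have h : g * (y - x) = 7 * y + x * y := by
    apply Vb_inj 7 (by norm_num)
    have := kl.gXY
    rw [← hVx, ← hVy, ← hg] at this
    simp only [map_mul, map_sub, map_add, map_ofNat]
    linear_combination this
  rw [← tab_eq x y g h i j hi hj, uu]
  have e : ((Xu ^ (-(-(i : ℤ))) * Yu ^ (-(-(j : ℤ))) : (LaurentSeries ℤ)ˣ) : LaurentSeries ℤ) = xi ^ i * xi2 ^ j := by
    rw [neg_neg, neg_neg, zpow_natCast, zpow_natCast, Units.val_mul, Units.val_pow_eq_pow_val,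
      Units.val_pow_eq_pow_val, Xu_val, Yu_val]
  rw [e, xi_eq, xi2_eq, xpow kl i hi, xpow kl.symm j hj, Finset.sum_mul_sum, map_sum]
  refine Finset.sum_congr rfl fun k hk => ?_
  rw [map_sum]
  refine Finset.sum_congr rfl fun l hl => ?_
  rw [← hVx, ← hVy, V_cf, V_cf, ← gram U hU x y g hVx hVy hg k l (Finset.mem_range.1 hk) (Finset.mem_range.1 hl),
    ← U_V U hU, map_mul V7]
  congr 1
  ring

theorem rec_gen (t x : LaurentSeries ℤ) (X : (LaurentSeries ℤ)ˣ) (h : P7 (X : LaurentSeries ℤ) x = 0)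
    (hx : x * V7 t = 1) (Z : (LaurentSeries ℤ)ˣ) (i : ℤ) :
    Rec t (fun i => U ((X ^ (-i) * Z : (LaurentSeries ℤ)ˣ) : LaurentSeries ℤ)) i := by
  rw [Rec]
  simp only [← U_k U hU, ← map_add]
  rw [← U_V U hU, ← U_V U hU, ← map_add]
  congr 1
  have hk : ∀ n : ℕ, ((X ^ (-(i - n)) * Z : (LaurentSeries ℤ)ˣ) : LaurentSeries ℤ)
      = (X : LaurentSeries ℤ) ^ n * ((X ^ (-i) * Z : (LaurentSeries ℤ)ˣ) : LaurentSeries ℤ) := by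
    intro n
    rw [← Units.val_pow_eq_pow_val, ← Units.val_mul, ← mul_assoc, ← zpow_natCast, ← zpow_add]
    congr 3
    ring
  have k1 := hk 1
  have k2 := hk 2
  have k3 := hk 3
  have k4 := hk 4
  have k5 := hk 5
  have k6 := hk 6
  have k7 := hk 7
  simp only [Nat.cast_one, Nat.cast_ofNat] at k1 k2 k3 k4 k5 k6 k7
  rw [k1, k2, k3, k4, k5, k6, k7, map_pow]
  generalize ((X ^ (-i) * Z : (LaurentSeries ℤ)ˣ) : LaurentSeries ℤ) = w
  rw [P7] at h
  generalize V7 t = t' at *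
  linear_combination (exp := 1) (-t' ^ 2 * w) * h
    + (w * t' * (7 * (X : LaurentSeries ℤ) ^ 3 + 35 * (X : LaurentSeries ℤ) ^ 2 + 49 * X) - w * (x * t' + 1)) * hx

end UU

theorem hg_alg {R : Type*} [CommRing R] (x y T S g : R) (h1 : g * (g - 7) = x + y) (h2 : g * (y - x) = 7 * y + x * y)
    (hx : x * T = 1) (hy : y * S = 1) : g = T * y - S * x - 7 * S * g := by
  have e3 : g * x * y + 7 * x * g - y ^ 2 + x ^ 2 = 0 := by linear_combination (-g) * h2 + (y - x) * h1
  linear_combination T * S * e3 - (g + 7 * S * g + S * x) * hx - (g * x * T - T * y) * hy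

abbrev Vu : (LaurentSeries ℤ)ˣ →* (LaurentSeries ℤ)ˣ := Units.map V7

theorem Tu_pow (a : ℤ) : Tu ^ a = Vu (Tu ^ (-a)) * Xu ^ (-(4 * a)) := by
  have h : Tu * Vu Tu * Xu ^ 4 = 1 := by
    apply Units.ext
    rw [Units.val_mul, Units.val_mul, Units.val_pow_eq_pow_val, Xu_val]
    exact TTx
  have h2 : Tu = (Vu Tu)⁻¹ * (Xu ^ (4 : ℤ))⁻¹ := by
    rw [← mul_inv, eq_inv_iff_mul_eq_one, ← mul_assoc]
    exact h
  rw [map_zpow, zpow_neg, zpow_neg, zpow_mul, ← inv_zpow, ← inv_zpow, ← mul_zpow, ← h2]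

theorem Su_pow (a : ℤ) : Su ^ a = Vu (Su ^ (-a)) * Yu ^ (-(4 * a)) := by
  have h : Su * Vu Su * Yu ^ 4 = 1 := by
    apply Units.ext
    rw [Units.val_mul, Units.val_mul, Units.val_pow_eq_pow_val, Yu_val]
    exact SSx
  have h2 : Su = (Vu Su)⁻¹ * (Yu ^ (4 : ℤ))⁻¹ := by
    rw [← mul_inv, eq_inv_iff_mul_eq_one, ← mul_assoc]
    exact h
  rw [map_zpow, zpow_neg, zpow_neg, zpow_mul, ← inv_zpow, ← inv_zpow, ← mul_zpow, ← h2]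

theorem mn_V (a b : ℤ) : mn Tu Su a b = V7 (mn Tu Su (-a) (-b)) *
    ((Xu ^ (-(4 * a)) * Yu ^ (-(4 * b)) : (LaurentSeries ℤ)ˣ) : LaurentSeries ℤ) := by
  have : V7 (mn Tu Su (-a) (-b)) = ((Vu (Tu ^ (-a) * Su ^ (-b)) : (LaurentSeries ℤ)ˣ) : LaurentSeries ℤ) := rfl
  rw [this, ← Units.val_mul, mn, Tu_pow, Su_pow, map_mul]
  congr 1
  exact mul_mul_mul_comm _ _ _ _

theorem A5_eq (A5 : LaurentSeries ℤ)
    (hA5 : A5 * HahnSeries.ofPowerSeries ℤ ℤ ((J 1) ^ 16 * (J 98) ^ 5)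
        = HahnSeries.ofPowerSeries ℤ ℤ (PowerSeries.X ^ 12 * (J 2) ^ 5 * (J 49) ^ 16)) :
    A5 = ((Xu ^ (-16 : ℤ) * Yu ^ (5 : ℤ) : (LaurentSeries ℤ)ˣ) : LaurentSeries ℤ) := by
  have h : A5 * (jj 1 ^ 16 * jj 98 ^ 5) = qz 12 * jj 2 ^ 5 * jj 49 ^ 16 := by
    rw [map_mul, map_mul, map_mul, map_pow, map_pow, map_pow, map_pow, map_pow, HahnSeries.ofPowerSeries_X] at hA5
    have e : (HahnSeries.single (1 : ℤ) (1 : ℤ)) ^ 12 = (qz 12 : LaurentSeries ℤ) := qz_pow 1 12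
    rw [e] at hA5
    exact hA5
  have hi : jj 98 * V2 ia = 1 := by
    have := congrArg V2 ia_mul
    rwa [map_mul, map_one, Vb_jj _ _ _ (by norm_num)] at this
  have h2 : xi2 = qz (-4) * jj 2 * V2 ia := by
    rw [xi2, xi, map_mul, map_mul, Vb_jj _ _ _ one_pos, Vb_qz]; rfl
  have hq : (qz (-2) ^ 16 * qz 12 : LaurentSeries ℤ) = qz (-4) ^ 5 := by
    rw [qz_pow, qz_pow, qz_mul]; rfl
  have key : A5 * xi ^ 16 = xi2 ^ 5 := by
    rw [h2, xi]
    calc A5 * (qz (-2) * jj 1 * ia) ^ 16 = A5 * (qz (-2) * jj 1 * ia) ^ 16 * (jj 98 * V2 ia) ^ 5 := by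
          rw [hi]; ring
      _ = (A5 * (jj 1 ^ 16 * jj 98 ^ 5)) * (qz (-2) ^ 16 * ia ^ 16 * V2 ia ^ 5) := by ring
      _ = (qz (-2) ^ 16 * qz 12) * jj 2 ^ 5 * V2 ia ^ 5 * (jj 49 * ia) ^ 16 := by rw [h]; ring
      _ = _ := by rw [hq, ia_mul]; ring
  rw [← Xu_val, ← Yu_val, ← Units.val_pow_eq_pow_val, ← Units.val_pow_eq_pow_val, ← Units.eq_mul_inv_iff_mul_eq] at key
  rw [key, ← Units.val_mul, mul_comm]
  congr 1

theorem mkDat (U : LaurentSeries ℤ →+ LaurentSeries ℤ)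
    (hU : ∀ (f : LaurentSeries ℤ) (n : ℤ), (U f).coeff n = f.coeff (7 * n)) (A5 : LaurentSeries ℤ)
    (hA5 : A5 = ((Xu ^ (-16 : ℤ) * Yu ^ (5 : ℤ) : (LaurentSeries ℤ)ˣ) : LaurentSeries ℤ)) :
    Dat Tu Su (uu U) (U (gg Ca Cb Cc Kd Ke Kf)) (U.comp (AddMonoidHom.mulLeft A5)) U := by
  have hg := V_U0 U hU _ gg_Cl
  set g := U (gg Ca Cb Cc Kd Ke Kf) with hgd
  have hI : ∀ (n : ℕ) r, U (7 ^ n * r) = 7 ^ n * U r := by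
    intro n r
    rw [← U_V U hU, map_pow, map_ofNat]
  refine ⟨?_, ?_, ?_, fun i hi j hj => uu_base U hU g hg i hi j hj, ?_, ?_, ?_, fun n r => ⟨_, hI n r⟩⟩
  · have h1 := kl.hgg
    have h2 := kl.gXY
    rw [← hg, ← hVX, ← hVY] at h1 h2
    have e : (7 : LaurentSeries ℤ) = V7 7 := by rw [map_ofNat]
    have h1' : g * (g - 7) = mn Tu Su (-1) 0 + mn Tu Su 0 (-1) := by
      apply Vb_inj 7 (by norm_num)
      rw [map_mul, map_sub, map_add, ← e]
      exact h1
    have h2' : g * (mn Tu Su 0 (-1) - mn Tu Su (-1) 0) = 7 * mn Tu Su 0 (-1) + mn Tu Su (-1) 0 * mn Tu Su 0 (-1) := by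
      apply Vb_inj 7 (by norm_num)
      simp only [map_mul, map_sub, map_add, map_ofNat]
      linear_combination h2
    have := hg_alg _ _ (mn Tu Su 1 0) (mn Tu Su 0 1) g h1' h2' (by rw [mn_mul]; simp [mn_zero])
      (by rw [mn_mul]; simp [mn_zero])
    rw [mn_mul, mn_mul] at this
    simpa using this
  · intro i j
    refine rec_gen U hU (mn Tu Su 1 0) (XX Ca Cb Cc) Xu (by rw [Xu_val]; exact Pxi) ?_ (Yu ^ (-j)) i
    rw [← hVX, ← map_mul, mn_mul]
    simp [mn_zero]
  · intro i j
    have := rec_gen U hU (mn Tu Su 0 1) (XX Kd Ke Kf) Yu (by rw [Yu_val, xi2_eq]; exact P7_eq kl.symm) (by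
      rw [← hVY, ← map_mul, mn_mul]
      simp [mn_zero]) (Xu ^ (-i)) j
    simp only [mul_comm _ (Xu ^ (-i))] at this
    exact this
  · intro a b
    change U (A5 * mn Tu Su a b) = _
    rw [mn_V, mul_left_comm, U_V U hU, hA5, ← Units.val_mul, uu]
    congr 3
    rw [mul_mul_mul_comm, ← zpow_add, ← zpow_add]
    congr 2 <;> ring
  · intro a b
    rw [mn_V, U_V U hU]; rfl
  · intro n r
    refine ⟨U (A5 * r), ?_⟩
    change U (A5 * (7 ^ n * r)) = _
    rw [mul_left_comm, hI]

theorem coeff_pow7 (n : ℕ) (r : LaurentSeries ℤ) (m : ℤ) : (7 ^ n * r).coeff m = 7 ^ n * r.coeff m := by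
  have := coeff_int_mul (7 ^ n) r m
  push_cast at this
  exact this

/-- in the d₅ tower (`A₅ = q^{12}·J_2^5·J_49^{16}/(J_1^{16}·J_98^5)`,
`L_0 = 1`, `L_{2β+1} = U_7(A₅·L_{2β})`, `L_{2β+2} = U_7(L_{2β+1})`), for every `α ≥ 1`
there is an integer `x` with `L_{2α+2} ≡ x·L_{2α} (mod 7^{α+1})` coefficientwise. -/
theorem stmt17
    (U : LaurentSeries ℤ → LaurentSeries ℤ)
    (hU : ∀ (f : LaurentSeries ℤ) (n : ℤ), (U f).coeff n = f.coeff (7 * n))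
    (A5 : LaurentSeries ℤ)
    (hA5 : A5 * HahnSeries.ofPowerSeries ℤ ℤ ((J 1) ^ 16 * (J 98) ^ 5)
        = HahnSeries.ofPowerSeries ℤ ℤ (PowerSeries.X ^ 12 * (J 2) ^ 5 * (J 49) ^ 16))
    (L : ℕ → LaurentSeries ℤ) (hL0 : L 0 = 1)
    (hLodd : ∀ β : ℕ, L (2 * β + 1) = U (A5 * L (2 * β)))
    (hLeven : ∀ β : ℕ, L (2 * β + 2) = U (L (2 * β + 1)))
    (α : ℕ) (hα : 1 ≤ α) :
    ∃ x : ℤ, ∀ n : ℤ,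
      Int.ModEq (7 ^ (α + 1)) ((L (2 * α + 2)).coeff n) (x * (L (2 * α)).coeff n) := by
  have e0 : U 0 = 0 := by ext n; rw [hU]; rfl
  have ea : ∀ f g, U (f + g) = U f + U g := by
    intro f g; ext n; rw [hU, HahnSeries.coeff_add, HahnSeries.coeff_add, hU, hU]
  obtain ⟨x, r, h⟩ := (mkDat ⟨⟨U, e0⟩, ea⟩ hU A5 (A5_eq A5 hA5)).main (fun n => L (2 * n)) hL0
    (fun n => by
      beta_reduce
      rw [show 2 * (n + 1) = 2 * n + 2 by ring, hLeven, hLodd]; rfl) α hα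
  refine ⟨x, fun n => ?_⟩
  have h := congrArg (fun f => f.coeff n) h
  beta_reduce at h
  rw [show 2 * (α + 1) = 2 * α + 2 by ring, HahnSeries.coeff_sub, coeff_int_mul, coeff_pow7] at h
  refine (Int.modEq_iff_dvd.2 ⟨r.coeff n, ?_⟩).symm
  exact h
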